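/- Let 𝔞, 𝔟 be fractional ideals of F, let z = x + y j_F ∈ D_F with x ∈ F_ℝ and y ∈ F_ℝ^×, and set Λ := 𝔞z + 𝔟. Then the constant term of the Laurent expansion of Ê(Λ, s) at s = 1 satisfies CT_{s=1} Ê(Λ, s) = CT_{s=1} ξ_F(s, 𝔞) + (C_F/2)·( h_F(z, 𝔞, 𝔟) − log((N(𝔞)/N(𝔟))|N(y)|) ), where CT_{s=1} Ê(Λ, s) := lim_{s→1} ( Ê(Λ, s) − (C_F/2)/(s−1) ). -/

import Mathlib

/-!
Choosing coordinates `z = x + y j`, the nonzero orbits of units in `Λ = 𝔞z + 𝔟` are the orbits in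
`𝔟` together with the elements `αz + β` where `α` runs over `(𝔞∖0)/U_F` and `β` over all of `𝔟`
(`lattice_equiv`). The first family contributes a multiple of `ξ_F(2s, 𝔟)`. For the second, writing
`Γ_F(2s)/‖c + dj‖^{2s}` as the integral `∫ f(tc) f(td) |N(t)|^{2s} d^×t` (`integral_pair`) and
applying Poisson summation over `𝔟` under the integral sign (`poisson_ideal`, `unfold_row`) turns
the sum over `β` into a sum over `β* ∈ 𝔟*` of Bessel integrals `B_F(αy, β*, s - 1/2)`. The terms
with `β* = 0` add up to a multiple of `ξ_F(2s - 1, 𝔞)`. Since `Λ` has covolume `V(𝔞)V(𝔟)|N(y)|`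
(`hasVol_eq`), with `q = (N(𝔞)/N(𝔟))|N(y)|` this gives, for real `s` slightly larger than `1`
(`Ehat_expansion`),

`Ê(Λ, s) = q^s ξ_F(2s, 𝔟) + q^{1-s} ξ_F(2s-1, 𝔞) + (V(Λ)^s/V(𝔟)) Σ e^{2πi Tr(xαβ*)} B_F(αy, β*, s-1/2)`.

As `s → 1⁺` the first and last terms converge to `(C_F/2) h_F(z, 𝔞, 𝔟)`, by dominated convergence.
The second has polar part `(C_F/2)/(s - 1)`, and its constant term is that of `ξ_F(s, 𝔞)` changed by
`-(C_F/2) log q`, the derivative of `q^{1-s}` at `s = 1` (`polar_part`). Both constant terms are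
given as limits, so the residue of `ξ_F(s, 𝔞)` need not be computed, and real `s` suffice.

The analytic point is a majorant of the Bessel sum, uniform in `s` (`exists_majorant`): by
Dirichlet's unit theorem each `αy` can be moved by a unit to an element all of whose coordinates are
comparable to `|N(αy)|^{1/n}` (`exists_balanced`). Moving `β*` by the inverse unit, the rapid decay
of the Bessel integral bounds the sum over `β*`, and what remains is
`Σ |N(α)|^{-κ}` over `(𝔞∖0)/U_F`, which converges for `κ > 1` for the same reason.
-/

noncomputable section
open NumberField MeasureTheory
open scoped nonZeroDivisors

set_option linter.unusedSectionVars false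
set_option linter.unnecessarySeqFocus false

namespace Hecke

instance : MeasurableSpace (Quaternion ℝ) := borel _
instance : BorelSpace (Quaternion ℝ) := ⟨rfl⟩

/-- The Haar (Lebesgue) measure on Hamilton's quaternions `ℍ ≅ ℝ⁴`. -/
def volH : Measure (Quaternion ℝ) :=
  Measure.map (Quaternion.linearIsometryEquivTuple.symm) volume

instance : SigmaFinite volH := by
  unfold volH
  exact (Quaternion.linearIsometryEquivTuple.symm.toHomeomorph.toMeasurableEquiv).sigmaFinite_map

noncomputable instance (F : Type) [Field F] [NumberField F] :
    Fintype {v : InfinitePlace F // v.IsReal} := by classical exact Subtype.fintype _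

noncomputable instance (F : Type) [Field F] [NumberField F] :
    Fintype {v : InfinitePlace F // v.IsComplex} := by classical exact Subtype.fintype _

variable (F : Type) [Field F] [NumberField F]

/-- `F_ℝ = F ⊗_ℚ ℝ = ∏_v F_v`. -/
abbrev RS := ({v : InfinitePlace F // v.IsReal} → ℝ) × ({v : InfinitePlace F // v.IsComplex} → ℂ)

/-- `D_F = ∏_v D_v` where `D_v = ℂ` for real `v` and `D_v = ℍ` for complex `v`. -/
abbrev DS := ({v : InfinitePlace F // v.IsReal} → ℂ) ×
  ({v : InfinitePlace F // v.IsComplex} → Quaternion ℝ)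

/-- The Haar measure on `F_ℝ`: Lebesgue at real places, twice Lebesgue at complex places. -/
def measR : Measure (RS F) :=
  (Measure.pi fun _ => (volume : Measure ℝ)).prod (Measure.pi fun _ => (2 : ENNReal) • (volume : Measure ℂ))

/-- The Haar measure on `D_F`: Lebesgue at real places, 4 times Lebesgue at complex places. -/
def measD : Measure (DS F) :=
  (Measure.pi fun _ => (volume : Measure ℂ)).prod (Measure.pi fun _ => (4 : ENNReal) • volH)

/-- `‖z‖ = ∏_{v real} |z_v| ∏_{v complex} |z_v|²` on `D_F`. -/
def normD (z : DS F) : ℝ := (∏ v, ‖z.1 v‖) * ∏ v, ‖z.2 v‖ ^ 2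

/-- `|N(x)| = ∏_{v real} |x_v| ∏_{v complex} |x_v|²` on `F_ℝ`. -/
def normR (x : RS F) : ℝ := (∏ v, |x.1 v|) * ∏ v, ‖x.2 v‖ ^ 2


/-- The structure map `F_ℝ → D_F` (componentwise `ℝ ↪ ℂ` resp. `ℂ ↪ ℍ`). -/
def structureMap : RS F →+* DS F :=
  RingHom.prod
    ((Pi.ringHom fun v => Complex.ofRealHom.comp (Pi.evalRingHom (fun _ => ℝ) v)).comp
      (RingHom.fst _ _))
    ((Pi.ringHom fun v => Quaternion.ofComplex.toRingHom.comp (Pi.evalRingHom (fun _ => ℂ) v)).comp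
      (RingHom.snd _ _))

/-- The map `F → D_F`. -/
def FtoD : F →+* DS F := (structureMap F).comp (NumberField.mixedEmbedding F)

/-- The element `j_F = (j_v)_v ∈ D_F`. -/
def jF : DS F := (fun _ => Complex.I, fun _ => ⟨0, 0, 1, 0⟩)

/-- The `x`-coordinate of `z = x + y j_F ∈ D_F` (`x ∈ F_ℝ`). -/
def projX (z : DS F) : RS F :=
  (fun v => (z.1 v).re, fun v => ⟨(z.2 v).re, (z.2 v).imI⟩)

/-- The `y`-coordinate of `z = x + y j_F ∈ D_F` (`y ∈ F_ℝ`). -/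
def projY (z : DS F) : RS F :=
  (fun v => (z.1 v).im, fun v => ⟨(z.2 v).imJ, (z.2 v).imK⟩)

/-- The trace `Tr_{F/ℚ}` extended to `F_ℝ`. -/
def TrR (x : RS F) : ℝ := (∑ v, x.1 v) + ∑ v, 2 * (x.2 v).re


/-- The character `ψ(x + y j_F) = exp(2πi Tr_{F/ℚ}(x))` on `D_F`. -/
def psiD (z : DS F) : ℂ := Complex.exp (2 * Real.pi * Complex.I * TrR F (projX F z))

lemma projX_add (z w : DS F) : projX F (z + w) = projX F z + projX F w := by
  unfold projX
  refine Prod.ext (funext fun v => ?_) (funext fun v => ?_)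
  · simp
  · simp only [Prod.snd_add, Pi.add_apply, Prod.fst_add]
    exact Complex.ext (by simp) (by simp)

lemma TrR_add (x y : RS F) : TrR F (x + y) = TrR F x + TrR F y := by
  unfold TrR
  simp [Finset.sum_add_distrib, mul_add]
  ring

lemma psiD_add (z w : DS F) : psiD F (z + w) = psiD F z * psiD F w := by
  unfold psiD
  rw [projX_add, TrR_add, ← Complex.exp_add]
  push_cast
  ring_nf

lemma psiD_zero : psiD F 0 = 1 := by
  have h0 : projX F (0 : DS F) = 0 := by
    unfold projX
    refine Prod.ext (funext fun v => ?_) (funext fun v => ?_) <;>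
      simp <;> rfl
  unfold psiD
  rw [h0]
  simp [TrR]

/-- The dual lattice `Λ* = {w : ψ(λ w) = 1 for all λ ∈ Λ}`. -/
def dualLat (Λ : AddSubgroup (DS F)) : AddSubgroup (DS F) where
  carrier := {w | ∀ l ∈ Λ, psiD F (l * w) = 1}
  zero_mem' := by
    intro l _
    rw [mul_zero, psiD_zero]
  add_mem' := by
    intro a b ha hb l hl
    rw [mul_add, psiD_add, ha l hl, hb l hl, mul_one]
  neg_mem' := by
    intro a ha l hl
    have := psiD_add F (l * a) (l * -a)
    rw [← mul_add, add_neg_cancel, mul_zero, psiD_zero, ha l hl, one_mul] at this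
    exact this.symm


/-- An `O_F`-lattice in `D_F`: a discrete cocompact `O_F`-submodule. -/
def IsOFLattice (Λ : AddSubgroup (DS F)) : Prop :=
  (∀ c : 𝓞 F, ∀ z ∈ Λ, FtoD F (c : F) * z ∈ Λ) ∧
    DiscreteTopology Λ ∧ CompactSpace (DS F ⧸ Λ)

/-- Non-degeneracy: no nonzero lattice point has `‖λ‖ = 0`. -/
def Nondeg (Λ : AddSubgroup (DS F)) : Prop :=
  ∀ l ∈ Λ, l ≠ 0 → normD F l ≠ 0

/-- `V(Λ) = V`: some fundamental domain of `Λ` in `D_F` has measure `V`. -/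
def HasVol (Λ : AddSubgroup (DS F)) (V : ℝ) : Prop :=
  ∃ s : Set (DS F), IsAddFundamentalDomain Λ s (measD F) ∧ measD F s = ENNReal.ofReal V

/-- `R` is a set of representatives of the nonzero `U_F`-orbits in `Λ`. -/
def IsRepr (Λ : AddSubgroup (DS F)) (R : Set (DS F)) : Prop :=
  (∀ r ∈ R, r ∈ Λ) ∧ (0 : DS F) ∉ R ∧
    ∀ l ∈ Λ, l ≠ 0 → ∃! r, r ∈ R ∧ ∃ ε : (𝓞 F)ˣ, FtoD F ((ε : 𝓞 F) : F) * r = l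

/-- The Eisenstein series `E(Λ, s) = Σ_{λ ∈ Λ/U_F} V(Λ)^s / ‖λ‖^{2s}`, written in terms
of the covolume `V` of `Λ` and a set `R` of representatives of the nonzero `U_F`-orbits. -/
def Eis (V : ℝ) (R : Set (DS F)) (s : ℂ) : ℂ :=
  ∑' r : R, (V : ℂ) ^ s / ((normD F (r : DS F) : ℂ)) ^ (2 * s)

/-- `T_F = F_ℝ^×`. -/
def TF : Set (RS F) := {x | IsUnit x}

/-- The multiplicative Haar measure `d^×t = ∏_v dt_v/|t_v|^{n_v}` on `F_ℝ`. -/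
def measT : Measure (RS F) :=
  (measR F).withDensity fun t => ENNReal.ofReal (1 / normR F t)

/-- `f(z) = ∏_v exp(-n_v π |z_v|²)` on `D_F`. -/
def fD (z : DS F) : ℝ :=
  (∏ v, Real.exp (-(Real.pi) * ‖z.1 v‖ ^ 2)) * ∏ v, Real.exp (-(2 * Real.pi) * ‖z.2 v‖ ^ 2)

/-- `f` restricted to `F_ℝ`. -/
def fR (x : RS F) : ℝ := fD F (structureMap F x)

/-- `Γ_F(s) = ∫_{T_F} f(t) |N(t)|^s d^×t`. -/
def GammaF (s : ℂ) : ℂ :=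
  ∫ t in TF F, (fR F t : ℂ) * (normR F t : ℂ) ^ s ∂(measT F)

/-- The completed Eisenstein series `Ê(Λ, s) = Γ_F(2s) E(Λ, s)`. -/
def Ehat (V : ℝ) (R : Set (DS F)) (s : ℂ) : ℂ := GammaF F (2 * s) * Eis F V R s

/-- `D` is a (strict) fundamental domain for the multiplicative action of `U_F` on `T_F`. -/
def IsUnitsFD (D : Set (RS F)) : Prop :=
  D ⊆ TF F ∧ ∀ t ∈ TF F, ∃! ε : (𝓞 F)ˣ,
    NumberField.mixedEmbedding F (((ε : 𝓞 F) : F)) * t ∈ D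

/-- `d_F`, the absolute value of the discriminant. -/
def dF : ℕ := (NumberField.discr F).natAbs

/-- `R` is a set of representatives of the nonzero `U_F`-orbits in the fractional ideal `𝔞`. -/
def IsIdealRepr (a : FractionalIdeal (𝓞 F)⁰ F) (R : Set F) : Prop :=
  (∀ r ∈ R, r ∈ a) ∧ (0 : F) ∉ R ∧
    ∀ α ∈ a, α ≠ 0 → ∃! r, r ∈ R ∧ ∃ ε : (𝓞 F)ˣ, ((ε : 𝓞 F) : F) * r = α

/-- The completed partial zeta function
`ξ_F(s, 𝔞) = d_F^{s/2} Γ_F(s) N(𝔞)^s Σ_{α ∈ 𝔞/U_F} |N(α)|^{-s}`, written in terms of a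
set `R` of representatives of the nonzero `U_F`-orbits in `𝔞`. -/
def xiF (s : ℂ) (a : FractionalIdeal (𝓞 F)⁰ F) (R : Set F) : ℂ :=
  (dF F : ℂ) ^ (s / 2) * GammaF F s * (FractionalIdeal.absNorm a : ℂ) ^ s *
    ∑' r : R, ((|Algebra.norm ℚ (r : F)| : ℚ) : ℂ) ^ (-s)

/-- The constant `C_F = 2^{r₁} (2π)^{r₂} R_F / w_F`. -/
def CF : ℝ :=
  2 ^ (Fintype.card {v : InfinitePlace F // v.IsReal}) *
    (2 * Real.pi) ^ (Fintype.card {v : InfinitePlace F // v.IsComplex}) *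
    NumberField.Units.regulator F / (NumberField.Units.torsionOrder F : ℕ)

/-- The dual ideal `𝔟* = {x ∈ F : Tr_{F/ℚ}(βx) ∈ ℤ for all β ∈ 𝔟}`. -/
def dualIdealSet (b : FractionalIdeal (𝓞 F)⁰ F) : Set F :=
  {x | ∀ β ∈ b, ∃ n : ℤ, Algebra.trace ℚ F (β * x) = n}

/-- `B_F(a, b, s) = ∫_{T_F} f(ta) f(t⁻¹ b) |N(t)|^{2s} d^×t`. -/
def BF (a b : RS F) (s : ℂ) : ℂ :=
  ∫ t in TF F, ((fR F (t * a) * fR F (Ring.inverse t * b) : ℝ) : ℂ) *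
    (normR F t : ℂ) ^ (2 * s) ∂(measT F)

/-- The lattice `Λ = 𝔞 z + 𝔟`. -/
def latAB (a b : FractionalIdeal (𝓞 F)⁰ F) (z : DS F) : AddSubgroup (DS F) where
  carrier := {w | ∃ α ∈ a, ∃ β ∈ b, w = FtoD F α * z + FtoD F β}
  zero_mem' := ⟨0, Submodule.zero_mem _, 0, Submodule.zero_mem _, by simp⟩
  add_mem' := by
    rintro w₁ w₂ ⟨α₁, hα₁, β₁, hβ₁, rfl⟩ ⟨α₂, hα₂, β₂, hβ₂, rfl⟩
    exact ⟨α₁ + α₂, Submodule.add_mem _ hα₁ hα₂, β₁ + β₂, Submodule.add_mem _ hβ₁ hβ₂, by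
      rw [map_add, map_add, add_mul]; abel⟩
  neg_mem' := by
    rintro w ⟨α, hα, β, hβ, rfl⟩
    exact ⟨-α, Submodule.neg_mem _ hα, -β, Submodule.neg_mem _ hβ, by rw [map_neg, map_neg, neg_mul]; abel⟩

/-- `P` is a set of representatives of pairs `(α, β*) ∈ (𝔞∖{0}) × (𝔟*∖{0})` modulo
`(α, β*) ∼ (αε, β*ε⁻¹)`, `ε ∈ U_F`. -/
def IsPairRepr (a b : FractionalIdeal (𝓞 F)⁰ F) (P : Set (F × F)) : Prop :=
  (∀ p ∈ P, p.1 ∈ a ∧ p.1 ≠ 0 ∧ p.2 ∈ dualIdealSet F b ∧ p.2 ≠ 0) ∧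
    ∀ α, α ∈ a → α ≠ 0 → ∀ β, β ∈ dualIdealSet F b → β ≠ 0 →
      ∃! p, p ∈ P ∧ ∃ ε : (𝓞 F)ˣ,
        α = p.1 * ((ε : 𝓞 F) : F) ∧ β = p.2 * (((ε⁻¹ : (𝓞 F)ˣ) : 𝓞 F) : F)

/-- The function `h_F(z, 𝔞, 𝔟)`, defined through
`(C_F/2) h_F = (N𝔞/N𝔟)|N(y)| ξ_F(2,𝔟) + V(𝔞)|N(y)| Σ e^{2πi Tr(xαβ*)} B_F(αy, β*, 1/2)`;
`Rb` is a set of representatives for `ξ_F(·, 𝔟)` and `P` one for the pair sum. -/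
def hF (z : DS F) (a b : FractionalIdeal (𝓞 F)⁰ F) (Rb : Set F) (P : Set (F × F)) : ℂ :=
  (2 / CF F) *
    (((FractionalIdeal.absNorm a / FractionalIdeal.absNorm b : ℚ) : ℂ) *
        (normR F (projY F z) : ℂ) * xiF F 2 b Rb +
      ((Real.sqrt (dF F) * (FractionalIdeal.absNorm a : ℚ) * normR F (projY F z) : ℝ) : ℂ) *
        ∑' p : P,
          Complex.exp (2 * Real.pi * Complex.I *
            (TrR F (projX F z * NumberField.mixedEmbedding F (p : F × F).1 *
              NumberField.mixedEmbedding F (p : F × F).2))) *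
          BF F (projY F z * NumberField.mixedEmbedding F (p : F × F).1)
            (NumberField.mixedEmbedding F (p : F × F).2) (1 / 2))


section Quadratic

variable (K : Type) [Field K] [NumberField K] [Algebra F K]

/-- `U_{K/F} = T_{K/F} ∩ U_K`: the units `δ` of `K` with `N_{K/F}(δ) = δ · δ' = 1`,
where `x ↦ x'` is the nontrivial `F`-automorphism `τ` of `K`. -/
def UKF (τ : K ≃ₐ[F] K) : Subgroup (𝓞 K)ˣ where
  carrier := {δ | ((δ : 𝓞 K) : K) * τ ((δ : 𝓞 K) : K) = 1}
  one_mem' := by simp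
  mul_mem' := by
    intro a b ha hb
    have ha' : ((a : 𝓞 K) : K) * τ ((a : 𝓞 K) : K) = 1 := ha
    have hb' : ((b : 𝓞 K) : K) * τ ((b : 𝓞 K) : K) = 1 := hb
    show (((a * b : (𝓞 K)ˣ) : 𝓞 K) : K) * τ (((a * b : (𝓞 K)ˣ) : 𝓞 K) : K) = 1
    have hab : (((a * b : (𝓞 K)ˣ) : 𝓞 K) : K) = ((a : 𝓞 K) : K) * ((b : 𝓞 K) : K) := by
      push_cast; ring
    rw [hab, map_mul]
    linear_combination (((b : 𝓞 K) : K) * τ ((b : 𝓞 K) : K)) * ha' + hb'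
  inv_mem' := by
    intro a ha
    have ha : ((a : 𝓞 K) : K) * τ ((a : 𝓞 K) : K) = 1 := ha
    show (((a⁻¹ : (𝓞 K)ˣ) : 𝓞 K) : K) * τ (((a⁻¹ : (𝓞 K)ˣ) : 𝓞 K) : K) = 1
    have h1 : ((a : 𝓞 K) : K) * (((a⁻¹ : (𝓞 K)ˣ) : 𝓞 K) : K) = 1 := by
      rw [← map_mul, ← Units.val_mul, mul_inv_cancel, Units.val_one, map_one]
    have h2 : τ ((a : 𝓞 K) : K) * τ (((a⁻¹ : (𝓞 K)ˣ) : 𝓞 K) : K) = 1 := by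
      rw [← map_mul, h1, map_one]
    calc (((a⁻¹ : (𝓞 K)ˣ) : 𝓞 K) : K) * τ (((a⁻¹ : (𝓞 K)ˣ) : 𝓞 K) : K)
        = ((((a : 𝓞 K) : K)) * τ ((a : 𝓞 K) : K)) *
            ((((a⁻¹ : (𝓞 K)ˣ) : 𝓞 K) : K) * τ (((a⁻¹ : (𝓞 K)ˣ) : 𝓞 K) : K)) := by
          rw [ha, one_mul]
      _ = (((a : 𝓞 K) : K) * (((a⁻¹ : (𝓞 K)ˣ) : 𝓞 K) : K)) *
            (τ ((a : 𝓞 K) : K) * τ (((a⁻¹ : (𝓞 K)ˣ) : 𝓞 K) : K)) := by ring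
      _ = 1 := by rw [h1, h2, mul_one]

/-- `w_{K/F} = [U_K : U_F U_{K/F}]`. -/
def wKF (τ : K ≃ₐ[F] K) : ℕ :=
  ((Units.map (algebraMap (𝓞 F) (𝓞 K)).toMonoidHom).range ⊔ UKF F K τ).index

/-- `T_{K/F} = {u ∈ T_K : u σ(u) = 1}`, where `σ` is the extension to `K_ℝ`
of the nontrivial `F`-automorphism of `K`. -/
def TKF (σ : RS K →+* RS K) : Set (RS K) := {u | IsUnit u ∧ u * σ u = 1}

/-- The `O_K`-lattice `u𝔄 ⊆ K_ℝ` for `u ∈ K_ℝ` and a fractional ideal `𝔄` of `K`. -/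
def latIdeal (A : FractionalIdeal (𝓞 K)⁰ K) (u : RS K) : AddSubgroup (RS K) where
  carrier := {w | ∃ α ∈ A, w = u * NumberField.mixedEmbedding K α}
  zero_mem' := ⟨0, Submodule.zero_mem _, by simp⟩
  add_mem' := by
    rintro w₁ w₂ ⟨α₁, hα₁, rfl⟩ ⟨α₂, hα₂, rfl⟩
    exact ⟨α₁ + α₂, Submodule.add_mem _ hα₁ hα₂, by rw [map_add, mul_add]⟩
  neg_mem' := by
    rintro w ⟨α, hα, rfl⟩
    exact ⟨-α, Submodule.neg_mem _ hα, by rw [map_neg, mul_neg]⟩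

/-- The lattice `ρ(u𝔄) ⊆ D_F`. -/
def rhoLat (ρ : RS K ≃+ DS F) (A : FractionalIdeal (𝓞 K)⁰ K) (u : RS K) :
    AddSubgroup (DS F) :=
  (latIdeal K A u).map ρ.toAddMonoidHom


/-- The canonical map `ι : F_ℝ → K_ℝ`: the continuous ring homomorphism compatible with the
embeddings of `F` and `K`. -/
def IsIota (ι : RS F →+* RS K) : Prop :=
  Continuous ι ∧ ∀ x : F,
    ι (NumberField.mixedEmbedding F x) = NumberField.mixedEmbedding K (algebraMap F K x)

/-- `σ : K_ℝ → K_ℝ` is the continuous extension of the nontrivial `F`-automorphism `τ` of `K`. -/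
def IsSigma (τ : K ≃ₐ[F] K) (σ : RS K →+* RS K) : Prop :=
  Continuous σ ∧ ∀ x : K,
    σ (NumberField.mixedEmbedding K x) = NumberField.mixedEmbedding K (τ x)

/-- `ρ : K_ℝ → D_F` is an isomorphism of `F_ℝ`-modules preserving the Haar measures and
satisfying `g = f ∘ ρ`. -/
def IsRho (ι : RS F →+* RS K) (ρ : RS K ≃+ DS F) : Prop :=
  (∀ (x : RS F) (w : RS K), ρ (ι x * w) = structureMap F x * ρ w) ∧
    MeasureTheory.MeasurePreserving ρ (measR K) (measD F) ∧
    ∀ w : RS K, fR K w = fD F (ρ w)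

/-- `S` is a set of norm-one representatives for `T_K/T_F` and `ν` is (supported on `S`)
the quotient Haar measure, characterized by the Fubini-type property
`∫_{T_K} φ = ∫_{T_K/T_F} ∫_{T_F} φ(t·ũ) dt du`. -/
def IsQuotMeasureK (ι : RS F →+* RS K) (ν : Measure (RS K)) (S : Set (RS K)) : Prop :=
  (∀ u ∈ S, u ∈ TF K ∧ normR K u = 1) ∧
    ∀ φ : RS K → ENNReal, Measurable φ →
      ∫⁻ t in TF K, φ t ∂(measT K) =
        ∫⁻ u in S, ∫⁻ t in TF F, φ (ι t * u) ∂(measT F) ∂ν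

/-- `S₀ ⊆ S` is a fundamental domain for the action of (the image of) `U_K` on `T_K/T_F`,
the latter quotient being represented by the set `S`. -/
def IsFundDomK (ι : RS F →+* RS K) (S S₀ : Set (RS K)) : Prop :=
  S₀ ⊆ S ∧ ∀ u ∈ S, ∃! u₀, u₀ ∈ S₀ ∧ ∃ (ε : (𝓞 K)ˣ) (t : RS F), IsUnit t ∧
    u = ι t * NumberField.mixedEmbedding K ((ε : 𝓞 K) : K) * u₀

/-- `L` is a section `T_{K/F} → T_K`, `u ↦ ũ`, with `ũ/ũ' = u` and `|N_{K/ℚ}(ũ)| = 1`,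
and `ν` is the Haar measure `d^×u` on `T_{K/F}`, characterized by the Fubini-type property
`∫_{T_K} φ(t) d^×t = ∫_{T_{K/F}} ∫_{T_F} φ(t·ũ) d^×t d^×u`. -/
def IsQuotMeasureKF (σ : RS K →+* RS K) (ι : RS F →+* RS K) (L : RS K → RS K)
    (ν : Measure (RS K)) : Prop :=
  (∀ u ∈ TKF K σ, L u ∈ TF K ∧ normR K (L u) = 1 ∧ L u = u * σ (L u)) ∧
    ∀ φ : RS K → ENNReal, Measurable φ →
      ∫⁻ t in TF K, φ t ∂(measT K) =
        ∫⁻ u in TKF K σ, ∫⁻ t in TF F, φ (ι t * L u) ∂(measT F) ∂ν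

/-- `S₀` is a fundamental domain for the multiplicative action of `U_{K/F}²` on `T_{K/F}`. -/
def IsFundDomKF (τ : K ≃ₐ[F] K) (σ : RS K →+* RS K) (S₀ : Set (RS K)) : Prop :=
  S₀ ⊆ TKF K σ ∧ ∀ u ∈ TKF K σ, ∃! u₀, u₀ ∈ S₀ ∧ ∃ δ : (𝓞 K)ˣ, δ ∈ UKF F K τ ∧
    u = NumberField.mixedEmbedding K ((((δ ^ 2 : (𝓞 K)ˣ) : 𝓞 K)) : K) * u₀

end Quadratic

section Aux

variable {F}

/-! ### The norm, the trace and the Gaussian on `F_ℝ` -/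

lemma normR_eq (x : RS F) : normR F x = mixedEmbedding.norm x := by
  classical
  rw [mixedEmbedding.norm_apply, InfinitePlace.prod_eq_prod_mul_prod]
  unfold normR
  congr 1
  · refine (Finset.prod_congr (by ext; simp) fun v _ => ?_)
    rw [mixedEmbedding.normAtPlace_apply_of_isReal v.2, InfinitePlace.mult_isReal]; simp
  · refine (Finset.prod_congr (by ext; simp) fun v _ => ?_)
    rw [mixedEmbedding.normAtPlace_apply_of_isComplex v.2, InfinitePlace.mult_isComplex]

lemma normR_nonneg (x : RS F) : 0 ≤ normR F x := by
  rw [normR_eq]; exact mixedEmbedding.norm_nonneg x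

lemma normR_mul (x y : RS F) : normR F (x * y) = normR F x * normR F y := by
  simp only [normR_eq, map_mul]

lemma normR_one : normR F (1 : RS F) = 1 := by simp only [normR_eq, map_one]

lemma normR_embed (α : F) :
    normR F (mixedEmbedding F α) = ((|Algebra.norm ℚ α| : ℚ) : ℝ) := by
  rw [normR_eq, mixedEmbedding.norm_eq_norm]

lemma normR_unit (ε : (𝓞 F)ˣ) : normR F (mixedEmbedding F ((ε : 𝓞 F) : F)) = 1 := by
  rw [normR_eq, mixedEmbedding.norm_unit]

lemma isUnit_iff_forall (x : RS F) : IsUnit x ↔ (∀ v, x.1 v ≠ 0) ∧ ∀ v, x.2 v ≠ 0 := by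
  rw [Prod.isUnit_iff, Pi.isUnit_iff, Pi.isUnit_iff]
  simp only [isUnit_iff_ne_zero]

lemma isUnit_iff_normR (x : RS F) : IsUnit x ↔ normR F x ≠ 0 := by
  rw [isUnit_iff_forall]
  unfold normR
  simp [Finset.prod_eq_zero_iff]

lemma normR_pos {x : RS F} (hx : IsUnit x) : 0 < normR F x :=
  lt_of_le_of_ne (normR_nonneg x) (Ne.symm ((isUnit_iff_normR x).1 hx))

lemma unit_mul_inv {x : RS F} (hx : IsUnit x) : x * x⁻¹ = 1 := by
  rw [isUnit_iff_forall] at hx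
  ext v
  · simp [hx.1 v]
  · simp [hx.2 v]

lemma unit_inv_mul {x : RS F} (hx : IsUnit x) : x⁻¹ * x = 1 := by
  rw [mul_comm, unit_mul_inv hx]

lemma isUnit_inv {x : RS F} (hx : IsUnit x) : IsUnit x⁻¹ :=
  IsUnit.of_mul_eq_one x (unit_inv_mul hx)

lemma inverse_eq_inv {x : RS F} (hx : IsUnit x) : Ring.inverse x = x⁻¹ := by
  have h := Ring.inverse_mul_cancel x hx
  calc Ring.inverse x = Ring.inverse x * (x * x⁻¹) := by rw [unit_mul_inv hx, mul_one]
    _ = x⁻¹ := by rw [← mul_assoc, h, one_mul]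

lemma rs_mul_inv (x y : RS F) : (x * y)⁻¹ = x⁻¹ * y⁻¹ := by
  ext v <;> simp [mul_comm]

lemma normR_inv {x : RS F} (hx : IsUnit x) : normR F x⁻¹ = (normR F x)⁻¹ := by
  have : normR F x * normR F x⁻¹ = 1 := by rw [← normR_mul, unit_mul_inv hx, normR_one]
  exact eq_inv_of_mul_eq_one_right this

lemma isUnit_embed {α : F} (hα : α ≠ 0) : IsUnit (mixedEmbedding F α) :=
  (isUnit_iff_ne_zero.2 hα).map _

lemma embed_inv {α : F} (hα : α ≠ 0) : mixedEmbedding F α⁻¹ = (mixedEmbedding F α)⁻¹ := by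
  have h := unit_inv_mul (isUnit_embed hα)
  calc mixedEmbedding F α⁻¹
      = ((mixedEmbedding F α)⁻¹ * mixedEmbedding F α) * mixedEmbedding F α⁻¹ := by
        rw [h, one_mul]
    _ = (mixedEmbedding F α)⁻¹ := by
        rw [mul_assoc, ← map_mul, mul_inv_cancel₀ hα, map_one, mul_one]

lemma isUnit_unit (ε : (𝓞 F)ˣ) : IsUnit (mixedEmbedding F ((ε : 𝓞 F) : F)) :=
  isUnit_embed (by simp)

lemma continuous_normR : Continuous (normR F) := by
  unfold normR; fun_prop

lemma measurable_normR : Measurable (normR F) := continuous_normR.measurable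

lemma measurableSet_TF : MeasurableSet (TF F) := by
  have : TF F = normR F ⁻¹' {0}ᶜ := by
    ext x; exact isUnit_iff_normR x
  rw [this]
  exact measurable_normR (measurableSet_singleton 0).compl

lemma rs_fst_le (x : RS F) (v) : |x.1 v| ≤ ‖x‖ :=
  (norm_le_pi_norm x.1 v).trans (_root_.norm_fst_le x)

lemma rs_snd_le (x : RS F) (v) : ‖x.2 v‖ ≤ ‖x‖ :=
  (norm_le_pi_norm x.2 v).trans (_root_.norm_snd_le x)

/-- The exponent `n = [F : ℚ]`, written as `r₁ + 2 r₂`. -/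
def degF (F : Type) [Field F] [NumberField F] : ℕ :=
  Fintype.card {v : InfinitePlace F // v.IsReal} +
    2 * Fintype.card {v : InfinitePlace F // v.IsComplex}

lemma normR_le (x : RS F) : normR F x ≤ ‖x‖ ^ degF F := by
  unfold normR degF
  rw [pow_add, pow_mul]
  refine mul_le_mul ?_ ?_ (by positivity) (by positivity)
  · calc ∏ v, |x.1 v| ≤ ∏ _v : {v : InfinitePlace F // v.IsReal}, ‖x‖ :=
          Finset.prod_le_prod (fun _ _ => abs_nonneg _) fun v _ => rs_fst_le x v
      _ = _ := by simp
  · calc ∏ v, ‖x.2 v‖ ^ 2 ≤ ∏ _v : {v : InfinitePlace F // v.IsComplex}, ‖x‖ ^ 2 :=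
          Finset.prod_le_prod (fun _ _ => by positivity) fun v _ => by
            gcongr; exact rs_snd_le x v
      _ = _ := by simp

lemma degF_eq : degF F = Module.finrank ℚ F := by
  classical
  rw [← InfinitePlace.card_add_two_mul_card_eq_rank]
  unfold degF InfinitePlace.nrRealPlaces InfinitePlace.nrComplexPlaces
  congr! 

lemma degF_pos : 0 < degF F := by rw [degF_eq]; exact Module.finrank_pos

lemma TrR_smul (c : ℝ) (x : RS F) : TrR F (c • x) = c * TrR F x := by
  unfold TrR
  simp [Finset.mul_sum, mul_add, mul_left_comm]

/-- The trace on `F_ℝ` as an `ℝ`-linear form. -/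
def TrL (F : Type) [Field F] [NumberField F] : RS F →ₗ[ℝ] ℝ where
  toFun := TrR F
  map_add' := TrR_add F
  map_smul' := TrR_smul

lemma TrL_apply (x : RS F) : TrL F x = TrR F x := rfl

lemma continuous_TrR : Continuous (TrR F) := (TrL F).continuous_of_finiteDimensional

lemma TrR_embed (α : F) : TrR F (mixedEmbedding F α) = ((Algebra.trace ℚ F α : ℚ) : ℝ) := by
  classical
  have h := trace_eq_sum_embeddings ℂ (K := ℚ) (L := F) (x := α)
  have h2 : ∑ σ : F →ₐ[ℚ] ℂ, σ α = ∑ φ : F →+* ℂ, φ α :=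
    (Fintype.sum_equiv (RingHom.equivRatAlgHom F ℂ) (fun f => f α) _ fun _ => rfl).symm
  rw [h2] at h
  have h3 : ∑ φ : F →+* ℂ, φ α = ((TrR F (mixedEmbedding F α) : ℝ) : ℂ) := by
    rw [← Equiv.sum_comp (mixedEmbedding.indexEquiv F) (fun φ => φ α), Fintype.sum_sum_type,
      Fintype.sum_prod_type]
    unfold TrR
    push_cast
    congr 1
    · refine (Finset.sum_congr (by ext; simp) fun v _ => ?_)
      rw [mixedEmbedding.indexEquiv_apply_isReal]
      simp [mixedEmbedding.mixedEmbedding_apply_isReal]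
    · refine (Finset.sum_congr (by ext; simp) fun v _ => ?_)
      rw [Fin.sum_univ_two, mixedEmbedding.indexEquiv_apply_isComplex_fst,
        mixedEmbedding.indexEquiv_apply_isComplex_snd,
        mixedEmbedding.mixedEmbedding_apply_isComplex]
      simp [ComplexEmbedding.conjugate_coe_eq, Complex.add_conj]
  rw [h3] at h
  have h4 : ((algebraMap ℚ ℂ) (Algebra.trace ℚ F α)) = (((Algebra.trace ℚ F α : ℚ) : ℝ) : ℂ) := by
    simp
  rw [h4] at h
  exact_mod_cast h.symm

/-- The quadratic form `Q` with `f = exp(-Q)` on `F_ℝ`. -/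
def QR (x : RS F) : ℝ := Real.pi * ((∑ v, ‖x.1 v‖ ^ 2) + 2 * ∑ v, ‖x.2 v‖ ^ 2)

lemma structureMap_fst (x : RS F) (v) : (structureMap F x).1 v = (x.1 v : ℂ) := rfl

lemma structureMap_snd (x : RS F) (v) :
    (structureMap F x).2 v = ((x.2 v : ℂ) : Quaternion ℝ) := rfl

lemma norm_coeComplex (c : ℂ) : ‖(c : Quaternion ℝ)‖ = ‖c‖ := by
  rw [← sq_eq_sq₀ (norm_nonneg _) (norm_nonneg _), sq, ← Quaternion.normSq_eq_norm_mul_self,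
    Quaternion.normSq_def', ← Complex.normSq_eq_norm_sq, Complex.normSq_apply]
  simp
  ring

lemma fR_eq (x : RS F) : fR F x = Real.exp (-QR x) := by
  unfold fR fD QR
  rw [← Real.exp_sum, ← Real.exp_sum, ← Real.exp_add]
  congr 1
  simp only [structureMap_fst, structureMap_snd, norm_coeComplex, Complex.norm_real]
  rw [← Finset.mul_sum, ← Finset.mul_sum]
  ring

lemma fR_pos (x : RS F) : 0 < fR F x := by rw [fR_eq]; positivity

lemma continuous_fR : Continuous (fR F) := by
  have : fR F = fun x => Real.exp (-QR x) := funext fR_eq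
  rw [this]; unfold QR; fun_prop

lemma measurable_fR : Measurable (fR F) := continuous_fR.measurable

lemma QR_ge (x : RS F) : Real.pi * ‖x‖ ^ 2 ≤ QR x := by
  unfold QR
  refine mul_le_mul_of_nonneg_left ?_ Real.pi_pos.le
  have h1 : ∀ v, ‖x.1 v‖ ^ 2 ≤ ∑ v, ‖x.1 v‖ ^ 2 := fun v =>
    Finset.single_le_sum (f := fun v => ‖x.1 v‖ ^ 2) (fun _ _ => by positivity) (Finset.mem_univ v)
  have h2 : ∀ v, ‖x.2 v‖ ^ 2 ≤ ∑ v, ‖x.2 v‖ ^ 2 := fun v =>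
    Finset.single_le_sum (f := fun v => ‖x.2 v‖ ^ 2) (fun _ _ => by positivity) (Finset.mem_univ v)
  have p1 : 0 ≤ ∑ v, ‖x.1 v‖ ^ 2 := by positivity
  have p2 : 0 ≤ ∑ v, ‖x.2 v‖ ^ 2 := by positivity
  have : ‖x‖ ≤ Real.sqrt ((∑ v, ‖x.1 v‖ ^ 2) + 2 * ∑ v, ‖x.2 v‖ ^ 2) := by
    refine (norm_prod_le_iff).2 ⟨(pi_norm_le_iff_of_nonneg (Real.sqrt_nonneg _)).2 fun v => ?_,
      (pi_norm_le_iff_of_nonneg (Real.sqrt_nonneg _)).2 fun v => ?_⟩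
    · exact Real.le_sqrt_of_sq_le (by linarith [h1 v])
    · exact Real.le_sqrt_of_sq_le (by linarith [h2 v])
  calc ‖x‖ ^ 2 ≤ _ := pow_le_pow_left₀ (norm_nonneg _) this 2
    _ = _ := Real.sq_sqrt (by positivity)

lemma fR_le (x : RS F) : fR F x ≤ Real.exp (-Real.pi * ‖x‖ ^ 2) := by
  rw [fR_eq]; gcongr; linarith [QR_ge x]

lemma fR_le_one (x : RS F) : fR F x ≤ 1 := by
  refine (fR_le x).trans (Real.exp_le_one_iff.2 ?_)
  nlinarith [Real.pi_pos, sq_nonneg ‖x‖]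

/-- Polynomial decay of the Gaussian. -/
lemma fR_decay (M : ℕ) : ∃ C : ℝ, 0 < C ∧ ∀ x : RS F, fR F x * ‖x‖ ^ M ≤ C := by
  refine ⟨M.factorial * Real.exp 1, by positivity, fun x => ?_⟩
  have h0 := norm_nonneg x
  have h1 : ‖x‖ ^ M ≤ M.factorial * Real.exp ‖x‖ := by
    have := Real.pow_div_factorial_le_exp ‖x‖ h0 M
    rw [div_le_iff₀ (by positivity)] at this
    linarith
  calc fR F x * ‖x‖ ^ M ≤ Real.exp (-Real.pi * ‖x‖ ^ 2) * (M.factorial * Real.exp ‖x‖) :=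
        mul_le_mul (fR_le x) h1 (by positivity) (by positivity)
    _ = M.factorial * Real.exp (-Real.pi * ‖x‖ ^ 2 + ‖x‖) := by rw [Real.exp_add]; ring
    _ ≤ _ := by
      gcongr
      nlinarith [Real.pi_gt_three, sq_nonneg (‖x‖ - 1 / 2)]

/-! ### Haar measures on `F_ℝ` and on `F_ℝ^×` -/

lemma measR_eq : measR F =
    (2 : ENNReal) ^ (Fintype.card {v : InfinitePlace F // v.IsComplex}) • volume := by
  have h : (Measure.pi fun _ : {v : InfinitePlace F // v.IsComplex} =>
      (2 : ENNReal) • (volume : Measure ℂ)) =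
      (2 : ENNReal) ^ (Fintype.card {v : InfinitePlace F // v.IsComplex}) • volume := by
    have : SigmaFinite ((2 : ENNReal) • (volume : Measure ℂ)) := by
      have := Measure.IsAddHaarMeasure.smul (volume : Measure ℂ) (c := 2) (by simp) (by simp)
      infer_instance
    refine Measure.pi_eq (μ := fun _ : {v : InfinitePlace F // v.IsComplex} =>
      (2 : ENNReal) • (volume : Measure ℂ)) fun s hs => ?_
    rw [Measure.smul_apply, volume_pi_pi]
    simp [Finset.prod_mul_distrib]
  unfold measR
  rw [h, Measure.prod_smul_right]
  rfl

instance : (measR F).IsAddHaarMeasure := by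
  rw [measR_eq]
  exact Measure.IsAddHaarMeasure.smul _ (by positivity) (by finiteness)

instance : SFinite (measR F) := inferInstance

/-- Multiplication by a unit of `F_ℝ`, as a measurable equivalence. -/
def mulEquiv {a : RS F} (ha : IsUnit a) : RS F ≃ᵐ RS F where
  toFun t := a * t
  invFun t := a⁻¹ * t
  left_inv t := by simp only; rw [← mul_assoc, unit_inv_mul ha, one_mul]
  right_inv t := by simp only; rw [← mul_assoc, unit_mul_inv ha, one_mul]
  measurable_toFun := (continuous_const.mul continuous_id).measurable
  measurable_invFun := (continuous_const.mul continuous_id).measurable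

lemma mulEquiv_apply {a : RS F} (ha : IsUnit a) (t : RS F) : mulEquiv ha t = a * t := rfl

/-- The modulus of multiplication by `a` on `F_ℝ` is `|N(a)|`. -/
lemma det_mul (a : RS F) : |LinearMap.det (LinearMap.mulLeft ℝ a)| = normR F a := by
  have h : LinearMap.mulLeft ℝ a =
      (LinearMap.pi fun v => (LinearMap.mulLeft ℝ (a.1 v)) ∘ₗ LinearMap.proj v).prodMap
        (LinearMap.pi fun v => (LinearMap.mulLeft ℝ (a.2 v)) ∘ₗ LinearMap.proj v) := by
    ext <;> simp
  rw [h, LinearMap.det_prodMap, LinearMap.det_pi, LinearMap.det_pi, abs_mul, Finset.abs_prod,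
    Finset.abs_prod]
  unfold normR
  congr 1
  · refine Finset.prod_congr rfl fun v _ => ?_
    have : LinearMap.det (LinearMap.mulLeft ℝ (a.1 v)) = a.1 v := by
      rw [LinearMap.det_ring]; simp
    rw [this]
  · refine Finset.prod_congr rfl fun v _ => ?_
    have h1 := Algebra.norm_apply ℝ (a.2 v)
    rw [Algebra.norm_complex_apply] at h1
    have h2 : LinearMap.mulLeft ℝ (a.2 v) = Algebra.lmul ℝ ℂ (a.2 v) := rfl
    rw [h2]
    erw [← h1]
    rw [abs_of_nonneg (Complex.normSq_nonneg _), Complex.normSq_eq_norm_sq]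

lemma map_mul_measR {a : RS F} (ha : IsUnit a) :
    Measure.map (mulEquiv ha) (measR F) = ENNReal.ofReal (normR F a)⁻¹ • measR F := by
  have hd : LinearMap.det (LinearMap.mulLeft ℝ a) ≠ 0 := by
    rw [← abs_ne_zero, det_mul]; exact (normR_pos ha).ne'
  have := Measure.map_linearMap_addHaar_eq_smul_addHaar (measR F) hd
  rw [abs_inv, det_mul] at this
  exact this

lemma integral_mul_measR {a : RS F} (ha : IsUnit a) (g : RS F → ℂ) :
    ∫ t, g (a * t) ∂(measR F) = ((normR F a)⁻¹ : ℝ) * ∫ t, g t ∂(measR F) := by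
  have h := integral_map_equiv (μ := measR F) (mulEquiv ha) g
  rw [map_mul_measR, integral_smul_measure, ENNReal.toReal_ofReal
    (inv_nonneg.2 (normR_nonneg a))] at h
  simp only [mulEquiv_apply] at h
  rw [← h, Complex.real_smul]

lemma measT_compl : measT F (TF F)ᶜ = 0 := by
  unfold measT
  rw [withDensity_apply _ measurableSet_TF.compl, setLIntegral_congr_fun (g := fun _ => 0)
    measurableSet_TF.compl]
  · simp
  · intro t ht
    have : normR F t = 0 := by
      by_contra h; exact ht ((isUnit_iff_normR t).2 h)
    simp [this]

lemma ae_TF : ∀ᵐ t ∂(measT F), IsUnit t := by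
  have := measT_compl (F := F)
  exact this

lemma restrict_TF : (measT F).restrict (TF F) = measT F :=
  Measure.restrict_eq_self_of_ae_mem ae_TF

/-- Invariance of the Haar measure `d^×t` under multiplication by units. -/
lemma mp_measT {a : RS F} (ha : IsUnit a) :
    MeasurePreserving (mulEquiv ha) (measT F) (measT F) := by
  refine ⟨(mulEquiv ha).measurable, ?_⟩
  have hm : Measurable fun t : RS F => ENNReal.ofReal (1 / normR F t) := by
    have := measurable_normR (F := F); fun_prop
  refine Measure.ext_of_lintegral _ fun φ hφ => ?_
  rw [lintegral_map hφ (mulEquiv ha).measurable]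
  unfold measT
  change ∫⁻ t, (φ ∘ mulEquiv ha) t ∂_ = _
  rw [lintegral_withDensity_eq_lintegral_mul _ hm (hφ.comp (mulEquiv ha).measurable),
    lintegral_withDensity_eq_lintegral_mul _ hm hφ]
  have hpos := normR_pos ha
  have h1 : ∀ t : RS F, ((fun t => ENNReal.ofReal (1 / normR F t)) *
      fun t => φ (mulEquiv ha t)) t = ENNReal.ofReal (normR F a) *
      (((fun t => ENNReal.ofReal (1 / normR F t)) * φ) (mulEquiv ha t)) := by
    intro t
    simp only [Pi.mul_apply, mulEquiv_apply, normR_mul]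
    rw [← mul_assoc, ← ENNReal.ofReal_mul hpos.le]
    congr 2
    field_simp
  have h2 := lintegral_map (μ := measR F) (hm.mul hφ) (mulEquiv ha).measurable
  rw [map_mul_measR, lintegral_smul_measure] at h2
  change ∫⁻ t, ((fun t => ENNReal.ofReal (1 / normR F t)) *
      fun t => φ (mulEquiv ha t)) t ∂(measR F) = _
  simp_rw [h1]
  have h3 : Measurable fun t => ((fun t => ENNReal.ofReal (1 / normR F t)) * φ) (mulEquiv ha t) :=
    (hm.mul hφ).comp (mulEquiv ha).measurable
  rw [lintegral_const_mul _ h3, ← h2,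
    smul_eq_mul, ← mul_assoc, ← ENNReal.ofReal_mul hpos.le, mul_inv_cancel₀ hpos.ne']
  simp

lemma integral_mul_measT {E : Type*} [NormedAddCommGroup E] [NormedSpace ℝ E]
    {a : RS F} (ha : IsUnit a) (g : RS F → E) :
    ∫ t, g (a * t) ∂(measT F) = ∫ t, g t ∂(measT F) :=
  (mp_measT ha).integral_comp (mulEquiv ha).measurableEmbedding g

lemma integrable_mul_measT {E : Type*} [NormedAddCommGroup E]
    {a : RS F} (ha : IsUnit a) (g : RS F → E) :
    Integrable (fun t => g (a * t)) (measT F) ↔ Integrable g (measT F) :=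
  (mp_measT ha).integrable_comp_emb (mulEquiv ha).measurableEmbedding

lemma integrable_measT_iff (g : RS F → ℝ) :
    Integrable g (measT F) ↔ Integrable (fun t => (normR F t)⁻¹ * g t) (measR F) := by
  unfold measT
  have hm : Measurable fun t : RS F => ENNReal.ofReal (1 / normR F t) := by
    have := measurable_normR (F := F); fun_prop
  rw [integrable_withDensity_iff_integrable_smul' hm (by simp)]
  refine iff_of_eq (congrArg (fun h => Integrable h _) (funext fun t => ?_))
  rw [ENNReal.toReal_ofReal (by have := normR_nonneg t; positivity), one_div, smul_eq_mul]

lemma fR_decay_one_add (M N : ℕ) : ∃ C : ℝ, 0 < C ∧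
    ∀ x : RS F, fR F x * ‖x‖ ^ M ≤ C * (1 + ‖x‖) ^ (-(N : ℝ)) := by
  obtain ⟨C₁, hC₁, h₁⟩ := fR_decay (F := F) M
  obtain ⟨C₂, hC₂, h₂⟩ := fR_decay (F := F) (M + N)
  refine ⟨2 ^ N * (C₁ + C₂), by positivity, fun x => ?_⟩
  have h0 := norm_nonneg x
  have hf := fR_pos x
  rw [Real.rpow_neg (by positivity), Real.rpow_natCast, ← div_eq_mul_inv, le_div_iff₀ (by positivity)]
  have hb : (1 + ‖x‖) ^ N ≤ 2 ^ N * (1 + ‖x‖ ^ N) := by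
    rcases le_total ‖x‖ 1 with h | h
    · calc (1 + ‖x‖) ^ N ≤ 2 ^ N := by gcongr; linarith
        _ ≤ 2 ^ N * (1 + ‖x‖ ^ N) := le_mul_of_one_le_right (by positivity)
            (by linarith [pow_nonneg h0 N])
    · calc (1 + ‖x‖) ^ N ≤ (2 * ‖x‖) ^ N := by gcongr; linarith
        _ ≤ 2 ^ N * (1 + ‖x‖ ^ N) := by rw [mul_pow]; gcongr; linarith
  calc fR F x * ‖x‖ ^ M * (1 + ‖x‖) ^ N
      ≤ fR F x * ‖x‖ ^ M * (2 ^ N * (1 + ‖x‖ ^ N)) := by gcongr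
    _ = 2 ^ N * (fR F x * ‖x‖ ^ M + fR F x * ‖x‖ ^ (M + N)) := by rw [pow_add]; ring
    _ ≤ 2 ^ N * (C₁ + C₂) := by gcongr <;> simp only [h₁, h₂]

lemma integrable_fR_measR (M : ℕ) :
    Integrable (fun t : RS F => fR F t * ‖t‖ ^ M) (measR F) := by
  obtain ⟨C, hC, h⟩ := fR_decay_one_add (F := F) M (Module.finrank ℝ (RS F) + 1)
  have hi : Integrable (fun t : RS F => C * (1 + ‖t‖) ^ (-((Module.finrank ℝ (RS F) + 1 : ℕ) : ℝ)))
      (measR F) := by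
    refine (integrable_one_add_norm ?_).const_mul C
    push_cast; linarith
  refine hi.mono' (continuous_fR.mul (continuous_norm.pow M)).aestronglyMeasurable ?_
  refine .of_forall fun t => ?_
  rw [Real.norm_of_nonneg (by have := fR_pos t; positivity)]
  exact h t

/-- Integrability of `f` against powers of the norm and of `|N|`. -/
lemma integrable_fR_pow (M k : ℕ) (hk : 1 ≤ k) :
    Integrable (fun t : RS F => fR F t * ‖t‖ ^ M * normR F t ^ k) (measT F) := by
  rw [integrable_measT_iff]
  obtain ⟨k, rfl⟩ := Nat.exists_eq_add_of_le' hk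
  refine (integrable_fR_measR (M + degF F * k)).mono' ?_ (.of_forall fun t => ?_)
  · have h1 := measurable_normR (F := F)
    have h2 := measurable_fR (F := F)
    exact (h1.inv.mul ((h2.mul (measurable_norm.pow_const M)).mul
      (h1.pow_const _))).aestronglyMeasurable
  · have hf := fR_pos t
    have hn := normR_nonneg t
    rw [Real.norm_of_nonneg (by positivity)]
    rcases hn.eq_or_lt with h | h
    · rw [← h]; simp; positivity
    · calc (normR F t)⁻¹ * (fR F t * ‖t‖ ^ M * normR F t ^ (k + 1))
          = fR F t * ‖t‖ ^ M * normR F t ^ k := by field_simp; ring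
        _ ≤ fR F t * ‖t‖ ^ M * (‖t‖ ^ degF F) ^ k := by gcongr; exact normR_le t
        _ = _ := by rw [pow_add, pow_mul]; ring

/-! ### The Gaussian is its own Fourier transform -/

/-- The additive character `r ↦ e^{2πir}` of `ℝ`. -/
def ee (r : ℝ) : ℂ := Complex.exp (2 * Real.pi * Complex.I * r)

lemma ee_add (r s : ℝ) : ee (r + s) = ee r * ee s := by
  unfold ee; rw [← Complex.exp_add]; push_cast; ring_nf

lemma ee_sum {ι : Type*} (s : Finset ι) (r : ι → ℝ) : ee (∑ i ∈ s, r i) = ∏ i ∈ s, ee (r i) := by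
  unfold ee; rw [← Complex.exp_sum]; push_cast; rw [Finset.mul_sum]

lemma norm_ee (r : ℝ) : ‖ee r‖ = 1 := by
  unfold ee
  have : (2 * Real.pi * Complex.I * r : ℂ) = ((2 * Real.pi * r : ℝ) : ℂ) * Complex.I := by
    push_cast; ring
  rw [this, Complex.norm_exp_ofReal_mul_I]

lemma continuous_ee : Continuous ee := by unfold ee; fun_prop

lemma ee_int (n : ℤ) : ee (n : ℝ) = 1 := by
  unfold ee
  rw [Complex.exp_eq_one_iff]
  exact ⟨n, by push_cast; ring⟩

lemma gauss_real (ξ : ℝ) : ∫ w : ℝ, Complex.exp (-(Real.pi : ℂ) * (‖w‖ : ℂ) ^ 2) * ee (w * ξ) =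
    Complex.exp (-(Real.pi : ℂ) * (‖ξ‖ : ℂ) ^ 2) := by
  have hpi : (Real.pi : ℂ) ≠ 0 := by exact_mod_cast Real.pi_ne_zero
  have h := GaussianFourier.integral_cexp_neg_mul_sq_norm_add (b := (Real.pi : ℂ)) (V := ℝ)
    (by simpa using Real.pi_pos) (2 * Real.pi * Complex.I) ξ
  rw [div_self hpi, Complex.one_cpow, one_mul] at h
  convert h using 2
  · ext w
    unfold ee
    rw [← Complex.exp_add]
    simp [mul_assoc]
  · have : ((2 * Real.pi * Complex.I) ^ 2 * (‖ξ‖ : ℂ) ^ 2 / (4 * Real.pi) : ℂ) =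
        -(Real.pi : ℂ) * (‖ξ‖ : ℂ) ^ 2 := by
      field_simp
      rw [Complex.I_sq]; ring
    exact this.symm

lemma gauss_complex (ξ : ℂ) :
    ∫ w : ℂ, Complex.exp (-(2 * Real.pi : ℂ) * (‖w‖ : ℂ) ^ 2) * ee (2 * (w * ξ).re)
      ∂((2 : ENNReal) • volume) = Complex.exp (-(2 * Real.pi : ℂ) * (‖ξ‖ : ℂ) ^ 2) := by
  have hpi : (Real.pi : ℂ) ≠ 0 := by exact_mod_cast Real.pi_ne_zero
  have h := GaussianFourier.integral_cexp_neg_mul_sq_norm_add (b := (2 * Real.pi : ℂ)) (V := ℂ)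
    (by simpa using Real.pi_pos) (4 * Real.pi * Complex.I) (starRingEnd ℂ ξ)
  rw [integral_smul_measure]
  have h2 : ∫ w : ℂ, Complex.exp (-(2 * Real.pi : ℂ) * (‖w‖ : ℂ) ^ 2) * ee (2 * (w * ξ).re) =
      ∫ v : ℂ, Complex.exp (-(2 * Real.pi : ℂ) * ↑‖v‖ ^ 2 +
        4 * Real.pi * Complex.I * ((inner ℝ (starRingEnd ℂ ξ) v : ℝ) : ℂ)) := by
    refine integral_congr_ae (.of_forall fun w => ?_)
    unfold ee
    simp only [← Complex.exp_add, Complex.inner, Complex.conj_conj]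
    congr 1
    push_cast; ring
  rw [h2, h]
  simp only [Complex.finrank_real_complex]
  have h3 : (Real.pi / (2 * Real.pi) : ℂ) = 1 / 2 := by field_simp
  have h4 : ((4 * Real.pi * Complex.I) ^ 2 * (‖(starRingEnd ℂ) ξ‖ : ℂ) ^ 2 / (4 * (2 * Real.pi)) : ℂ)
      = -(2 * Real.pi : ℂ) * (‖ξ‖ : ℂ) ^ 2 := by
    rw [RCLike.norm_conj]
    field_simp
    rw [Complex.I_sq]; ring
  rw [h3, h4]
  simp

lemma fR_eq_prod (x : RS F) : ((fR F x : ℝ) : ℂ) =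
    (∏ v, Complex.exp (-(Real.pi : ℂ) * (‖x.1 v‖ : ℂ) ^ 2)) *
      ∏ v, Complex.exp (-(2 * Real.pi : ℂ) * (‖x.2 v‖ : ℂ) ^ 2) := by
  unfold fR fD
  simp only [structureMap_fst, structureMap_snd, norm_coeComplex, Complex.norm_real]
  push_cast
  rfl

lemma sigmaFinite_two : SigmaFinite ((2 : ENNReal) • (volume : Measure ℂ)) := by
  have := Measure.IsAddHaarMeasure.smul (volume : Measure ℂ) (c := 2) (by simp) (by simp)
  infer_instance

/-- The Gaussian on `F_ℝ` is self-dual for the pairing `e^{2πi Tr(xy)}`. -/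
lemma fourier_fR (ξ : RS F) :
    ∫ w, (fR F w : ℂ) * ee (TrR F (w * ξ)) ∂(measR F) = fR F ξ := by
  have := sigmaFinite_two
  have h : ∀ w : RS F, (fR F w : ℂ) * ee (TrR F (w * ξ)) =
      (∏ v, (Complex.exp (-(Real.pi : ℂ) * (‖w.1 v‖ : ℂ) ^ 2) * ee (w.1 v * ξ.1 v))) *
      ∏ v, (Complex.exp (-(2 * Real.pi : ℂ) * (‖w.2 v‖ : ℂ) ^ 2) *
        ee (2 * (w.2 v * ξ.2 v).re)) := by
    intro w
    unfold TrR
    rw [fR_eq_prod, ee_add, ee_sum, ee_sum, Finset.prod_mul_distrib, Finset.prod_mul_distrib]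
    simp only [Prod.fst_mul, Prod.snd_mul, Pi.mul_apply]
    ring
  simp_rw [h]
  unfold measR
  rw [integral_prod_mul (fun a : {v : InfinitePlace F // v.IsReal} → ℝ =>
      ∏ v, (Complex.exp (-(Real.pi : ℂ) * (‖a v‖ : ℂ) ^ 2) * ee (a v * ξ.1 v)))
      (fun a : {v : InfinitePlace F // v.IsComplex} → ℂ =>
        ∏ v, (Complex.exp (-(2 * Real.pi : ℂ) * (‖a v‖ : ℂ) ^ 2) * ee (2 * (a v * ξ.2 v).re))),
    integral_fintype_prod_eq_prod
      (fun v (u : ℝ) => Complex.exp (-(Real.pi : ℂ) * (‖u‖ : ℂ) ^ 2) * ee (u * ξ.1 v)),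
    integral_fintype_prod_eq_prod
      (fun v (u : ℂ) => Complex.exp (-(2 * Real.pi : ℂ) * (‖u‖ : ℂ) ^ 2) *
        ee (2 * (u * ξ.2 v).re)), fR_eq_prod]
  simp_rw [gauss_real, gauss_complex]

/-- The Fourier transform of `w ↦ f(t(c + w))`. -/
lemma fourier_fR_scaled {t : RS F} (ht : IsUnit t) (c ξ : RS F) :
    ∫ w, (fR F (t * (c + w)) : ℂ) * ee (TrR F (-(w * ξ))) ∂(measR F) =
      ((normR F t)⁻¹ : ℝ) * (ee (TrR F (c * ξ)) * fR F (t⁻¹ * ξ)) := by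
  have h1 : ∫ w, (fR F (t * (c + w)) : ℂ) * ee (TrR F (-(w * ξ))) ∂(measR F) =
      ∫ w, ee (TrR F (c * ξ)) * ((fR F (t * w) : ℂ) * ee (TrR F (-(w * ξ)))) ∂(measR F) := by
    rw [← integral_add_left_eq_self
      (fun w => ee (TrR F (c * ξ)) * ((fR F (t * w) : ℂ) * ee (TrR F (-(w * ξ))))) c]
    refine integral_congr_ae (.of_forall fun w => ?_)
    simp only
    have : TrR F (-(w * ξ)) = TrR F (c * ξ) + TrR F (-((c + w) * ξ)) := by
      rw [← TrR_add]; congr 1; ring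
    rw [this, ee_add]; ring
  have h2 : ∀ w : RS F, (fR F (t * w) : ℂ) * ee (TrR F (-(w * ξ))) =
      (fun u => (fR F u : ℂ) * ee (TrR F (u * (-(t⁻¹ * ξ))))) (t * w) := by
    intro w
    simp only
    congr 3
    have := unit_mul_inv ht
    linear_combination (w * ξ) * this
  have h3 : fR F (-(t⁻¹ * ξ)) = fR F (t⁻¹ * ξ) := by
    rw [fR_eq, fR_eq]; unfold QR; simp
  rw [h1, integral_const_mul]
  simp_rw [h2]
  have h4 := integral_mul_measR ht (fun u => (fR F u : ℂ) * ee (TrR F (u * (-(t⁻¹ * ξ)))))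
  rw [h4, fourier_fR, h3]
  ring

/-! ### Poisson summation on `ℝ^ι` -/

section Poisson

variable {ι : Type} [Fintype ι]

/-- The integer vectors `ℤ^ι`, identified with the `ℤ`-span of the standard basis of `ℝ^ι`. -/
def intLat : (ι → ℤ) ≃ Submodule.span ℤ (Set.range (Pi.basisFun ℝ ι)) :=
  ((Pi.basisFun ℝ ι).restrictScalars ℤ).equivFun.symm.toEquiv

lemma intLat_apply (m : ι → ℤ) : (intLat m : ι → ℝ) = fun i => (m i : ℝ) := by
  classical
  unfold intLat
  simp only [LinearEquiv.coe_toEquiv, Module.Basis.equivFun_symm_apply]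
  ext i
  simp [Module.Basis.restrictScalars_apply, Pi.single_apply]

lemma norm_intVec (m : ι → ℤ) : ‖(fun i => (m i : ℝ))‖ = ‖m‖ := by
  simp only [Pi.norm_def]
  congr

lemma summable_int_one_add (N : ℕ) (hN : Fintype.card ι < N) :
    Summable fun m : ι → ℤ => (1 + ‖m‖) ^ (-(N : ℝ)) := by
  have hfin : Module.finrank ℤ (Submodule.span ℤ (Set.range (Pi.basisFun ℝ ι))) =
      Fintype.card ι := Module.finrank_eq_card_basis ((Pi.basisFun ℝ ι).restrictScalars ℤ)
  have h := ZLattice.summable_norm_rpow (Submodule.span ℤ (Set.range (Pi.basisFun ℝ ι)))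
    (-(N : ℝ)) (by rw [hfin]; exact_mod_cast neg_lt_neg (by exact_mod_cast hN))
  have h2 : Summable fun m : ι → ℤ => ‖m‖ ^ (-(N : ℝ)) := by
    refine (h.comp_injective intLat.injective).congr fun m => ?_
    simp only [Function.comp, Submodule.coe_norm]
    rw [intLat_apply, norm_intVec]
  refine Summable.of_norm_bounded_eventually h2 ?_
  refine (Set.finite_singleton (0 : ι → ℤ)).subset fun m hm => ?_
  by_contra h0
  refine hm ?_
  have h0 : m ≠ 0 := h0
  have hp := norm_pos_iff.2 h0
  change ‖(1 + ‖m‖) ^ (-(N : ℝ))‖ ≤ _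
  rw [Real.norm_of_nonneg (by positivity)]
  exact Real.rpow_le_rpow_of_nonpos hp (by linarith) (by simp)

lemma mFourier_real (n : ι → ℤ) (x : ι → ℝ) :
    UnitAddTorus.mFourier n (fun i => (x i : UnitAddCircle)) = ee (∑ i, n i * x i) := by
  rw [ee_sum]
  unfold UnitAddTorus.mFourier ee
  simp only [ContinuousMap.coe_mk]
  refine Finset.prod_congr rfl fun i _ => ?_
  rw [fourier_coe_apply]
  congr 1
  push_cast; simp [mul_assoc]

/-- Poisson summation for a function with polynomial decay and summable Fourier coefficients. -/
theorem poisson_pi (g : (ι → ℝ) → ℂ) (hc : Continuous g) (N : ℕ) (hN : Fintype.card ι < N) (C : ℝ)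
    (hC : 0 < C) (hb : ∀ v, ‖g v‖ ≤ C * (1 + ‖v‖) ^ (-(N : ℝ)))
    (hF : Summable fun m : ι → ℤ => ∫ v, ee (-∑ i, (m i : ℝ) * v i) * g v) :
    HasSum (fun m : ι → ℤ => ∫ v, ee (-∑ i, (m i : ℝ) * v i) * g v)
      (∑' m : ι → ℤ, g fun i => (m i : ℝ)) := by
  classical
  -- a locally uniform summable majorant for the translates of `g`
  set u : ℝ → (ι → ℤ) → ℝ := fun A m => C * (1 + A) ^ (N : ℝ) * (1 + ‖m‖) ^ (-(N : ℝ)) with hu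
  have hus : ∀ A, Summable (u A) := fun A => (summable_int_one_add N hN).mul_left _
  have hbd : ∀ A, ∀ m : ι → ℤ, ∀ x : ι → ℝ, ‖x‖ ≤ A → ‖g (intLat m + x)‖ ≤ u A m := by
    intro A m x hx
    have hA : 0 ≤ A := (norm_nonneg x).trans hx
    refine (hb _).trans ?_
    rw [hu]; simp only
    rw [mul_assoc]
    refine mul_le_mul_of_nonneg_left ?_ hC.le
    have h1 : 1 + ‖m‖ ≤ (1 + A) * (1 + ‖(intLat m + x : ι → ℝ)‖) := by
      have h2 : ‖m‖ ≤ ‖(intLat m + x : ι → ℝ)‖ + ‖x‖ := by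
        rw [← norm_intVec, ← intLat_apply]
        have := norm_sub_le (intLat m + x : ι → ℝ) x
        simpa using this
      nlinarith [norm_nonneg (intLat m + x : ι → ℝ)]
    have h3 : (1 + ‖m‖) ^ (N : ℝ) ≤ (1 + A) ^ (N : ℝ) * (1 + ‖(intLat m + x : ι → ℝ)‖) ^ (N : ℝ) := by
      rw [← Real.mul_rpow (by positivity) (by positivity)]
      exact Real.rpow_le_rpow (by positivity) h1 (by positivity)
    rw [Real.rpow_neg (by positivity), Real.rpow_neg (by positivity), ← div_eq_mul_inv,
      le_div_iff₀ (by positivity), inv_mul_le_iff₀ (by positivity), mul_comm _ ((1 + A) ^ (N : ℝ))]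
    exact h3
  -- the periodization
  set G : (ι → ℝ) → ℂ := fun x => ∑' m : ι → ℤ, g (intLat m + x) with hG
  have hGc : Continuous G := by
    refine continuous_iff_continuousAt.2 fun x => ?_
    have : ContinuousOn G (Metric.ball 0 (‖x‖ + 1)) := by
      refine continuousOn_tsum (u := u (‖x‖ + 1))
        (fun m => (hc.comp (continuous_const.add continuous_id)).continuousOn) (hus _)
        fun m y hy => hbd _ m y ?_
      rw [mem_ball_zero_iff] at hy; exact hy.le
    exact this.continuousAt (Metric.isOpen_ball.mem_nhds (by simp))
  have hGp : ∀ (k : ι → ℤ) x, G ((fun i => (k i : ℝ)) + x) = G x := by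
    intro k x
    simp only [hG]
    rw [← (Equiv.addRight k).tsum_eq (fun m => g (intLat m + x))]
    refine tsum_congr fun m => ?_
    simp only [intLat_apply, Equiv.coe_addRight]
    congr 1
    ext i; simp [add_assoc]
  have hq : IsOpenQuotientMap (Pi.map (fun (_ : ι) (r : ℝ) => (r : UnitAddCircle))) :=
    IsOpenQuotientMap.piMap fun _ => QuotientAddGroup.isOpenQuotientMap_mk
  let q : C(ι → ℝ, UnitAddTorus ι) := ⟨_, hq.continuous⟩
  have hqq : Topology.IsQuotientMap q := hq.isQuotientMap
  have hfac : Function.FactorsThrough (⟨G, hGc⟩ : C(ι → ℝ, ℂ)) q := by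
    intro x y hxy
    have h1 : ∀ i, ∃ n : ℤ, (n : ℝ) = x i - y i := by
      intro i
      have h2 : (x i : UnitAddCircle) = y i := congrFun hxy i
      rw [← sub_eq_zero, ← AddCircle.coe_sub, AddCircle.coe_eq_zero_iff] at h2
      obtain ⟨n, hn⟩ := h2
      exact ⟨n, by simpa using hn⟩
    choose k hk using h1
    have h3 : x = (fun i => (k i : ℝ)) + y := by ext i; simp [hk]
    change G x = G y
    rw [h3, hGp]
  let Gt : C(UnitAddTorus ι, ℂ) := hqq.lift ⟨G, hGc⟩ hfac
  have hGt : ∀ x : ι → ℝ, Gt (fun i => (x i : UnitAddCircle)) = G x := fun x =>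
    DFunLike.congr_fun (hqq.lift_comp ⟨G, hGc⟩ hfac) x
  -- its Fourier coefficients
  have hgi : Integrable g := by
    refine ((integrable_one_add_norm (r := (N : ℝ)) ?_).const_mul C).mono'
      hc.aestronglyMeasurable (.of_forall hb)
    simpa using hN
  have hcoeff : ∀ n, UnitAddTorus.mFourierCoeff Gt n = ∫ v, ee (-∑ i, (n i : ℝ) * v i) * g v := by
    intro n
    rw [UnitAddTorus.mFourierCoeff_eq_integral _ _ 0]
    simp_rw [hGt, mFourier_real, smul_eq_mul]
    set φ : (ι → ℝ) → ℂ := fun v => ee (-∑ i, (n i : ℝ) * v i) * g v with hφ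
    have hec : Continuous fun v : ι → ℝ => ee (-∑ i, (n i : ℝ) * v i) :=
      continuous_ee.comp (by fun_prop)
    have hφi : Integrable φ := by
      refine (hgi.norm).mono' (hec.mul hc).aestronglyMeasurable (.of_forall fun v => ?_)
      simp [hφ, norm_ee]
    have hcube : ({x : ι → ℝ | ∀ i, x i ∈ Set.Ioc ((0 : ι → ℝ) i) ((0 : ι → ℝ) i + 1)} : Set _)
        =ᵐ[volume] ZSpan.fundamentalDomain (Pi.basisFun ℝ ι) := by
      rw [ZSpan.fundamentalDomain_pi_basisFun]
      have h1 := Measure.univ_pi_Ioc_ae_eq_Icc (μ := fun _ : ι => (volume : Measure ℝ))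
        (f := fun _ => 0) (g := fun _ => 1)
      have h2 := Measure.univ_pi_Ico_ae_eq_Icc (μ := fun _ : ι => (volume : Measure ℝ))
        (f := fun _ => 0) (g := fun _ => 1)
      have h3 := h1.trans h2.symm
      have h4 : {x : ι → ℝ | ∀ i, x i ∈ Set.Ioc ((0 : ι → ℝ) i) ((0 : ι → ℝ) i + 1)} =
          Set.univ.pi fun _ => Set.Ioc 0 1 := by
        ext x; simp
      rw [h4]
      exact h3
    rw [setIntegral_congr_set hcube]
    have hfd := ZSpan.isAddFundamentalDomain (Pi.basisFun ℝ ι) (volume : Measure (ι → ℝ))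
    have : VAddInvariantMeasure (Submodule.span ℤ (Set.range (Pi.basisFun ℝ ι))) (ι → ℝ)
        volume := inferInstanceAs (VAddInvariantMeasure
          (Submodule.span ℤ (Set.range (Pi.basisFun ℝ ι))).toAddSubgroup (ι → ℝ) volume)
    rw [hfd.integral_eq_tsum'' φ hφi]
    rw [← intLat.tsum_eq]
    have hpt : ∀ (m : ι → ℤ) (x : ι → ℝ), φ (intLat m +ᵥ x) =
        ee (∑ i, ((-n) i : ℤ) * x i) * g (intLat m + x) := by
      intro m x
      have h1 : (intLat m +ᵥ x : ι → ℝ) = intLat m + x := rfl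
      rw [hφ]; simp only
      rw [h1]
      congr 1
      have h2 : (-∑ i, (n i : ℝ) * (intLat m + x : ι → ℝ) i) =
          ((-∑ i, n i * m i : ℤ) : ℝ) + ∑ i, (((-n) i : ℤ) : ℝ) * x i := by
        rw [intLat_apply]
        push_cast
        simp [mul_add, Finset.sum_add_distrib]
        ring
      rw [h2, ee_add, ee_int, one_mul]
    simp_rw [hpt]
    have hvol : volume (ZSpan.fundamentalDomain (Pi.basisFun ℝ ι)) ≠ ⊤ :=
      (ZSpan.fundamentalDomain_isBounded _).measure_lt_top.ne
    obtain ⟨A, hA⟩ : ∃ A, ∀ x ∈ ZSpan.fundamentalDomain (Pi.basisFun ℝ ι), ‖x‖ ≤ A :=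
      (ZSpan.fundamentalDomain_isBounded (Pi.basisFun ℝ ι)).exists_norm_le
    have hms : MeasurableSet (ZSpan.fundamentalDomain (Pi.basisFun ℝ ι)) :=
      ZSpan.fundamentalDomain_measurableSet _
    have hec2 : Continuous fun v : ι → ℝ => ee (∑ i, ((-n) i : ℤ) * v i) :=
      continuous_ee.comp (by fun_prop)
    have hbd2 : ∀ m : ι → ℤ, ∀ᵐ x ∂(volume.restrict (ZSpan.fundamentalDomain (Pi.basisFun ℝ ι))),
        ‖ee (∑ i, ((-n) i : ℤ) * x i) * g (intLat m + x)‖ ≤ u A m := by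
      intro m
      filter_upwards [ae_restrict_mem hms] with x hx
      rw [norm_mul, norm_ee, one_mul]
      exact hbd A m x (hA x hx)
    have hIntg : ∀ m : ι → ℤ, Integrable
        (fun x => ee (∑ i, ((-n) i : ℤ) * x i) * g (intLat m + x))
        (volume.restrict (ZSpan.fundamentalDomain (Pi.basisFun ℝ ι))) := by
      intro m
      refine Integrable.mono' (g := fun _ => u A m) ?_ ?_ (hbd2 m)
      · exact integrableOn_const hvol
      · exact (hec2.mul (hc.comp (continuous_const.add continuous_id))).aestronglyMeasurable
    have hs : HasSum _ _ := hasSum_integral_of_summable_integral_norm hIntg (by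
      refine Summable.of_nonneg_of_le (fun m => integral_nonneg fun _ => norm_nonneg _)
        (fun m => ?_) ((hus A).mul_left (volume.real (ZSpan.fundamentalDomain (Pi.basisFun ℝ ι))))
      calc _ ≤ ∫ x in ZSpan.fundamentalDomain (Pi.basisFun ℝ ι), u A m :=
            integral_mono_ae (hIntg m).norm (integrableOn_const hvol) (hbd2 m)
        _ = _ := by rw [setIntegral_const, smul_eq_mul])
    rw [hs.tsum_eq]
    refine integral_congr_ae (.of_forall fun x => ?_)
    simp only [hG]
    rw [tsum_mul_left]
  have hsum := UnitAddTorus.hasSum_mFourier_series_apply_of_summable (f := Gt)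
    (hF.congr fun n => (hcoeff n).symm) (fun i => ((0 : ℝ) : UnitAddCircle))
  rw [hGt (fun _ => 0)] at hsum
  simp_rw [mFourier_real _ (fun _ => (0 : ℝ)), hcoeff] at hsum
  have hval : G (fun _ => 0) = ∑' m : ι → ℤ, g fun i => (m i : ℝ) := by
    simp only [hG]
    refine tsum_congr fun m => ?_
    rw [intLat_apply]
    congr 1
    ext i; simp
  rw [hval] at hsum
  simpa [ee] using hsum

lemma summable_of_decay (g : (ι → ℝ) → ℂ) (N : ℕ) (hN : Fintype.card ι < N) (C : ℝ)
    (hb : ∀ v, ‖g v‖ ≤ C * (1 + ‖v‖) ^ (-(N : ℝ))) :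
    Summable fun m : ι → ℤ => g fun i => (m i : ℝ) := by
  refine Summable.of_norm_bounded ((summable_int_one_add N hN).mul_left C) fun m => ?_
  have := hb fun i => (m i : ℝ)
  rwa [norm_intVec] at this

end Poisson

/-! ### Poisson summation for fractional ideals -/

/-- Index set of a `ℤ`-basis of the fractional ideal `I`. -/
abbrev Idx (I : (FractionalIdeal (𝓞 F)⁰ F)ˣ) : Type :=
  Module.Free.ChooseBasisIndex ℤ (I : FractionalIdeal (𝓞 F)⁰ F)

/-- A fractional ideal in coordinates with respect to a `ℤ`-basis. -/
def idealEquiv (I : (FractionalIdeal (𝓞 F)⁰ F)ˣ) :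
    (Idx I → ℤ) ≃ {β : F // β ∈ (I : FractionalIdeal (𝓞 F)⁰ F)} :=
  (fractionalIdealBasis F (I : FractionalIdeal (𝓞 F)⁰ F)).equivFun.symm.toEquiv

lemma idealEquiv_apply (I : (FractionalIdeal (𝓞 F)⁰ F)ˣ) (m : Idx I → ℤ) :
    (idealEquiv I m : F) = ∑ i, (m i : ℚ) • basisOfFractionalIdeal F I i := by
  have h := Module.Basis.equivFun_symm_apply
    (fractionalIdealBasis F (I : FractionalIdeal (𝓞 F)⁰ F)) m
  have h1 := congrArg (((I : FractionalIdeal (𝓞 F)⁰ F) : Submodule (𝓞 F) F).subtype) h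
  rw [map_sum] at h1
  refine Eq.trans h1 (Finset.sum_congr rfl fun i _ => ?_)
  rw [basisOfFractionalIdeal_apply, map_zsmul, Int.cast_smul_eq_zsmul]
  rfl

/-- The basis of `F` dual to a `ℤ`-basis of `I` under the trace form. -/
def dualB (I : (FractionalIdeal (𝓞 F)⁰ F)ˣ) : Module.Basis (Idx I) ℚ F := by
  classical
  exact (Algebra.traceForm ℚ F).dualBasis (traceForm_nondegenerate ℚ F) (basisOfFractionalIdeal F I)

lemma trace_dualB (I : (FractionalIdeal (𝓞 F)⁰ F)ˣ) [DecidableEq (Idx I)] (i j : Idx I) :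
    Algebra.trace ℚ F (basisOfFractionalIdeal F I i * dualB I j) = if i = j then 1 else 0 := by
  have h := LinearMap.BilinForm.apply_dualBasis_right (traceForm_nondegenerate ℚ F)
    (Algebra.traceForm_isSymm ℚ (S := F)) (basisOfFractionalIdeal F I) i j
  rw [Algebra.traceForm_apply] at h
  convert h
  unfold dualB
  congr!

lemma trace_dual_sum (I : (FractionalIdeal (𝓞 F)⁰ F)ˣ) (i : Idx I) (m : Idx I → ℚ) :
    Algebra.trace ℚ F (basisOfFractionalIdeal F I i * ∑ j, m j • dualB I j) = m i := by
  classical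
  rw [Finset.mul_sum, map_sum]
  simp_rw [mul_smul_comm, map_smul, trace_dualB]
  simp

lemma dual_mem (I : (FractionalIdeal (𝓞 F)⁰ F)ˣ) (m : Idx I → ℤ) :
    ∑ i, (m i : ℚ) • dualB I i ∈ dualIdealSet F (I : FractionalIdeal (𝓞 F)⁰ F) := by
  intro β hβ
  obtain ⟨n, hn⟩ := (idealEquiv I).surjective ⟨β, hβ⟩
  have h1 : β = ∑ i, (n i : ℚ) • basisOfFractionalIdeal F I i := by
    rw [← idealEquiv_apply, hn]
  refine ⟨∑ i, n i * m i, ?_⟩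
  rw [h1, Finset.sum_mul, map_sum]
  push_cast
  refine Finset.sum_congr rfl fun i _ => ?_
  rw [smul_mul_assoc, map_smul, trace_dual_sum, smul_eq_mul]

/-- The dual ideal in coordinates with respect to the dual basis. -/
def dualEquiv (I : (FractionalIdeal (𝓞 F)⁰ F)ˣ) :
    (Idx I → ℤ) ≃ dualIdealSet F (I : FractionalIdeal (𝓞 F)⁰ F) :=
  Equiv.ofBijective (fun m => ⟨∑ i, (m i : ℚ) • dualB I i, dual_mem I m⟩) (by
    constructor
    · intro m n h
      have h2 := congrArg Subtype.val h
      ext i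
      have h3 := congrArg (fun w => Algebra.trace ℚ F (basisOfFractionalIdeal F I i * w)) h2
      simp only [trace_dual_sum] at h3
      exact_mod_cast h3
    · rintro ⟨w, hw⟩
      have h1 : ∀ i, ∃ n : ℤ, Algebra.trace ℚ F (basisOfFractionalIdeal F I i * w) = n := by
        intro i
        refine hw _ ?_
        rw [basisOfFractionalIdeal_apply]
        exact Subtype.property _
      choose n hn using h1
      refine ⟨n, Subtype.ext ?_⟩
      simp only
      rw [← (dualB I).sum_repr w]
      refine Finset.sum_congr rfl fun i _ => ?_
      congr 1
      rw [← hn]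
      conv_lhs => rw [← (dualB I).sum_repr w, trace_dual_sum])

lemma dualEquiv_apply (I : (FractionalIdeal (𝓞 F)⁰ F)ˣ) (m : Idx I → ℤ) :
    (dualEquiv I m : F) = ∑ i, (m i : ℚ) • dualB I i := rfl

lemma embed_smul_rat (r : ℚ) (x : F) :
    mixedEmbedding F (r • x) = (r : ℝ) • mixedEmbedding F x := by
  rw [Rat.smul_def, map_mul]
  have h : ∀ q : ℚ, mixedEmbedding F (q : F) = ((fun _ => (q : ℝ), fun _ => (q : ℂ)) : RS F) := by
    intro q
    refine Prod.ext (funext fun v => ?_) (funext fun v => ?_)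
    · rw [mixedEmbedding.mixedEmbedding_apply_isReal, map_ratCast]
    · rw [mixedEmbedding.mixedEmbedding_apply_isComplex, map_ratCast]
  rw [h]
  refine Prod.ext (funext fun v => ?_) (funext fun v => ?_)
  · simp
  · simp

/-- The coordinate parametrization of `F_ℝ` by a `ℤ`-basis of `I`. -/
def TI (I : (FractionalIdeal (𝓞 F)⁰ F)ˣ) : (Idx I → ℝ) ≃L[ℝ] RS F :=
  (mixedEmbedding.fractionalIdealLatticeBasis F I).equivFunL.symm

lemma TI_apply (I : (FractionalIdeal (𝓞 F)⁰ F)ˣ) (v : Idx I → ℝ) :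
    TI I v = ∑ i, v i • mixedEmbedding F (basisOfFractionalIdeal F I i) := by
  have : TI I v = ∑ i, v i • mixedEmbedding.fractionalIdealLatticeBasis F I i :=
    Module.Basis.equivFun_symm_apply _ _
  rw [this]
  simp_rw [mixedEmbedding.fractionalIdealLatticeBasis_apply]

lemma TI_int (I : (FractionalIdeal (𝓞 F)⁰ F)ˣ) (m : Idx I → ℤ) :
    TI I (fun i => (m i : ℝ)) = mixedEmbedding F (idealEquiv I m) := by
  rw [TI_apply, idealEquiv_apply, map_sum]
  simp_rw [embed_smul_rat]
  simp

/-- The coordinate parametrization of `F_ℝ` by the dual basis. -/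
def TD (I : (FractionalIdeal (𝓞 F)⁰ F)ˣ) : (Idx I → ℝ) →ₗ[ℝ] RS F :=
  Fintype.linearCombination ℝ fun i => mixedEmbedding F (dualB I i)

lemma TD_int (I : (FractionalIdeal (𝓞 F)⁰ F)ˣ) (m : Idx I → ℤ) :
    TD I (fun i => (m i : ℝ)) = mixedEmbedding F (dualEquiv I m) := by
  rw [dualEquiv_apply, map_sum]
  simp_rw [embed_smul_rat]
  simp [TD, Fintype.linearCombination_apply]

lemma TrR_TI_TD (I : (FractionalIdeal (𝓞 F)⁰ F)ˣ) (v w : Idx I → ℝ) :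
    TrR F (TI I v * TD I w) = ∑ i, v i * w i := by
  classical
  have h : ∀ i j, TrL F (mixedEmbedding F (basisOfFractionalIdeal F I i) *
      mixedEmbedding F (dualB I j)) = if i = j then 1 else 0 := by
    intro i j
    rw [TrL_apply, ← map_mul, TrR_embed, trace_dualB]
    split_ifs <;> simp
  rw [TI_apply, TD, Fintype.linearCombination_apply, ← TrL_apply, Finset.sum_mul_sum, map_sum]
  simp_rw [map_sum, smul_mul_smul_comm, map_smul, h]
  simp

lemma TI_anti (I : (FractionalIdeal (𝓞 F)⁰ F)ˣ) : ∃ K : ℝ, 0 < K ∧ ∀ v, ‖v‖ ≤ K * ‖TI I v‖ := by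
  refine ⟨‖((TI I).symm : RS F →L[ℝ] (Idx I → ℝ))‖ + 1, by positivity, fun v => ?_⟩
  have := ((TI I).symm : RS F →L[ℝ] (Idx I → ℝ)).le_opNorm (TI I v)
  simp only [ContinuousLinearEquiv.coe_coe, ContinuousLinearEquiv.symm_apply_apply] at this
  nlinarith [norm_nonneg (TI I v)]

lemma TrR_bound : ∃ K : ℝ, 0 < K ∧ ∀ x : RS F, |TrR F x| ≤ K * ‖x‖ := by
  refine ⟨‖LinearMap.toContinuousLinearMap (TrL F)‖ + 1, by positivity, fun x => ?_⟩
  have := (LinearMap.toContinuousLinearMap (TrL F)).le_opNorm x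
  simp only [LinearMap.coe_toContinuousLinearMap', TrL_apply, Real.norm_eq_abs] at this
  nlinarith [norm_nonneg x]

lemma TD_anti (I : (FractionalIdeal (𝓞 F)⁰ F)ˣ) : ∃ K : ℝ, 0 < K ∧ ∀ v, ‖v‖ ≤ K * ‖TD I v‖ := by
  classical
  obtain ⟨K, hK, h⟩ := TrR_bound (F := F)
  obtain ⟨A, hA0, hA⟩ : ∃ A : ℝ, 0 ≤ A ∧
      ∀ i, ‖mixedEmbedding F (basisOfFractionalIdeal F I i)‖ ≤ A :=
    ⟨∑ i : Idx I, ‖mixedEmbedding F (basisOfFractionalIdeal F I i)‖,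
      Finset.sum_nonneg fun _ _ => norm_nonneg _, fun i =>
      Finset.single_le_sum (f := fun i => ‖mixedEmbedding F (basisOfFractionalIdeal F I i)‖)
        (fun _ _ => norm_nonneg _) (Finset.mem_univ i)⟩
  refine ⟨K * A + 1, by positivity, fun v => ?_⟩
  rw [pi_norm_le_iff_of_nonneg (by positivity)]
  intro i
  have h1 := TrR_TI_TD I (Pi.single i 1) v
  rw [TI_apply] at h1
  have h5 : ∀ g : Idx I → RS F, ∑ j, (Pi.single i 1 : Idx I → ℝ) j • g j = g i := by
    intro g; simp [Pi.single_apply]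
  have h6 : ∑ j, (Pi.single i 1 : Idx I → ℝ) j * v j = v i := by simp [Pi.single_apply]
  rw [h5, h6] at h1
  rw [← h1, Real.norm_eq_abs]
  refine (h _).trans ?_
  have h3 := (norm_mul_le (mixedEmbedding F (basisOfFractionalIdeal F I i)) (TD I v)).trans
    (mul_le_mul_of_nonneg_right (hA i) (norm_nonneg _))
  have h4 := norm_nonneg (TD I v)
  refine (mul_le_mul_of_nonneg_left h3 hK.le).trans ?_
  rw [← mul_assoc]
  exact mul_le_mul_of_nonneg_right (by linarith) h4

lemma affine_bound {K a b x c T v : ℝ} (hK : 0 < K) (hb : 0 ≤ b) (hx : 0 ≤ x)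
    (hc : 0 ≤ c) (h4 : v ≤ K * T) (h2 : T ≤ b * x + c) (ha : a = 1 + K * c + K * b) :
    1 + v ≤ a * (1 + x) := by
  have h5 : K * T ≤ K * (b * x + c) := by gcongr
  have h7 : 0 ≤ K * c := by positivity
  have h8 : 0 ≤ K * b := by positivity
  have h9 : 0 ≤ (K * c) * x := by positivity
  have : a * (1 + x) = 1 + K * c + K * b + x + (K * c) * x + K * b * x := by
    rw [ha]; ring
  linarith

/-- Decay of the Gaussian along an injective affine map. -/
lemma decay_aff {ι : Type} [Fintype ι] (T : (ι → ℝ) → RS F) (K : ℝ) (hK0 : 0 < K)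
    (hK : ∀ v, ‖v‖ ≤ K * ‖T v‖) {t : RS F} (ht : IsUnit t) (c : RS F) (N : ℕ) :
    ∃ C : ℝ, 0 < C ∧ ∀ v, fR F (t * (c + T v)) ≤ C * (1 + ‖v‖) ^ (-(N : ℝ)) := by
  obtain ⟨C, hC, h⟩ := fR_decay_one_add (F := F) 0 N
  set A := 1 + K * ‖c‖ + K * ‖t⁻¹‖ with hA
  have hA1 : 1 ≤ A := by
    have := norm_nonneg c; have := norm_nonneg t⁻¹
    have : 0 ≤ K * ‖c‖ := by positivity
    have : 0 ≤ K * ‖t⁻¹‖ := by positivity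
    linarith
  refine ⟨C * A ^ (N : ℝ), by positivity, fun v => ?_⟩
  set x := t * (c + T v) with hx
  have h1 : T v = t⁻¹ * x - c := by
    rw [hx, ← mul_assoc, unit_inv_mul ht]; ring
  have h2 : ‖T v‖ ≤ ‖t⁻¹‖ * ‖x‖ + ‖c‖ := by
    rw [h1]
    exact (norm_sub_le _ _).trans (add_le_add (norm_mul_le _ _) le_rfl)
  have h3 : 1 + ‖v‖ ≤ A * (1 + ‖x‖) :=
    affine_bound hK0 (norm_nonneg _) (norm_nonneg _) (norm_nonneg _) (hK v) h2 hA
  have h10 := h x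
  rw [pow_zero, mul_one] at h10
  refine h10.trans ?_
  rw [mul_assoc]
  refine mul_le_mul_of_nonneg_left ?_ hC.le
  have h11 : (1 + ‖v‖) ^ (N : ℝ) ≤ A ^ (N : ℝ) * (1 + ‖x‖) ^ (N : ℝ) := by
    rw [← Real.mul_rpow (by positivity) (by positivity)]
    exact Real.rpow_le_rpow (by positivity) h3 (by positivity)
  rw [Real.rpow_neg (by positivity), Real.rpow_neg (by positivity), ← div_eq_mul_inv,
    le_div_iff₀ (by positivity), inv_mul_le_iff₀ (by positivity), mul_comm _ (A ^ (N : ℝ))]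
  exact h11

/-- The covolume `d_F^{1/2} N(I)` of the fractional ideal `I` in `F_ℝ`. -/
def VI (I : (FractionalIdeal (𝓞 F)⁰ F)ˣ) : ℝ :=
  Real.sqrt (dF F) * ((FractionalIdeal.absNorm (I : FractionalIdeal (𝓞 F)⁰ F) : ℚ) : ℝ)

lemma absNorm_pos (I : (FractionalIdeal (𝓞 F)⁰ F)ˣ) :
    0 < ((FractionalIdeal.absNorm (I : FractionalIdeal (𝓞 F)⁰ F) : ℚ) : ℝ) := by
  have h1 := FractionalIdeal.absNorm_nonneg (I : FractionalIdeal (𝓞 F)⁰ F)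
  have h2 : FractionalIdeal.absNorm (I : FractionalIdeal (𝓞 F)⁰ F) ≠ 0 := by
    rw [Ne, FractionalIdeal.absNorm_eq_zero_iff]; exact I.ne_zero
  exact_mod_cast lt_of_le_of_ne h1 h2.symm

lemma dF_pos : 0 < (dF F : ℝ) := by
  unfold dF
  exact_mod_cast Int.natAbs_pos.2 (discr_ne_zero F)

lemma VI_pos (I : (FractionalIdeal (𝓞 F)⁰ F)ˣ) : 0 < VI I :=
  mul_pos (Real.sqrt_pos.2 dF_pos) (absNorm_pos I)

/-- The covolume of a fractional ideal with respect to the measure on `F_ℝ`. -/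
lemma measR_FD (I : (FractionalIdeal (𝓞 F)⁰ F)ˣ) :
    measR F (ZSpan.fundamentalDomain (mixedEmbedding.fractionalIdealLatticeBasis F I)) =
      ENNReal.ofReal (VI I) := by
  rw [measR_eq, Measure.smul_apply,
    mixedEmbedding.volume_fundamentalDomain_fractionalIdealLatticeBasis,
    mixedEmbedding.volume_fundamentalDomain_latticeBasis]
  have hc : Fintype.card {v : InfinitePlace F // v.IsComplex} = InfinitePlace.nrComplexPlaces F := by
    unfold InfinitePlace.nrComplexPlaces; congr!
  rw [hc, smul_eq_mul, VI, mul_comm (Real.sqrt _), ENNReal.ofReal_mul (absNorm_pos I).le]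
  have hs : ENNReal.ofReal (Real.sqrt (dF F)) = (NNReal.sqrt ‖discr F‖₊ : ENNReal) := by
    rw [Real.sqrt, ENNReal.ofReal_coe_nnreal]
    congr 2
    ext
    rw [Real.coe_toNNReal _ (by positivity)]
    simp [dF, Int.norm_eq_abs]
  rw [hs]
  have h2 : (2 : ENNReal) ^ InfinitePlace.nrComplexPlaces F *
      2⁻¹ ^ InfinitePlace.nrComplexPlaces F = 1 := by
    rw [← mul_pow, ENNReal.mul_inv_cancel (by simp) (by simp), one_pow]
  rw [mul_left_comm, ← mul_assoc (_ ^ _) (_ ^ _), h2, one_mul]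

/-- Change of variables from basis coordinates to `F_ℝ`. -/
lemma integral_TI (I : (FractionalIdeal (𝓞 F)⁰ F)ˣ) (g : RS F → ℂ) :
    ∫ v, g (TI I v) = ((VI I)⁻¹ : ℝ) * ∫ w, g w ∂(measR F) := by
  have hmap : Measure.map (TI I) volume = ENNReal.ofReal (VI I)⁻¹ • measR F := by
    have : (Measure.map (TI I) volume).IsAddHaarMeasure :=
      ContinuousLinearEquiv.isAddHaarMeasure_map _ _
    have h1 := Measure.isAddLeftInvariant_eq_smul (Measure.map (TI I) volume) (measR F)
    have hm : MeasurableSet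
        (ZSpan.fundamentalDomain (mixedEmbedding.fractionalIdealLatticeBasis F I)) :=
      ZSpan.fundamentalDomain_measurableSet _
    have h2 := congrArg (fun μ => μ
      (ZSpan.fundamentalDomain (mixedEmbedding.fractionalIdealLatticeBasis F I))) h1
    rw [Measure.map_apply (TI I).continuous.measurable hm, Measure.smul_apply, measR_FD] at h2
    have h3 : (TI I) ⁻¹' (ZSpan.fundamentalDomain (mixedEmbedding.fractionalIdealLatticeBasis F I))
        = Set.univ.pi fun _ => Set.Ico 0 1 := by
      ext v
      have h4 : ∀ i, (mixedEmbedding.fractionalIdealLatticeBasis F I).repr (TI I v) i = v i := by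
        intro i
        exact congrFun ((mixedEmbedding.fractionalIdealLatticeBasis F I).equivFunL.apply_symm_apply
          v) i
      simp only [Set.mem_preimage, ZSpan.mem_fundamentalDomain, h4, Set.mem_univ_pi]
    rw [h3, volume_pi_pi] at h2
    simp only [Real.volume_Ico, sub_zero, ENNReal.ofReal_one, Finset.prod_const_one] at h2
    rw [h1]
    set k := Measure.addHaarScalarFactor (Measure.map (TI I) volume) (measR F)
    have h5 : (k : ENNReal) = ENNReal.ofReal (VI I)⁻¹ := by
      rw [ENNReal.ofReal_inv_of_pos (VI_pos I)]
      refine ENNReal.eq_inv_of_mul_eq_one_left ?_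
      rw [h2, ENNReal.smul_def, smul_eq_mul]
    rw [← h5]; rfl
  have h := integral_map_equiv (μ := volume) (TI I).toHomeomorph.toMeasurableEquiv g
  have hc : ⇑(TI I).toHomeomorph.toMeasurableEquiv = TI I := rfl
  rw [hc, hmap, integral_smul_measure, ENNReal.toReal_ofReal (inv_pos.2 (VI_pos I)).le] at h
  rw [← h, Complex.real_smul]

theorem summable_ideal_gauss (I : (FractionalIdeal (𝓞 F)⁰ F)ˣ) {t : RS F} (ht : IsUnit t)
    (c : RS F) : Summable fun β : {β : F // β ∈ (I : FractionalIdeal (𝓞 F)⁰ F)} =>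
      fR F (t * (c + mixedEmbedding F β)) := by
  obtain ⟨K, hK0, hK⟩ := TI_anti I
  obtain ⟨C, hC, h⟩ := decay_aff (TI I) K hK0 hK ht c (Fintype.card (Idx I) + 1)
  rw [← (idealEquiv I).summable_iff]
  have hs := (summable_int_one_add (ι := Idx I) (Fintype.card (Idx I) + 1) (by simp)).mul_left C
  refine Summable.of_nonneg_of_le (fun m => (fR_pos _).le) (fun m => ?_) hs
  have := h fun i => (m i : ℝ)
  rw [TI_int, norm_intVec] at this
  exact this

theorem summable_dual_gauss (I : (FractionalIdeal (𝓞 F)⁰ F)ˣ) {t : RS F} (ht : IsUnit t) :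
    Summable fun β : dualIdealSet F (I : FractionalIdeal (𝓞 F)⁰ F) =>
      fR F (t * mixedEmbedding F β) := by
  obtain ⟨K, hK0, hK⟩ := TD_anti I
  obtain ⟨C, hC, h⟩ := decay_aff (TD I) K hK0 hK ht 0 (Fintype.card (Idx I) + 1)
  rw [← (dualEquiv I).summable_iff]
  have hs := (summable_int_one_add (ι := Idx I) (Fintype.card (Idx I) + 1) (by simp)).mul_left C
  refine Summable.of_nonneg_of_le (fun m => (fR_pos _).le) (fun m => ?_) hs
  have := h fun i => (m i : ℝ)
  rw [TD_int, norm_intVec, zero_add] at this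
  exact this

/-- Poisson summation for `β ↦ f(t(c + β))` over a fractional ideal. -/
theorem poisson_ideal (I : (FractionalIdeal (𝓞 F)⁰ F)ˣ) {t : RS F} (ht : IsUnit t) (c : RS F) :
    ((∑' β : {β : F // β ∈ (I : FractionalIdeal (𝓞 F)⁰ F)},
      fR F (t * (c + mixedEmbedding F β)) : ℝ) : ℂ) =
      ((VI I * normR F t)⁻¹ : ℝ) * ∑' β : dualIdealSet F (I : FractionalIdeal (𝓞 F)⁰ F),
        ee (TrR F (c * mixedEmbedding F β)) * fR F (t⁻¹ * mixedEmbedding F β) := by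
  obtain ⟨K, hK0, hK⟩ := TI_anti I
  obtain ⟨C, hC, h⟩ := decay_aff (TI I) K hK0 hK ht c (Fintype.card (Idx I) + 1)
  set g : (Idx I → ℝ) → ℂ := fun v => (fR F (t * (c + TI I v)) : ℂ) with hg
  have hgc : Continuous g := by
    refine Complex.continuous_ofReal.comp (continuous_fR.comp ?_)
    exact continuous_const.mul (continuous_const.add (TI I).continuous)
  have hcoef : ∀ m : Idx I → ℤ, ∫ v, ee (-∑ i, (m i : ℝ) * v i) * g v =
      ((VI I * normR F t)⁻¹ : ℝ) * (ee (TrR F (c * mixedEmbedding F (dualEquiv I m))) *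
        fR F (t⁻¹ * mixedEmbedding F (dualEquiv I m))) := by
    intro m
    set ξ := mixedEmbedding F (dualEquiv I m) with hξ
    have h1 : ∀ v, ee (-∑ i, (m i : ℝ) * v i) * g v =
        (fun w => (fR F (t * (c + w)) : ℂ) * ee (TrR F (-(w * ξ)))) (TI I v) := by
      intro v
      simp only [hg]
      have h2 : TrR F (-(TI I v * ξ)) = -∑ i, (m i : ℝ) * v i := by
        rw [← TrL_apply, map_neg, TrL_apply, hξ, ← TD_int, TrR_TI_TD]
        simp_rw [mul_comm]
      rw [h2]; ring
    simp_rw [h1]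
    rw [integral_TI I (fun w => (fR F (t * (c + w)) : ℂ) * ee (TrR F (-(w * ξ)))),
      fourier_fR_scaled ht, mul_inv, ← mul_assoc]
    push_cast; rfl
  have hsd := summable_dual_gauss I (isUnit_inv ht)
  have hsdc : Summable fun β : dualIdealSet F (I : FractionalIdeal (𝓞 F)⁰ F) =>
      ee (TrR F (c * mixedEmbedding F β)) * fR F (t⁻¹ * mixedEmbedding F β) := by
    refine Summable.of_norm_bounded hsd fun β => ?_
    rw [norm_mul, norm_ee, one_mul, Complex.norm_real, Real.norm_of_nonneg (fR_pos _).le]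
  have hF : Summable fun m : Idx I → ℤ => ∫ v, ee (-∑ i, (m i : ℝ) * v i) * g v := by
    simp_rw [hcoef]
    exact Summable.mul_left _ ((dualEquiv I).summable_iff.2 hsdc)
  have hP := (poisson_pi g hgc (Fintype.card (Idx I) + 1) (by simp) C hC
    (fun v => by
      simp only [hg]
      rw [Complex.norm_real, Real.norm_of_nonneg (fR_pos _).le]; exact h v) hF).tsum_eq
  simp_rw [hcoef] at hP
  rw [tsum_mul_left, (dualEquiv I).tsum_eq (fun β : dualIdealSet F
    (I : FractionalIdeal (𝓞 F)⁰ F) => ee (TrR F (c * mixedEmbedding F β)) *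
      fR F (t⁻¹ * mixedEmbedding F β))] at hP
  rw [hP, Complex.ofReal_tsum, ← (idealEquiv I).tsum_eq]
  refine tsum_congr fun m => ?_
  simp only [hg, TI_int]

/-! ### Balanced representatives modulo units, and convergence of the sums -/

/-- Every invertible `x` can be moved by a unit to an element all of whose coordinates are
bounded by a constant times `|N(x)|^{1/n}`; this is the Dirichlet unit theorem. -/
lemma exists_balanced : ∃ C : ℝ, 0 < C ∧ ∀ x : RS F, IsUnit x → ∃ ε : (𝓞 F)ˣ,
    ‖mixedEmbedding F ((ε : 𝓞 F) : F) * x‖ ^ degF F ≤ C * normR F x := by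
  obtain ⟨C₀, hC₀⟩ := (mixedEmbedding.fundamentalCone.isBounded_normLeOne F).exists_norm_le
  refine ⟨(|C₀| + 1) ^ degF F, by positivity, fun x hx => ?_⟩
  have hn := normR_pos hx
  obtain ⟨ε, hε⟩ := mixedEmbedding.fundamentalCone.exists_unit_smul_mem
    (x := x) (by rw [← normR_eq]; exact hn.ne')
  refine ⟨ε, ?_⟩
  have hd : (degF F : ℝ) ≠ 0 := by exact_mod_cast degF_pos.ne'
  set c : ℝ := (normR F x) ^ (-(degF F : ℝ)⁻¹) with hc
  have hc0 : 0 < c := Real.rpow_pos_of_pos hn _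
  have hcn : c ^ degF F = (normR F x)⁻¹ := by
    rw [hc, ← Real.rpow_natCast, ← Real.rpow_mul hn.le, neg_mul, inv_mul_cancel₀ hd,
      Real.rpow_neg_one]
  have h1 := mixedEmbedding.fundamentalCone.smul_mem_of_mem hε hc0.ne'
  have h2 : mixedEmbedding.norm (c • (ε • x)) ≤ 1 := by
    rw [mixedEmbedding.norm_smul, mixedEmbedding.norm_unit_smul, ← normR_eq, abs_of_pos hc0,
      ← degF_eq, hcn, inv_mul_cancel₀ hn.ne']
  have h3 := hC₀ (c • (ε • x)) ⟨h1, h2⟩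
  rw [norm_smul, Real.norm_of_nonneg hc0.le] at h3
  have h4 : ε • x = mixedEmbedding F ((ε : 𝓞 F) : F) * x := rfl
  rw [h4] at h3
  have h5 : c ^ degF F * ‖mixedEmbedding F ((ε : 𝓞 F) : F) * x‖ ^ degF F ≤
      (|C₀| + 1) ^ degF F := by
    rw [← mul_pow]
    refine pow_le_pow_left₀ (by positivity) (h3.trans ((le_abs_self _).trans (by linarith))) _
  rw [hcn, inv_mul_le_iff₀ hn] at h5
  linarith

lemma card_Idx (I : (FractionalIdeal (𝓞 F)⁰ F)ˣ) : Fintype.card (Idx I) = degF F := by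
  rw [degF_eq, ← Module.finrank_eq_card_basis (basisOfFractionalIdeal F I)]

/-- `Σ ‖m‖^{-κ n}` over nonzero vectors of a rank `n` lattice, pulled back to coordinates. -/
lemma summable_lattice_rpow {ι : Type} [Fintype ι] (T : (ι → ℤ) → RS F) (K : ℝ) (hK0 : 0 < K)
    (hK : ∀ m, ‖m‖ ≤ K * ‖T m‖) {κ : ℝ} (hκ : (Fintype.card ι : ℝ) < κ) :
    Summable fun m : {m : ι → ℤ // m ≠ 0} => ‖T m‖ ^ (-κ) := by
  have hfin : Module.finrank ℤ (Submodule.span ℤ (Set.range (Pi.basisFun ℝ ι))) =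
      Fintype.card ι := Module.finrank_eq_card_basis ((Pi.basisFun ℝ ι).restrictScalars ℤ)
  have h := ZLattice.summable_norm_rpow (Submodule.span ℤ (Set.range (Pi.basisFun ℝ ι)))
    (-κ) (by rw [hfin]; exact neg_lt_neg hκ)
  have h2 : Summable fun m : ι → ℤ => ‖m‖ ^ (-κ) := by
    refine (h.comp_injective intLat.injective).congr fun m => ?_
    simp only [Function.comp, Submodule.coe_norm]
    rw [intLat_apply, norm_intVec]
  have h3 := (h2.comp_injective (Subtype.val_injective (p := fun m : ι → ℤ => m ≠ 0))).mul_left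
    (K ^ κ)
  refine Summable.of_nonneg_of_le (fun m => by positivity) (fun m => ?_) h3
  have hm : 0 < ‖(m : ι → ℤ)‖ := norm_pos_iff.2 m.2
  have hκ0 : 0 < κ := lt_of_le_of_lt (by positivity) hκ
  have hT : 0 < ‖T m‖ := pos_of_mul_pos_right (hm.trans_le (hK m)) hK0.le
  simp only [Function.comp]
  rw [Real.rpow_neg hT.le, Real.rpow_neg hm.le, ← div_eq_mul_inv, inv_le_comm₀ (by positivity)
    (by positivity), inv_div, div_le_iff₀ (by positivity), ← Real.mul_rpow (by positivity) hK0.le]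
  exact Real.rpow_le_rpow hm.le (by rw [mul_comm]; exact hK m) hκ0.le

/-- The nonzero elements of `I`. -/
abbrev NZ (I : (FractionalIdeal (𝓞 F)⁰ F)ˣ) : Type :=
  {β : F // β ∈ (I : FractionalIdeal (𝓞 F)⁰ F) ∧ β ≠ 0}

/-- The nonzero elements of the dual ideal of `I`. -/
abbrev NZD (I : (FractionalIdeal (𝓞 F)⁰ F)ˣ) : Type :=
  {β : F // β ∈ dualIdealSet F (I : FractionalIdeal (𝓞 F)⁰ F) ∧ β ≠ 0}

lemma summable_NZ (I : (FractionalIdeal (𝓞 F)⁰ F)ˣ) {κ : ℝ} (hκ : (degF F : ℝ) < κ) :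
    Summable fun β : NZ I => ‖mixedEmbedding F β‖ ^ (-κ) := by
  obtain ⟨K, hK0, hK⟩ := TI_anti I
  have h := summable_lattice_rpow (fun m => mixedEmbedding F (idealEquiv I m)) K hK0 (fun m => by
    rw [← TI_int, ← norm_intVec]; exact hK _) (κ := κ) (by rwa [card_Idx])
  have h0 : ∀ m, m = 0 ↔ (idealEquiv I m : F) = 0 := by
    intro m
    have : (idealEquiv I 0 : F) = 0 := by rw [idealEquiv_apply]; simp
    rw [← this, Subtype.val_inj, (idealEquiv I).injective.eq_iff]
  let e : NZ I → {m : Idx I → ℤ // m ≠ 0} := fun β =>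
    ⟨(idealEquiv I).symm ⟨β, β.2.1⟩, by rw [Ne, h0]; simpa using β.2.2⟩
  have he : Function.Injective e := by
    intro β γ h
    have h1 := congrArg Subtype.val h
    simp only [e, (idealEquiv I).symm.injective.eq_iff, Subtype.mk.injEq] at h1
    exact Subtype.ext h1
  refine (h.comp_injective he).congr fun β => ?_
  simp [e, Function.comp]

lemma summable_NZD (I : (FractionalIdeal (𝓞 F)⁰ F)ˣ) {κ : ℝ} (hκ : (degF F : ℝ) < κ) :
    Summable fun β : NZD I => ‖mixedEmbedding F β‖ ^ (-κ) := by
  obtain ⟨K, hK0, hK⟩ := TD_anti I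
  have h := summable_lattice_rpow (fun m => mixedEmbedding F (dualEquiv I m)) K hK0 (fun m => by
    rw [← TD_int, ← norm_intVec]; exact hK _) (κ := κ) (by rwa [card_Idx])
  have h0 : ∀ m, m = 0 ↔ (dualEquiv I m : F) = 0 := by
    intro m
    have : (dualEquiv I 0 : F) = 0 := by rw [dualEquiv_apply]; simp
    rw [← this, Subtype.val_inj, (dualEquiv I).injective.eq_iff]
  let e : NZD I → {m : Idx I → ℤ // m ≠ 0} := fun β =>
    ⟨(dualEquiv I).symm ⟨β, β.2.1⟩, by rw [Ne, h0]; simpa using β.2.2⟩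
  have he : Function.Injective e := by
    intro β γ h
    have h1 := congrArg Subtype.val h
    simp only [e, (dualEquiv I).symm.injective.eq_iff, Subtype.mk.injEq] at h1
    exact Subtype.ext h1
  refine (h.comp_injective he).congr fun β => ?_
  simp [e, Function.comp]

lemma unit_mul_mem (I : FractionalIdeal (𝓞 F)⁰ F) (ε : (𝓞 F)ˣ) {α : F} (h : α ∈ I) :
    ((ε : 𝓞 F) : F) * α ∈ I := by
  have := Submodule.smul_mem (I : Submodule (𝓞 F) F) (ε : 𝓞 F) h
  rwa [Algebra.smul_def] at this

lemma unit_ne_zero (ε : (𝓞 F)ˣ) : ((ε : 𝓞 F) : F) ≠ 0 := by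
  simp

lemma unit_inv_coe (ε : (𝓞 F)ˣ) : (((ε⁻¹ : (𝓞 F)ˣ) : 𝓞 F) : F) = (((ε : 𝓞 F) : F))⁻¹ := by
  refine eq_inv_of_mul_eq_one_left ?_
  rw [← map_mul, ← Units.val_mul, inv_mul_cancel, Units.val_one, map_one]

lemma unit_mul_dual (I : FractionalIdeal (𝓞 F)⁰ F) (ε : (𝓞 F)ˣ) {α : F}
    (h : α ∈ dualIdealSet F I) : ((ε : 𝓞 F) : F) * α ∈ dualIdealSet F I := by
  intro β hβ
  obtain ⟨n, hn⟩ := h _ (unit_mul_mem I ε hβ)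
  exact ⟨n, by rw [← hn]; congr 1; ring⟩

/-- Convergence of `Σ |N(α)|^{-κ}` over `I` modulo units for `κ > 1`. -/
lemma summable_repr (I : (FractionalIdeal (𝓞 F)⁰ F)ˣ) {R : Set F}
    (hR : IsIdealRepr F (I : FractionalIdeal (𝓞 F)⁰ F) R) {κ : ℝ} (hκ : 1 < κ) :
    Summable fun r : R => normR F (mixedEmbedding F r) ^ (-κ) := by
  obtain ⟨C, hC, h⟩ := exists_balanced (F := F)
  have hne : ∀ r : R, (r : F) ≠ 0 := fun r h0 => hR.2.1 (h0 ▸ r.2)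
  choose ε hε using fun r : R => h _ (isUnit_embed (hne r))
  let e : R → NZ I := fun r => ⟨((ε r : 𝓞 F) : F) * r,
    unit_mul_mem _ _ (hR.1 _ r.2), mul_ne_zero (unit_ne_zero _) (hne r)⟩
  have he : Function.Injective e := by
    intro r r' hrr
    have h1 := congrArg Subtype.val hrr
    simp only [e] at h1
    obtain ⟨_, _, hu⟩ := hR.2.2 _ (e r).2.1 (e r).2.2
    exact Subtype.ext ((hu r ⟨r.2, ε r, rfl⟩).trans (hu r' ⟨r'.2, ε r', h1.symm⟩).symm)
  have hd : (0 : ℝ) < degF F := by exact_mod_cast degF_pos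
  have hs := ((summable_NZ I (κ := degF F * κ) (by nlinarith)).comp_injective he).mul_left (C ^ κ)
  refine Summable.of_nonneg_of_le (fun r => Real.rpow_nonneg (normR_nonneg _) _) (fun r => ?_) hs
  have hp := normR_pos (isUnit_embed (hne r))
  have h2 := hε r
  rw [← map_mul] at h2
  have hT : 0 < ‖mixedEmbedding F (((ε r : 𝓞 F) : F) * r)‖ := by
    rw [norm_pos_iff, Ne, map_eq_zero]
    exact mul_ne_zero (unit_ne_zero _) (hne r)
  simp only [Function.comp, e]
  rw [← mul_neg, Real.rpow_mul hT.le, Real.rpow_natCast, Real.rpow_neg hp.le,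
    Real.rpow_neg (by positivity), ← div_eq_mul_inv, inv_le_comm₀ (by positivity) (by positivity),
    inv_div, div_le_iff₀ (by positivity), ← Real.mul_rpow hp.le hC.le]
  exact Real.rpow_le_rpow (by positivity) (by rw [mul_comm _ C]; exact h2) (by linarith)

/-! ### Mellin transforms of the Gaussian -/

/-- The function `Γ_F` at real arguments. -/
def Gr (F : Type) [Field F] [NumberField F] (σ : ℝ) : ℝ :=
  ∫ t, fR F t * normR F t ^ σ ∂(measT F)

/-- The real Bessel integral `∫ f(tu) f(t⁻¹w) |N(t)|^σ d^×t`. -/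
def HR (u w : RS F) (σ : ℝ) : ℝ :=
  ∫ t, fR F (t * u) * fR F (t⁻¹ * w) * normR F t ^ σ ∂(measT F)

lemma rpow_le_add {x σ : ℝ} {k : ℕ} (hx : 0 ≤ x) (h1 : 1 ≤ σ) (h2 : σ ≤ k) :
    x ^ σ ≤ x + x ^ k := by
  rcases le_total x 1 with h | h
  · have := Real.rpow_le_rpow_of_exponent_ge' hx h zero_le_one h1
    rw [Real.rpow_one] at this
    linarith [pow_nonneg hx k]
  · have := Real.rpow_le_rpow_of_exponent_le h h2
    rw [Real.rpow_natCast] at this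
    linarith

lemma integrable_fR_rpow {σ : ℝ} (h1 : 1 ≤ σ) :
    Integrable (fun t : RS F => fR F t * normR F t ^ σ) (measT F) := by
  obtain ⟨k, hk⟩ := exists_nat_ge σ
  have i1 := integrable_fR_pow (F := F) 0 1 le_rfl
  have i2 := integrable_fR_pow (F := F) 0 k (by
    have : (1 : ℝ) ≤ k := h1.trans hk
    exact_mod_cast this)
  simp only [pow_zero, mul_one, pow_one] at i1 i2
  refine (i1.add i2).mono' ?_ (.of_forall fun t => ?_)
  · exact (measurable_fR.mul (measurable_normR.pow_const σ)).aestronglyMeasurable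
  · have hn := normR_nonneg t
    have hf := fR_pos t
    rw [Real.norm_of_nonneg (by positivity), Pi.add_apply, ← mul_add]
    exact mul_le_mul_of_nonneg_left (rpow_le_add hn h1 hk) hf.le

lemma integrable_fR_scale {u : RS F} (hu : IsUnit u) {σ : ℝ} (h1 : 1 ≤ σ) :
    Integrable (fun t : RS F => fR F (t * u) * normR F t ^ σ) (measT F) := by
  have := ((integrable_mul_measT hu _).2 (integrable_fR_rpow (F := F) h1)).const_mul
    (normR F u ^ σ)⁻¹
  refine this.congr (.of_forall fun t => ?_)
  have hp := normR_pos hu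
  simp only
  rw [normR_mul, Real.mul_rpow hp.le (normR_nonneg _), mul_comm u t]
  field_simp

lemma integral_fR_scale {u : RS F} (hu : IsUnit u) (σ : ℝ) :
    ∫ t, fR F (t * u) * normR F t ^ σ ∂(measT F) = normR F u ^ (-σ) * Gr F σ := by
  have := integral_mul_measT hu (fun t : RS F => fR F t * normR F t ^ σ)
  rw [Gr, ← this, ← integral_const_mul]
  refine integral_congr_ae (.of_forall fun t => ?_)
  have hp := normR_pos hu
  simp only
  rw [normR_mul, Real.mul_rpow hp.le (normR_nonneg _), mul_comm u t, Real.rpow_neg hp.le]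
  field_simp

/-- The element `ρ` of `F_ℝ` with `ρ_v = |c_v + d_v j_v|`. -/
def rho (c d : RS F) : RS F :=
  (fun v => Real.sqrt (c.1 v ^ 2 + d.1 v ^ 2),
    fun v => ((Real.sqrt (‖c.2 v‖ ^ 2 + ‖d.2 v‖ ^ 2) : ℝ) : ℂ))

/-- With `ρ = |c + dj|` placewise, `f(tc) f(td) = f(tρ)`. -/
lemma fR_rho (t c d : RS F) : fR F (t * rho c d) = fR F (t * c) * fR F (t * d) := by
  simp only [fR_eq, ← Real.exp_add]
  congr 1
  have h1 : ∀ v, ((t * rho c d).1 v) ^ 2 = ((t * c).1 v) ^ 2 + ((t * d).1 v) ^ 2 := by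
    intro v
    simp only [Prod.fst_mul, Pi.mul_apply, rho, mul_pow]
    rw [Real.sq_sqrt (by positivity)]; ring
  have h2 : ∀ v, ‖(t * rho c d).2 v‖ ^ 2 = ‖(t * c).2 v‖ ^ 2 + ‖(t * d).2 v‖ ^ 2 := by
    intro v
    simp only [Prod.snd_mul, Pi.mul_apply, rho, norm_mul, mul_pow, Complex.norm_real,
      Real.norm_eq_abs, sq_abs]
    rw [Real.sq_sqrt (by positivity)]; ring
  simp only [QR, Real.norm_eq_abs, sq_abs, h1, h2, Finset.sum_add_distrib, mul_add]
  ring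

/-- The quaternion `j`. -/
def jq : Quaternion ℝ := ⟨0, 0, 1, 0⟩

lemma jq_re : jq.re = 0 := rfl
lemma jq_imI : jq.imI = 0 := rfl
lemma jq_imJ : jq.imJ = 1 := rfl
lemma jq_imK : jq.imK = 0 := rfl

lemma norm_ofComplex_add (c d : ℂ) :
    ‖(c : Quaternion ℝ) + (d : Quaternion ℝ) * jq‖ = Real.sqrt (‖c‖ ^ 2 + ‖d‖ ^ 2) := by
  rw [← Real.sqrt_sq (norm_nonneg ((c : Quaternion ℝ) + (d : Quaternion ℝ) * jq))]
  congr 1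
  rw [sq, ← Quaternion.normSq_eq_norm_mul_self, Quaternion.normSq_def', Complex.sq_norm,
    Complex.sq_norm, Complex.normSq_apply, Complex.normSq_apply]
  simp only [Quaternion.re_add, Quaternion.imI_add, Quaternion.imJ_add, Quaternion.imK_add,
    Quaternion.re_mul, Quaternion.imI_mul, Quaternion.imJ_mul, Quaternion.imK_mul,
    Quaternion.re_coeComplex, Quaternion.imI_coeComplex, Quaternion.imJ_coeComplex,
    Quaternion.imK_coeComplex, jq_re, jq_imI, jq_imJ, jq_imK]
  ring

lemma normR_rho (c d : RS F) :
    normR F (rho c d) = normD F (structureMap F c + structureMap F d * jF F) := by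
  unfold normR normD
  congr 1
  · refine Finset.prod_congr rfl fun v _ => ?_
    simp only [rho, Prod.fst_add, Prod.fst_mul, Pi.add_apply, Pi.mul_apply, structureMap_fst, jF]
    rw [abs_of_nonneg (Real.sqrt_nonneg _), Complex.norm_add_mul_I]
  · refine Finset.prod_congr rfl fun v _ => ?_
    change ‖((Real.sqrt (‖c.2 v‖ ^ 2 + ‖d.2 v‖ ^ 2) : ℝ) : ℂ)‖ ^ 2 =
      ‖(c.2 v : Quaternion ℝ) + (d.2 v : Quaternion ℝ) * jq‖ ^ 2
    rw [norm_ofComplex_add, Complex.norm_real, Real.norm_of_nonneg (Real.sqrt_nonneg _)]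

lemma isUnit_rho {c d : RS F} (h : IsUnit c ∨ IsUnit d) : IsUnit (rho c d) := by
  rw [isUnit_iff_forall]
  have h' : (∀ v, 0 < c.1 v ^ 2 + d.1 v ^ 2) ∧ ∀ v, 0 < ‖c.2 v‖ ^ 2 + ‖d.2 v‖ ^ 2 := by
    rcases h with h | h <;> rw [isUnit_iff_forall] at h <;> refine ⟨fun v => ?_, fun v => ?_⟩
    · have := h.1 v; positivity
    · have := h.2 v; positivity
    · have := h.1 v; positivity
    · have := h.2 v; positivity
  refine ⟨fun v => (Real.sqrt_pos.2 (h'.1 v)).ne', fun v => ?_⟩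
  exact Complex.ofReal_ne_zero.2 (Real.sqrt_pos.2 (h'.2 v)).ne'

/-- `Γ_F(σ)/‖c + d j‖^σ` as an integral over `F_ℝ^×`. -/
lemma integral_pair {c d : RS F} (h : IsUnit c ∨ IsUnit d) (σ : ℝ) :
    ∫ t, fR F (t * c) * fR F (t * d) * normR F t ^ σ ∂(measT F) =
      normD F (structureMap F c + structureMap F d * jF F) ^ (-σ) * Gr F σ := by
  rw [← normR_rho, ← integral_fR_scale (isUnit_rho h)]
  simp only [fR_rho]

lemma integrable_HR {u : RS F} (hu : IsUnit u) (w : RS F) {σ : ℝ} (h1 : 1 ≤ σ) :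
    Integrable (fun t : RS F => fR F (t * u) * fR F (t⁻¹ * w) * normR F t ^ σ) (measT F) := by
  refine (integrable_fR_scale hu h1).mono' ?_ (.of_forall fun t => ?_)
  · have hi : Measurable fun t : RS F => t⁻¹ := by
      refine Measurable.prodMk ?_ ?_
      · exact measurable_pi_lambda _ fun v => ((measurable_pi_apply v).comp measurable_fst).inv
      · exact measurable_pi_lambda _ fun v => ((measurable_pi_apply v).comp measurable_snd).inv
    have h3 : Measurable fun t : RS F => fR F (t * u) :=
      (continuous_fR.comp (continuous_id.mul continuous_const)).measurable
    have h4 : Measurable fun t : RS F => fR F (t⁻¹ * w) :=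
      ((continuous_fR.comp (continuous_id.mul continuous_const)).measurable).comp hi
    exact ((h3.mul h4).mul (measurable_normR.pow_const σ)).aestronglyMeasurable
  · have hn := normR_nonneg t
    have hf := fR_pos (t * u)
    have hg := fR_pos (t⁻¹ * w)
    rw [Real.norm_of_nonneg (by positivity)]
    have := mul_le_of_le_one_right hf.le (fR_le_one (t⁻¹ * w))
    exact mul_le_mul_of_nonneg_right this (by positivity)

lemma HR_nonneg (u w : RS F) (σ : ℝ) : 0 ≤ HR u w σ :=
  integral_nonneg fun t =>
    mul_nonneg (mul_nonneg (fR_pos _).le (fR_pos _).le) (Real.rpow_nonneg (normR_nonneg t) _)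

lemma HR_zero {u : RS F} (hu : IsUnit u) (σ : ℝ) : HR u 0 σ = normR F u ^ (-σ) * Gr F σ := by
  rw [← integral_fR_scale hu, HR]
  have : fR F (0 : RS F) = 1 := by rw [fR_eq]; simp [QR]
  simp [this]

lemma HR_scale {u : RS F} (hu : IsUnit u) (w : RS F) (σ : ℝ) :
    HR u w σ = normR F u ^ (-σ) * HR 1 (u * w) σ := by
  have := integral_mul_measT hu (fun t : RS F => fR F (t * 1) * fR F (t⁻¹ * (u * w)) *
    normR F t ^ σ)
  rw [HR, HR, ← this, ← integral_const_mul]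
  refine integral_congr_ae (.of_forall fun t => ?_)
  have hp := normR_pos hu
  have h2 : (u * t)⁻¹ * (u * w) = t⁻¹ * w := by
    rw [rs_mul_inv]
    calc u⁻¹ * t⁻¹ * (u * w) = (u⁻¹ * u) * (t⁻¹ * w) := by ring
      _ = _ := by rw [unit_inv_mul hu, one_mul]
  simp only
  rw [h2, normR_mul, Real.mul_rpow hp.le (normR_nonneg _), mul_one, mul_comm u t,
    Real.rpow_neg hp.le]
  field_simp

/-- The Bessel integral depends only on `(uε, wε⁻¹)` up to units `ε`. -/
lemma HR_unit {u : RS F} (hu : IsUnit u) (w : RS F) (σ : ℝ) {e : RS F} (he : IsUnit e)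
    (hn : normR F e = 1) : HR (e * u) (e⁻¹ * w) σ = HR u w σ := by
  rw [HR_scale (he.mul hu), HR_scale hu, normR_mul, hn, one_mul]
  congr 2
  calc e * u * (e⁻¹ * w) = (e * e⁻¹) * (u * w) := by ring
    _ = _ := by rw [unit_mul_inv he, one_mul]

lemma decay_aux {W T X f g n nσ C : ℝ} {M : ℕ} (hf : 0 ≤ f) (hg : 0 ≤ g) (hn : 0 ≤ n)
    (hT : 0 ≤ T) (hX : 0 ≤ X) (hσ : 0 ≤ nσ) (hw : W ≤ T ^ M * X ^ M) (hr : nσ ≤ n + n ^ 2)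
    (hd : g * X ^ M ≤ C) :
    W * (f * g * nσ) ≤ C * (f * T ^ M * n + f * T ^ M * n ^ 2) :=
  calc W * (f * g * nσ)
      ≤ (T ^ M * X ^ M) * (f * g * (n + n ^ 2)) :=
        mul_le_mul hw (mul_le_mul_of_nonneg_left hr (by positivity)) (by positivity)
          (by positivity)
    _ = (g * X ^ M) * (T ^ M * f * (n + n ^ 2)) := by ring
    _ ≤ C * (T ^ M * f * (n + n ^ 2)) := mul_le_mul_of_nonneg_right hd (by positivity)
    _ = _ := by ring

/-- Polynomial decay of the Bessel integral, uniformly for `1 ≤ σ ≤ 2`. -/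
lemma HR_decay (M : ℕ) : ∃ C : ℝ, 0 < C ∧ ∀ σ, 1 ≤ σ → σ ≤ 2 → ∀ w : RS F,
    ‖w‖ ^ M * HR 1 w σ ≤ C := by
  obtain ⟨C₀, hC₀, h₀⟩ := fR_decay (F := F) M
  have i1 := integrable_fR_pow (F := F) M 1 le_rfl
  have i2 := integrable_fR_pow (F := F) M 2 (by norm_num)
  have i3 : Integrable (fun t => C₀ * (fR F t * ‖t‖ ^ M * normR F t ^ 1 +
      fR F t * ‖t‖ ^ M * normR F t ^ 2)) (measT F) := (i1.add i2).const_mul C₀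
  set J := ∫ t, C₀ * (fR F t * ‖t‖ ^ M * normR F t ^ 1 + fR F t * ‖t‖ ^ M * normR F t ^ 2)
    ∂(measT F) with hJ
  have hJ0 : 0 ≤ J := integral_nonneg fun t => by
    have := fR_pos t; have := normR_nonneg t
    simp only [Pi.zero_apply]; positivity
  refine ⟨J + 1, by linarith, fun σ h1 h2 w => ?_⟩
  rw [HR, ← integral_const_mul]
  refine le_trans (integral_mono_ae ((integrable_HR isUnit_one w h1).const_mul _) i3 ?_)
    (by linarith)
  filter_upwards [ae_TF] with t ht
  have hf := fR_pos t
  have hn := normR_nonneg t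
  have hg := fR_pos (t⁻¹ * w)
  have hw : ‖w‖ ≤ ‖t‖ * ‖t⁻¹ * w‖ := by
    have := norm_mul_le t (t⁻¹ * w)
    rwa [← mul_assoc, unit_mul_inv ht, one_mul] at this
  have hw' : ‖w‖ ^ M ≤ ‖t‖ ^ M * ‖t⁻¹ * w‖ ^ M := by
    rw [← mul_pow]; exact pow_le_pow_left₀ (norm_nonneg _) hw _
  have hr := rpow_le_add (k := 2) hn h1 (by exact_mod_cast h2)
  have hd := h₀ (t⁻¹ * w)
  rw [mul_one, pow_one]
  exact decay_aux hf.le hg.le hn (norm_nonneg _) (norm_nonneg _) (Real.rpow_nonneg hn _) hw' hr hd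

/-! ### A majorant for the Bessel sum -/

/-- Multiplication by a unit permutes the nonzero elements of the dual ideal. -/
def unitPerm (J : (FractionalIdeal (𝓞 F)⁰ F)ˣ) (η : (𝓞 F)ˣ) : NZD J ≃ NZD J where
  toFun β := ⟨((η : 𝓞 F) : F) * β, unit_mul_dual _ _ β.2.1, mul_ne_zero (unit_ne_zero _) β.2.2⟩
  invFun β := ⟨(((η⁻¹ : (𝓞 F)ˣ) : 𝓞 F) : F) * β, unit_mul_dual _ _ β.2.1,
    mul_ne_zero (unit_ne_zero _) β.2.2⟩
  left_inv β := Subtype.ext (by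
    simp only [unit_inv_coe]; rw [inv_mul_cancel_left₀ (unit_ne_zero η)])
  right_inv β := Subtype.ext (by
    simp only [unit_inv_coe]; rw [mul_inv_cancel_left₀ (unit_ne_zero η)])

lemma majorant_aux {N C C' W E H nσ : ℝ} {n : ℕ} (hN : 0 < N)
    (hC' : 0 < C') (hE : 0 < E) (hH : 0 ≤ H)
    (h1 : W ^ (2 * n) * H ≤ C) (h2 : E ^ n ≤ C' * N⁻¹ * W ^ n)
    (h3 : nσ ≤ N⁻¹ + N⁻¹ ^ 2) :
    nσ * H ≤ (C * C' ^ 2) * ((N⁻¹ ^ 3 + N⁻¹ ^ 4) * (E ^ (2 * n))⁻¹) := by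
  have hE2 : E ^ (2 * n) ≤ C' ^ 2 * N⁻¹ ^ 2 * W ^ (2 * n) := by
    calc E ^ (2 * n) = (E ^ n) ^ 2 := by ring
      _ ≤ (C' * N⁻¹ * W ^ n) ^ 2 := by gcongr
      _ = _ := by ring
  have hH2 : H ≤ C * C' ^ 2 * N⁻¹ ^ 2 * (E ^ (2 * n))⁻¹ := by
    rw [← div_eq_mul_inv, le_div_iff₀ (by positivity)]
    calc H * E ^ (2 * n) ≤ H * (C' ^ 2 * N⁻¹ ^ 2 * W ^ (2 * n)) := by gcongr
      _ = (W ^ (2 * n) * H) * (C' ^ 2 * N⁻¹ ^ 2) := by ring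
      _ ≤ C * (C' ^ 2 * N⁻¹ ^ 2) := by gcongr
      _ = _ := by ring
  calc nσ * H ≤ (N⁻¹ + N⁻¹ ^ 2) * H := by gcongr
    _ ≤ (N⁻¹ + N⁻¹ ^ 2) * (C * C' ^ 2 * N⁻¹ ^ 2 * (E ^ (2 * n))⁻¹) := by gcongr
    _ = _ := by ring

/-- A summable majorant, uniform for `1 ≤ σ ≤ 2`, of the Bessel integrals `B(yα, β*)` over
`α` modulo units and nonzero `β*`. Balancing `yα` by units is what makes it summable. -/
theorem exists_majorant (I J : (FractionalIdeal (𝓞 F)⁰ F)ˣ) {R : Set F}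
    (hR : IsIdealRepr F (I : FractionalIdeal (𝓞 F)⁰ F) R) {y : RS F} (hy : IsUnit y) :
    ∃ B : R × NZD J → ℝ, Summable B ∧ ∀ p, ∀ σ : ℝ, 1 ≤ σ → σ ≤ 2 →
      HR (y * mixedEmbedding F (p.1 : F)) (mixedEmbedding F (p.2 : F)) σ ≤ B p := by
  obtain ⟨C, hC, hdec⟩ := HR_decay (F := F) (2 * degF F)
  obtain ⟨C', hC', hbal⟩ := exists_balanced (F := F)
  have hne : ∀ r : R, (r : F) ≠ 0 := fun r h0 => hR.2.1 (h0 ▸ r.2)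
  have hu : ∀ r : R, IsUnit (y * mixedEmbedding F (r : F)) := fun r =>
    hy.mul (isUnit_embed (hne r))
  choose η hη using fun r : R => hbal _ (isUnit_inv (hu r))
  have hs : ∀ k : ℕ, 1 < k → Summable fun r : R =>
      (normR F (y * mixedEmbedding F (r : F)))⁻¹ ^ k := by
    intro k hk
    refine ((summable_repr I hR (κ := k) (by exact_mod_cast hk)).mul_left
      ((normR F y)⁻¹ ^ k)).congr fun r => ?_
    rw [Real.rpow_neg (normR_nonneg _), Real.rpow_natCast, normR_mul, mul_inv, mul_pow, inv_pow,
      inv_pow]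
  have hd : (0 : ℝ) < degF F := by exact_mod_cast degF_pos
  have hs2 : Summable fun β : NZD J => (‖mixedEmbedding F (β : F)‖ ^ (2 * degF F))⁻¹ := by
    refine (summable_NZD J (κ := (2 * degF F : ℕ)) (by push_cast; linarith)).congr fun β => ?_
    rw [Real.rpow_neg (norm_nonneg _), Real.rpow_natCast]
  have hprod := ((hs 3 (by norm_num)).add (hs 4 (by norm_num))).mul_of_nonneg hs2
    (fun r => by
      have := normR_nonneg (y * mixedEmbedding F (r : F))
      simp only [Pi.zero_apply]; positivity)
    (fun β => by simp only [Pi.zero_apply]; positivity)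
  have hshear := ((Equiv.prodShear (Equiv.refl R) fun r => unitPerm J (η r)).summable_iff.2
    hprod).mul_left (C * C' ^ 2)
  refine ⟨_, hshear, fun p σ h1 h2 => ?_⟩
  obtain ⟨r, β⟩ := p
  simp only [Function.comp, Equiv.prodShear_apply, Equiv.refl_apply]
  rw [HR_scale (hu r)]
  have hN := normR_pos (hu r)
  have hw : (y * mixedEmbedding F (r : F)) * mixedEmbedding F (β : F) ≠ 0 :=
    ((hu r).mul (isUnit_embed β.2.2)).ne_zero
  have hE : mixedEmbedding F ((unitPerm J (η r) β : NZD J) : F) ≠ 0 :=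
    (isUnit_embed (unitPerm J (η r) β).2.2).ne_zero
  refine majorant_aux hN hC' (norm_pos_iff.2 hE) (HR_nonneg _ _ _)
    (hdec σ h1 h2 _) ?_ ?_
  · have h3 : mixedEmbedding F ((unitPerm J (η r) β : NZD J) : F) =
        (mixedEmbedding F ((η r : 𝓞 F) : F) * (y * mixedEmbedding F (r : F))⁻¹) *
          ((y * mixedEmbedding F (r : F)) * mixedEmbedding F (β : F)) := by
      have : ((unitPerm J (η r) β : NZD J) : F) = ((η r : 𝓞 F) : F) * β := rfl
      rw [this, map_mul]
      calc _ = mixedEmbedding F ((η r : 𝓞 F) : F) * (((y * mixedEmbedding F (r : F))⁻¹ *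
            (y * mixedEmbedding F (r : F))) * mixedEmbedding F (β : F)) := by
              rw [unit_inv_mul (hu r), one_mul]
        _ = _ := by ring
    rw [h3]
    refine (pow_le_pow_left₀ (norm_nonneg _) (norm_mul_le _ _) _).trans ?_
    rw [mul_pow]
    have := hη r
    rw [normR_inv (hu r)] at this
    exact mul_le_mul_of_nonneg_right this (by positivity)
  · rw [Real.rpow_neg hN.le, ← Real.inv_rpow hN.le]
    exact rpow_le_add (inv_nonneg.2 hN.le) h1 (by exact_mod_cast h2)

/-! ### The measure on `D_F` in coordinates -/

/-- The coordinates `(x, y) ↦ x + y j_F` identifying `F_ℝ × F_ℝ` with `D_F`. -/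
def coordD : (RS F × RS F) ≃ₗ[ℝ] DS F where
  toFun p := structureMap F p.1 + structureMap F p.2 * jF F
  invFun z := (projX F z, projY F z)
  map_add' p q := by simp only [Prod.fst_add, Prod.snd_add, map_add, add_mul]; abel
  map_smul' c p := by
    have h : ∀ u : RS F, structureMap F (c • u) = c • structureMap F u := fun u => by
      refine Prod.ext (funext fun v => ?_) (funext fun v => ?_)
      · simp [structureMap_fst]
      · change ((c • u.2 v : ℂ) : Quaternion ℝ) = c • ((u.2 v : ℂ) : Quaternion ℝ)
        ext <;> simp
    simp only [Prod.smul_fst, Prod.smul_snd, h, RingHom.id_apply, smul_add, smul_mul_assoc]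
  left_inv p := by
    refine Prod.ext (Prod.ext (funext fun v => ?_) (funext fun v => ?_))
      (Prod.ext (funext fun v => ?_) (funext fun v => ?_))
    · simp [projX, jF, structureMap_fst]
    · change (⟨((p.1.2 v : Quaternion ℝ) + (p.2.2 v : Quaternion ℝ) * jq).re,
        ((p.1.2 v : Quaternion ℝ) + (p.2.2 v : Quaternion ℝ) * jq).imI⟩ : ℂ) = p.1.2 v
      apply Complex.ext <;> simp [jq_re, jq_imI, jq_imJ, jq_imK]
    · simp [projY, jF, structureMap_fst]
    · change (⟨((p.1.2 v : Quaternion ℝ) + (p.2.2 v : Quaternion ℝ) * jq).imJ,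
        ((p.1.2 v : Quaternion ℝ) + (p.2.2 v : Quaternion ℝ) * jq).imK⟩ : ℂ) = p.2.2 v
      apply Complex.ext <;> simp [jq_re, jq_imI, jq_imJ, jq_imK]
  right_inv z := by
    refine Prod.ext (funext fun v => ?_) (funext fun v => ?_)
    · simp only [projX, projY, jF, Prod.fst_add, Prod.fst_mul, Pi.add_apply, Pi.mul_apply,
        structureMap_fst]
      exact Complex.re_add_im _
    · change (((⟨(z.2 v).re, (z.2 v).imI⟩ : ℂ)) : Quaternion ℝ) +
        ((⟨(z.2 v).imJ, (z.2 v).imK⟩ : ℂ) : Quaternion ℝ) * jq = z.2 v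
      ext <;> simp [jq_re, jq_imI, jq_imJ, jq_imK]

lemma coordD_apply (p : RS F × RS F) :
    coordD p = structureMap F p.1 + structureMap F p.2 * jF F := rfl

lemma coordD_symm_apply (z : DS F) : coordD.symm z = (projX F z, projY F z) := rfl

instance : SecondCountableTopology (Quaternion ℝ) :=
  Quaternion.linearIsometryEquivTuple.toHomeomorph.secondCountableTopology

instance : FiniteDimensional ℝ (DS F) := LinearEquiv.finiteDimensional (coordD (F := F))

instance : volH.IsAddHaarMeasure := by
  unfold volH
  exact Quaternion.linearIsometryEquivTuple.symm.toContinuousLinearEquiv.isAddHaarMeasure_map _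

lemma haar_four : ((4 : ENNReal) • volH).IsAddHaarMeasure :=
  Measure.IsAddHaarMeasure.smul _ (by simp) (by simp)

instance : (measD F).IsAddHaarMeasure := by
  have h4 := haar_four
  have h5 : SigmaFinite ((4 : ENNReal) • volH) := inferInstance
  have h6 : (Measure.pi fun _ : {v : InfinitePlace F // v.IsComplex} =>
    (4 : ENNReal) • volH).IsAddHaarMeasure := inferInstance
  have h7 : (Measure.pi fun _ : {v : InfinitePlace F // v.IsReal} =>
    (volume : Measure ℂ)).IsAddHaarMeasure := inferInstance
  unfold measD
  exact Measure.prod.instIsAddHaarMeasure _ _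

lemma integral_quat : ∫ q : Quaternion ℝ, Real.exp (-(2 * Real.pi) * ‖q‖ ^ 2)
    ∂((4 : ENNReal) • volH) = 1 := by
  have h1 : ∫ q : Quaternion ℝ, Real.exp (-(2 * Real.pi) * ‖q‖ ^ 2) ∂volH =
      ∫ v : EuclideanSpace ℝ (Fin 4), Real.exp (-(2 * Real.pi) * ‖v‖ ^ 2) := by
    rw [volH, show Measure.map (⇑Quaternion.linearIsometryEquivTuple.symm)
      (volume : Measure (EuclideanSpace ℝ (Fin 4))) =
      Measure.map (⇑Quaternion.linearIsometryEquivTuple.symm.toHomeomorph.toMeasurableEquiv)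
        volume from rfl, integral_map_equiv]
    refine integral_congr_ae (.of_forall fun v => ?_)
    change Real.exp (-(2 * Real.pi) * ‖Quaternion.linearIsometryEquivTuple.symm v‖ ^ 2) = _
    rw [LinearIsometryEquiv.norm_map]
  rw [integral_smul_measure, h1,
    GaussianFourier.integral_rexp_neg_mul_sq_norm (by positivity)]
  have h2 : Real.pi / (2 * Real.pi) = 1 / 2 := by
    have := Real.pi_ne_zero; field_simp
  rw [h2]
  simp only [finrank_euclideanSpace, Fintype.card_fin, ENNReal.toReal_ofNat, smul_eq_mul]
  rw [show ((4 : ℕ) : ℝ) / 2 = ((2 : ℕ) : ℝ) by norm_num, Real.rpow_natCast]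
  norm_num

lemma fD_coord (p : RS F × RS F) : fD F (coordD p) = fR F p.1 * fR F p.2 := by
  have := fR_rho 1 p.1 p.2
  rw [one_mul, one_mul, one_mul] at this
  rw [← this, coordD_apply, fR, fD, fD]
  congr 1
  · refine Finset.prod_congr rfl fun v _ => ?_
    simp only [rho, Prod.fst_add, Prod.fst_mul, Pi.add_apply, Pi.mul_apply, structureMap_fst, jF]
    rw [Complex.norm_real, Real.norm_of_nonneg (Real.sqrt_nonneg _), Complex.norm_add_mul_I]
  · refine Finset.prod_congr rfl fun v _ => ?_
    rw [structureMap_snd, norm_coeComplex]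
    change Real.exp (-(2 * Real.pi) *
      ‖(p.1.2 v : Quaternion ℝ) + (p.2.2 v : Quaternion ℝ) * jq‖ ^ 2) =
      Real.exp (-(2 * Real.pi) *
        ‖((Real.sqrt (‖p.1.2 v‖ ^ 2 + ‖p.2.2 v‖ ^ 2) : ℝ) : ℂ)‖ ^ 2)
    rw [norm_ofComplex_add, Complex.norm_real]
    rw [Real.norm_of_nonneg (Real.sqrt_nonneg _)]

/-- Both Gaussians have total mass `1`, which is what fixes the factors `2` and `4` in the
measures. -/
lemma integral_fD : ∫ z, fD F z ∂(measD F) = 1 := by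
  have h4 := haar_four
  unfold measD fD
  rw [integral_prod_mul (fun u : {v : InfinitePlace F // v.IsReal} → ℂ =>
      ∏ v, Real.exp (-(Real.pi) * ‖u v‖ ^ 2))
    (fun u : {v : InfinitePlace F // v.IsComplex} → Quaternion ℝ =>
      ∏ v, Real.exp (-(2 * Real.pi) * ‖u v‖ ^ 2)),
    integral_fintype_prod_eq_prod (𝕜 := ℝ) (fun _ => (fun q : ℂ =>
      Real.exp (-(Real.pi) * ‖q‖ ^ 2))),
    integral_fintype_prod_eq_prod (𝕜 := ℝ) (fun _ => (fun q : Quaternion ℝ =>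
      Real.exp (-(2 * Real.pi) * ‖q‖ ^ 2)))]
  rw [integral_quat, GaussianFourier.integral_rexp_neg_mul_sq_norm Real.pi_pos]
  simp

lemma integral_fR : ∫ w, fR F w ∂(measR F) = 1 := by
  have h := fourier_fR (F := F) 0
  have h0 : fR F (0 : RS F) = 1 := by rw [fR_eq]; simp [QR]
  have h1 : ee 0 = 1 := by simpa using ee_int 0
  have h2 : TrR F (0 : RS F) = 0 := by simp [TrR]
  simp only [mul_zero, h0, h2, h1, mul_one] at h
  have h3 : ∫ w, ((fR F w : ℝ) : ℂ) ∂(measR F) = ((∫ w, fR F w ∂(measR F) : ℝ) : ℂ) :=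
    integral_ofReal
  rw [h3] at h
  exact_mod_cast h

/-- The coordinates `x + y j_F` carry the product measure on `F_ℝ × F_ℝ` to the measure
on `D_F`. -/
theorem map_coordD : ((measR F).prod (measR F)).map coordD = measD F := by
  set e : (RS F × RS F) ≃L[ℝ] DS F := (coordD (F := F)).toContinuousLinearEquiv with he
  have hP : ((measR F).prod (measR F)).IsAddHaarMeasure :=
    Measure.prod.instIsAddHaarMeasure _ _
  have hH : (((measR F).prod (measR F)).map e).IsAddHaarMeasure := e.isAddHaarMeasure_map _
  have hc := Measure.isAddLeftInvariant_eq_smul (((measR F).prod (measR F)).map e) (measD F)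
  set c := Measure.addHaarScalarFactor (((measR F).prod (measR F)).map e) (measD F) with hcd
  have h1 : ∫ z, fD F z ∂(((measR F).prod (measR F)).map e) = 1 := by
    rw [show Measure.map (⇑e) ((measR F).prod (measR F)) =
      Measure.map (⇑e.toHomeomorph.toMeasurableEquiv) ((measR F).prod (measR F)) from rfl,
      integral_map_equiv]
    have : ∀ p : RS F × RS F, fD F (e.toHomeomorph.toMeasurableEquiv p) =
        fR F p.1 * fR F p.2 := fun p => fD_coord p
    simp only [this]
    rw [integral_prod_mul (fun u => fR F u) (fun u => fR F u), integral_fR, one_mul]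
  rw [hc, integral_smul_nnreal_measure, integral_fD] at h1
  have hc1 : c = 1 := by
    rw [NNReal.smul_def, smul_eq_mul, mul_one] at h1
    exact_mod_cast h1
  change ((measR F).prod (measR F)).map e = measD F
  rw [hc, hc1, one_smul]

/-! ### The covolume of `𝔞z + 𝔟` -/

/-- The standard fundamental domain of a fractional ideal in `F_ℝ`. -/
def FD (I : (FractionalIdeal (𝓞 F)⁰ F)ˣ) : Set (RS F) :=
  ZSpan.fundamentalDomain (mixedEmbedding.fractionalIdealLatticeBasis F I)

lemma measurableSet_FD (I : (FractionalIdeal (𝓞 F)⁰ F)ˣ) : MeasurableSet (FD I) :=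
  ZSpan.fundamentalDomain_measurableSet _

lemma FD_existsUnique (I : (FractionalIdeal (𝓞 F)⁰ F)ˣ) (v : RS F) :
    ∃! α : F, α ∈ (I : FractionalIdeal (𝓞 F)⁰ F) ∧ mixedEmbedding F α + v ∈ FD I := by
  obtain ⟨⟨w, hw⟩, h1, h2⟩ := ZSpan.exist_unique_vadd_mem_fundamentalDomain
    (mixedEmbedding.fractionalIdealLatticeBasis F I) v
  obtain ⟨α, hα, rfl⟩ := (mixedEmbedding.mem_span_fractionalIdealLatticeBasis F I).1 hw
  refine ⟨α, ⟨hα, h1⟩, fun β hβ => ?_⟩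
  have := h2 ⟨mixedEmbedding F β,
    (mixedEmbedding.mem_span_fractionalIdealLatticeBasis F I).2 ⟨β, hβ.1, rfl⟩⟩ hβ.2
  exact mixedEmbedding_injective F (congrArg Subtype.val this)

lemma lat_coord (α β : F) (x y : RS F) :
    FtoD F α * (structureMap F x + structureMap F y * jF F) + FtoD F β =
      coordD (mixedEmbedding F α * x + mixedEmbedding F β, mixedEmbedding F α * y) := by
  rw [coordD_apply]
  simp only [FtoD, RingHom.comp_apply, map_add, map_mul]
  rw [mul_add, ← mul_assoc]; abel

/-- A fundamental domain of `𝔞(x + y j) + 𝔟`, in coordinates. -/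
def FDpair (I J : (FractionalIdeal (𝓞 F)⁰ F)ˣ) (x y : RS F) : Set (RS F × RS F) :=
  {p | p.2 * y⁻¹ ∈ FD I ∧ p.1 - p.2 * y⁻¹ * x ∈ FD J}

lemma measurableSet_FDpair (I J : (FractionalIdeal (𝓞 F)⁰ F)ˣ) (x y : RS F) :
    MeasurableSet (FDpair I J x y) := by
  refine MeasurableSet.inter ?_ ?_
  · exact (measurableSet_FD I).preimage
      (continuous_snd.mul continuous_const : Continuous fun p : RS F × RS F =>
        p.2 * y⁻¹).measurable
  · exact (measurableSet_FD J).preimage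
      (continuous_fst.sub ((continuous_snd.mul continuous_const).mul continuous_const) :
        Continuous fun p : RS F × RS F => p.1 - p.2 * y⁻¹ * x).measurable

lemma measure_FDpair (I J : (FractionalIdeal (𝓞 F)⁰ F)ˣ) (x : RS F) {y : RS F} (hy : IsUnit y) :
    ((measR F).prod (measR F)) (FDpair I J x y) =
      ENNReal.ofReal (VI I * VI J * normR F y) := by
  rw [Measure.prod_apply_symm (measurableSet_FDpair I J x y)]
  have h1 : ∀ w : RS F, measR F ((fun u => (u, w)) ⁻¹' FDpair I J x y) =
      ((fun w => y⁻¹ * w) ⁻¹' FD I).indicator (fun _ => ENNReal.ofReal (VI J)) w := by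
    intro w
    by_cases hw : w * y⁻¹ ∈ FD I
    · have h2 : ((fun u => (u, w)) ⁻¹' FDpair I J x y) =
          (fun u => u + (-(w * y⁻¹ * x))) ⁻¹' FD J := by
        ext u; simp [FDpair, hw, sub_eq_add_neg]
      have h3 : w ∈ ((fun w => y⁻¹ * w) ⁻¹' FD I) := by
        rw [Set.mem_preimage, mul_comm]; exact hw
      rw [h2, measure_preimage_add_right, Set.indicator_of_mem h3]
      exact measR_FD J
    · have h2 : ((fun u => (u, w)) ⁻¹' FDpair I J x y) = ∅ := by
        ext u; simp [FDpair, hw]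
      have h3 : w ∉ ((fun w => y⁻¹ * w) ⁻¹' FD I) := by
        rw [Set.mem_preimage, mul_comm]; exact hw
      rw [h2, Set.indicator_of_notMem h3, measure_empty]
  simp only [h1]
  have hm : Measurable fun w : RS F => y⁻¹ * w := (continuous_const.mul continuous_id).measurable
  rw [lintegral_indicator_const ((measurableSet_FD I).preimage hm)]
  have h4 := congrArg (fun μ => μ (FD I)) (map_mul_measR (isUnit_inv hy))
  rw [MeasurableEquiv.map_apply, Measure.smul_apply, smul_eq_mul, normR_inv hy, inv_inv] at h4
  have h5 : measR F ((fun w => y⁻¹ * w) ⁻¹' FD I) = ENNReal.ofReal (normR F y) * measR F (FD I) :=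
    h4
  rw [h5, show measR F (FD I) = _ from measR_FD I, ← ENNReal.ofReal_mul (normR_nonneg y),
    ← ENNReal.ofReal_mul (VI_pos J).le]
  congr 1; ring

/-- The covolume of `𝔞(x + y j) + 𝔟` is `V(𝔞) V(𝔟) |N(y)|`. -/
theorem hasVol_eq (I J : (FractionalIdeal (𝓞 F)⁰ F)ˣ) (x : RS F) {y : RS F} (hy : IsUnit y)
    {V : ℝ} (hV0 : 0 ≤ V) (hV : HasVol F (latAB F I J
      (structureMap F x + structureMap F y * jF F)) V) : V = VI I * VI J * normR F y := by
  obtain ⟨s, hs, hsV⟩ := hV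
  set Λ := latAB F (I : FractionalIdeal (𝓞 F)⁰ F) (J : FractionalIdeal (𝓞 F)⁰ F)
    (structureMap F x + structureMap F y * jF F) with hΛ
  set e : (RS F × RS F) ≃L[ℝ] DS F := (coordD (F := F)).toContinuousLinearEquiv with he
  have hmp : Measure.map (⇑e.toHomeomorph.toMeasurableEquiv) ((measR F).prod (measR F)) =
    measD F := map_coordD
  have hmS : MeasurableSet (e.symm ⁻¹' FDpair I J x y) :=
    (measurableSet_FDpair I J x y).preimage e.symm.continuous.measurable
  have hS : measD F (e.symm ⁻¹' FDpair I J x y) = ENNReal.ofReal (VI I * VI J * normR F y) := by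
    rw [← hmp, MeasurableEquiv.map_apply, ← measure_FDpair I J x hy]
    congr 1
    ext p
    change e.symm (e p) ∈ FDpair I J x y ↔ _
    rw [e.symm_apply_apply]
  have hc : Countable Λ := by
    have hc1 : ∀ K : (FractionalIdeal (𝓞 F)⁰ F)ˣ,
        Countable {β : F // β ∈ (K : FractionalIdeal (𝓞 F)⁰ F)} := fun K =>
      (idealEquiv K).symm.injective.countable
    have := hc1 I
    have := hc1 J
    refine Function.Surjective.countable
      (f := fun p : {β : F // β ∈ (I : FractionalIdeal (𝓞 F)⁰ F)} ×
        {β : F // β ∈ (J : FractionalIdeal (𝓞 F)⁰ F)} =>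
        (⟨_, p.1, p.1.2, p.2, p.2.2, rfl⟩ : Λ)) ?_
    rintro ⟨w, α, hα, β, hβ, rfl⟩
    exact ⟨(⟨α, hα⟩, ⟨β, hβ⟩), rfl⟩
  have key : ∀ (α β : F) (w : DS F), (FtoD F α * (structureMap F x + structureMap F y * jF F) +
      FtoD F β) + w ∈ e.symm ⁻¹' FDpair I J x y ↔
      mixedEmbedding F α + (e.symm w).2 * y⁻¹ ∈ FD I ∧
      mixedEmbedding F β + ((e.symm w).1 - (e.symm w).2 * y⁻¹ * x) ∈ FD J := by
    intro α β w
    rw [lat_coord, Set.mem_preimage, map_add]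
    have : e.symm (coordD (mixedEmbedding F α * x + mixedEmbedding F β, mixedEmbedding F α * y)) =
      (mixedEmbedding F α * x + mixedEmbedding F β, mixedEmbedding F α * y) :=
      e.symm_apply_apply _
    rw [this]
    have h1 : (mixedEmbedding F α * y + (e.symm w).2) * y⁻¹ =
        mixedEmbedding F α + (e.symm w).2 * y⁻¹ := by
      rw [add_mul, mul_assoc, unit_mul_inv hy, mul_one]
    have h2 : mixedEmbedding F α * x + mixedEmbedding F β + (e.symm w).1 -
        (mixedEmbedding F α * y + (e.symm w).2) * y⁻¹ * x =
        mixedEmbedding F β + ((e.symm w).1 - (e.symm w).2 * y⁻¹ * x) := by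
      rw [h1]; ring
    simp only [FDpair, Set.mem_ofPred_eq, Prod.fst_add, Prod.snd_add]
    rw [h1, ← h2, h1]
  have hfd : IsAddFundamentalDomain Λ (e.symm ⁻¹' FDpair I J x y) (measD F) := by
    refine IsAddFundamentalDomain.mk' hmS.nullMeasurableSet fun w => ?_
    obtain ⟨α, ⟨hα, hα1⟩, hα2⟩ := FD_existsUnique I ((e.symm w).2 * y⁻¹)
    obtain ⟨β, ⟨hβ, hβ1⟩, hβ2⟩ := FD_existsUnique J
      ((e.symm w).1 - (e.symm w).2 * y⁻¹ * x)
    refine ⟨⟨_, α, hα, β, hβ, rfl⟩, (key α β w).2 ⟨hα1, hβ1⟩, ?_⟩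
    rintro ⟨l, α', hα', β', hβ', rfl⟩ hl
    have h := (key α' β' w).1 hl
    have e1 := hα2 α' ⟨hα', h.1⟩
    have e2 := hβ2 β' ⟨hβ', h.2⟩
    subst e1 e2; rfl
  have hinv : VAddInvariantMeasure Λ (DS F) (measD F) := by
    refine ⟨fun c t ht => ?_⟩
    change measD F ((fun w => (c : DS F) + w) ⁻¹' t) = _
    rw [measure_preimage_add]
  have hfin := hs.measure_eq hfd
  rw [hsV, hS] at hfin
  have hN := normR_nonneg y
  have h1 := VI_pos I
  have h2 := VI_pos J
  exact (ENNReal.ofReal_eq_ofReal_iff hV0 (by positivity)).1 hfin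

/-! ### Unfolding and Poisson summation under the integral -/

/-- Two complete systems of representatives of the same relation are in bijection, compatibly
with the relation. -/
lemma repr_equiv {X R R' : Type*} (s : Setoid X) (i : R → X) (i' : R' → X)
    (h : ∀ x, ∃! r, s (i r) x) (h' : ∀ x, ∃! r, s (i' r) x) :
    ∃ e : R ≃ R', ∀ r, s (i r) (i' (e r)) := by
  choose f hf hf' using fun r => h' (i r)
  choose g hg hg' using fun r => h (i' r)
  refine ⟨⟨f, g, fun r => ?_, fun r => ?_⟩, fun r => s.symm (hf r)⟩
  · exact (h (i r)).unique (s.trans (hg (f r)) (hf r)) (s.refl _)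
  · exact (h' (i' r)).unique (s.trans (hf (g r)) (hg r)) (s.refl _)

/-- Interchange of a sum of nonnegative functions with an integral, when the sum is pointwise
rewritten (as by Poisson summation) as an absolutely integrable series. -/
lemma hasSum_integral_of_rewrite {α ι κ : Type*} [MeasurableSpace α] {μ : Measure α}
    [Countable ι] [Countable κ] {g : ι → α → ℝ} {h : κ → α → ℂ}
    (hg : ∀ i, Integrable (g i) μ) (hg0 : ∀ i t, 0 ≤ g i t)
    (hh : ∀ j, Integrable (h j) μ) (hs : Summable fun j => ∫ t, ‖h j t‖ ∂μ)
    (hgs : ∀ᵐ t ∂μ, Summable fun i => g i t)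
    (he : ∀ᵐ t ∂μ, ((∑' i, g i t : ℝ) : ℂ) = ∑' j, h j t) :
    ∃ S : ℝ, HasSum (fun i => ∫ t, g i t ∂μ) S ∧ (S : ℂ) = ∑' j, ∫ t, h j t ∂μ := by
  have hfin : ∑' j, ∫⁻ t, ‖h j t‖ₑ ∂μ ≠ ⊤ := by
    have (j : κ) : ∫⁻ t, ‖h j t‖ₑ ∂μ = ENNReal.ofReal (∫ t, ‖h j t‖ ∂μ) := by
      rw [ofReal_integral_norm_eq_lintegral_enorm (hh j)]
    simp_rw [this]
    rw [← ENNReal.ofReal_tsum_of_nonneg (fun j => integral_nonneg fun t => norm_nonneg _) hs]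
    exact ENNReal.ofReal_ne_top
  have hsum : Summable fun i => ∫ t, ‖g i t‖ ∂μ := by
    refine summable_of_sum_le (c := (∑' j, ∫⁻ t, ‖h j t‖ₑ ∂μ).toReal)
      (fun i => integral_nonneg fun t => norm_nonneg _) fun u => ?_
    rw [← integral_finsetSum _ fun i _ => (hg i).norm,
      ← ENNReal.ofReal_le_iff_le_toReal hfin]
    rw [ofReal_integral_eq_lintegral_ofReal (integrable_finsetSum _ fun i _ => (hg i).norm)
      (.of_forall fun t => Finset.sum_nonneg fun i _ => norm_nonneg _),
      ← lintegral_tsum fun j => (hh j).aestronglyMeasurable.enorm]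
    refine lintegral_mono_ae ?_
    filter_upwards [hgs, he] with t h1 h2
    have h3 : ∑ i ∈ u, ‖g i t‖ ≤ ∑' i, g i t := by
      refine (Finset.sum_le_sum fun i _ => (Real.norm_of_nonneg (hg0 i t)).le).trans ?_
      exact h1.sum_le_tsum u fun i _ => hg0 i t
    refine (ENNReal.ofReal_le_ofReal h3).trans ?_
    have h4 : ENNReal.ofReal (∑' i, g i t) = ‖∑' j, h j t‖ₑ := by
      rw [← h2, ← ofReal_norm, Complex.norm_real,
        Real.norm_of_nonneg (tsum_nonneg fun i => hg0 i t)]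
    rw [h4]
    exact enorm_tsum_le_tsum_enorm
  refine ⟨_, hasSum_integral_of_summable_integral_norm hg hsum, ?_⟩
  rw [(hasSum_integral_of_summable_integral_norm hh hs).tsum_eq, ← integral_congr_ae he]
  exact integral_ofReal.symm

instance (J : (FractionalIdeal (𝓞 F)⁰ F)ˣ) :
    Countable {β : F // β ∈ (J : FractionalIdeal (𝓞 F)⁰ F)} :=
  (idealEquiv J).symm.injective.countable

instance (J : (FractionalIdeal (𝓞 F)⁰ F)ˣ) :
    Countable (dualIdealSet F (J : FractionalIdeal (𝓞 F)⁰ F)) :=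
  (dualEquiv J).symm.injective.countable

/-- Poisson summation over `𝔟` under the integral sign. -/
theorem unfold_row (J : (FractionalIdeal (𝓞 F)⁰ F)ˣ) (c : RS F) {u : RS F} (hu : IsUnit u)
    {σ : ℝ} (hσ : 2 ≤ σ)
    (hS : Summable fun β : dualIdealSet F (J : FractionalIdeal (𝓞 F)⁰ F) =>
      HR u (mixedEmbedding F (β : F)) (σ - 1)) :
    ∃ S : ℝ, HasSum (fun β : {β : F // β ∈ (J : FractionalIdeal (𝓞 F)⁰ F)} =>
      normD F (structureMap F (c + mixedEmbedding F (β : F)) + structureMap F u * jF F) ^ (-σ) *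
        Gr F σ) S ∧
      (S : ℂ) = ((VI J)⁻¹ : ℝ) * ∑' β : dualIdealSet F (J : FractionalIdeal (𝓞 F)⁰ F),
        ee (TrR F (c * mixedEmbedding F (β : F))) * HR u (mixedEmbedding F (β : F)) (σ - 1) := by
  have h1 : 1 ≤ σ - 1 := by linarith
  refine Exists.imp ?_ (hasSum_integral_of_rewrite (μ := measT F)
    (g := fun (β : {β : F // β ∈ (J : FractionalIdeal (𝓞 F)⁰ F)}) t =>
      fR F (t * (c + mixedEmbedding F (β : F))) * fR F (t * u) * normR F t ^ σ)
    (h := fun (β : dualIdealSet F (J : FractionalIdeal (𝓞 F)⁰ F)) t =>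
      ((((VI J)⁻¹ : ℝ) : ℂ) * ee (TrR F (c * mixedEmbedding F (β : F)))) *
        ((fR F (t * u) * fR F (t⁻¹ * mixedEmbedding F (β : F)) * normR F t ^ (σ - 1) : ℝ) : ℂ))
    ?_ ?_ ?_ ?_ ?_ ?_)
  · rintro S ⟨hS1, hS2⟩
    refine ⟨?_, ?_⟩
    · simpa only [integral_pair (Or.inr hu) σ] using hS1
    · rw [hS2, ← tsum_mul_left]
      refine tsum_congr fun β => ?_
      rw [integral_const_mul, HR, mul_assoc]
      congr 2
      exact integral_ofReal
  · intro β
    refine (integrable_fR_scale hu (by linarith : 1 ≤ σ)).mono' ?_ (.of_forall fun t => ?_)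
    · exact (((continuous_fR.comp (continuous_id.mul continuous_const)).measurable.mul
        (continuous_fR.comp (continuous_id.mul continuous_const)).measurable).mul
        (measurable_normR.pow_const σ)).aestronglyMeasurable
    · have hf := fR_pos (t * u)
      have hg := fR_pos (t * (c + mixedEmbedding F (β : F)))
      have hn := Real.rpow_nonneg (normR_nonneg t) σ
      rw [Real.norm_of_nonneg (mul_nonneg (mul_nonneg hg.le hf.le) hn)]
      exact mul_le_mul_of_nonneg_right (mul_le_of_le_one_left hf.le (fR_le_one _)) hn
  · exact fun β t => mul_nonneg (mul_nonneg (fR_pos _).le (fR_pos _).le)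
      (Real.rpow_nonneg (normR_nonneg t) _)
  · exact fun β => ((integrable_HR hu _ h1).ofReal).const_mul _
  · refine (hS.mul_left (VI J)⁻¹).congr fun β => ?_
    rw [HR, ← integral_const_mul]
    refine integral_congr_ae (.of_forall fun t => ?_)
    simp only
    rw [norm_mul, norm_mul, norm_ee, mul_one, Complex.norm_real, Complex.norm_real,
      Real.norm_of_nonneg (inv_nonneg.2 (VI_pos J).le), Real.norm_of_nonneg]
    exact mul_nonneg (mul_nonneg (fR_pos _).le (fR_pos _).le)
      (Real.rpow_nonneg (normR_nonneg t) _)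
  · filter_upwards [ae_TF] with t ht
    exact ((summable_ideal_gauss J ht c).mul_right (fR F (t * u))).mul_right _
  · filter_upwards [ae_TF] with t ht
    rw [tsum_mul_right, tsum_mul_right, Complex.ofReal_mul, Complex.ofReal_mul,
      poisson_ideal J ht c, ← tsum_mul_left, ← tsum_mul_right, ← tsum_mul_right]
    refine tsum_congr fun β => ?_
    have hn := normR_pos ht
    have hp : normR F t ^ σ = normR F t * normR F t ^ (σ - 1) := by
      rw [Real.rpow_sub_one hn.ne']; field_simp
    rw [hp, mul_inv]
    push_cast
    have hn' : ((normR F t : ℝ) : ℂ) ≠ 0 := by exact_mod_cast hn.ne'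
    field_simp

/-! ### Orbits of units in `𝔞z + 𝔟` -/

lemma normD_mul (z w : DS F) : normD F (z * w) = normD F z * normD F w := by
  simp only [normD, Prod.fst_mul, Prod.snd_mul, Pi.mul_apply, norm_mul, mul_pow,
    Finset.prod_mul_distrib]
  ring

lemma normD_structureMap (x : RS F) : normD F (structureMap F x) = normR F x := by
  simp only [normD, normR, structureMap_fst, structureMap_snd, norm_coeComplex, Complex.norm_real,
    Real.norm_eq_abs]

lemma normD_unit (ε : (𝓞 F)ˣ) : normD F (FtoD F ((ε : 𝓞 F) : F)) = 1 := by
  rw [FtoD, RingHom.comp_apply, normD_structureMap, normR_unit]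

/-- Orbits of units on the nonzero elements of a subgroup `Λ` of `D_F`. -/
def unitSetoid (Λ : AddSubgroup (DS F)) : Setoid {l : DS F // l ∈ Λ ∧ l ≠ 0} where
  r l m := ∃ ε : (𝓞 F)ˣ, FtoD F ((ε : 𝓞 F) : F) * (l : DS F) = m
  iseqv := by
    refine ⟨fun l => ⟨1, by simp⟩, ?_, ?_⟩
    · rintro l m ⟨ε, h⟩
      refine ⟨ε⁻¹, ?_⟩
      rw [← h, ← mul_assoc, ← map_mul, unit_inv_coe, inv_mul_cancel₀ (unit_ne_zero ε), map_one,
        one_mul]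
    · rintro l m n ⟨ε, h⟩ ⟨η, h'⟩
      refine ⟨η * ε, ?_⟩
      rw [← h', ← h, ← mul_assoc, ← map_mul]
      simp

/-- The lattice element attached to an index `β ∈ 𝔟/U` or `(α, β) ∈ 𝔞/U × 𝔟`. -/
def latElt {Ra Rb : Set F} (J : (FractionalIdeal (𝓞 F)⁰ F)ˣ) (z : DS F) :
    Rb ⊕ (Ra × {β : F // β ∈ (J : FractionalIdeal (𝓞 F)⁰ F)}) → DS F :=
  Sum.elim (fun β => FtoD F (β : F)) (fun p => FtoD F (p.1 : F) * z + FtoD F (p.2 : F))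

/-- Elements `αz + β` have unique coordinates `(α, β)`, since `y` is invertible. -/
lemma lat_inj {x y : RS F} (hy : IsUnit y) {α β α' β' : F}
    (h : FtoD F α * (structureMap F x + structureMap F y * jF F) + FtoD F β =
      FtoD F α' * (structureMap F x + structureMap F y * jF F) + FtoD F β') :
    α = α' ∧ β = β' := by
  rw [lat_coord, lat_coord] at h
  have h1 := coordD.injective h
  rw [Prod.mk.injEq] at h1
  have h2 : α = α' := mixedEmbedding_injective F (hy.mul_right_cancel h1.2)
  subst h2
  exact ⟨rfl, mixedEmbedding_injective F (add_left_cancel h1.1)⟩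

/-- The orbits in `Λ = 𝔞z + 𝔟` are the orbits in `𝔟`, together with the elements `αz + β`
where `α` runs over the orbits in `𝔞` and `β` over all of `𝔟`. -/
theorem lattice_equiv (I J : (FractionalIdeal (𝓞 F)⁰ F)ˣ) {x y : RS F} (hy : IsUnit y) {z : DS F}
    (hz : z = structureMap F x + structureMap F y * jF F) {R : Set (DS F)}
    (hR : IsRepr F (latAB F I J z) R) {Ra Rb : Set F}
    (hRa : IsIdealRepr F (I : FractionalIdeal (𝓞 F)⁰ F) Ra)
    (hRb : IsIdealRepr F (J : FractionalIdeal (𝓞 F)⁰ F) Rb) :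
    ∃ e : R ≃ Rb ⊕ (Ra × {β : F // β ∈ (J : FractionalIdeal (𝓞 F)⁰ F)}),
      ∀ r : R, normD F (r : DS F) = normD F (latElt J z (e r)) := by
  subst hz
  set z := structureMap F x + structureMap F y * jF F with hz
  have inj : ∀ {α β α' β' : F}, FtoD F α * z + FtoD F β = FtoD F α' * z + FtoD F β' →
    α = α' ∧ β = β' := fun h => lat_inj hy h
  have hRa0 : ∀ r : Ra, (r : F) ≠ 0 := fun r h0 => hRa.2.1 (h0 ▸ r.2)
  have hRb0 : ∀ r : Rb, (r : F) ≠ 0 := fun r h0 => hRb.2.1 (h0 ▸ r.2)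
  have hm : ∀ t : Rb ⊕ (Ra × {β : F // β ∈ (J : FractionalIdeal (𝓞 F)⁰ F)}),
      latElt J z t ∈ latAB F I J z ∧ latElt J z t ≠ 0 := by
    rintro (β | ⟨α, β⟩)
    · have h1 : latElt (Ra := Ra) J z (Sum.inl β) = FtoD F 0 * z + FtoD F (β : F) := by
        simp [latElt]
      refine ⟨⟨0, Submodule.zero_mem _, β, hRb.1 _ β.2, h1⟩, fun h0 => ?_⟩
      rw [h1] at h0
      exact hRb0 β (inj (h0.trans (by simp : (0 : DS F) = FtoD F 0 * z + FtoD F 0))).2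
    · refine ⟨⟨α, hRa.1 _ α.2, β, β.2, rfl⟩, fun h0 => ?_⟩
      exact hRa0 α (inj (Eq.trans h0 (by simp : (0 : DS F) = FtoD F 0 * z + FtoD F 0))).1
  refine Exists.imp ?_ (repr_equiv (unitSetoid (latAB F I J z))
    (fun r : R => ⟨r, hR.1 _ r.2, fun h0 => hR.2.1 (h0 ▸ r.2)⟩)
    (fun t => ⟨latElt J z t, hm t⟩) ?_ ?_)
  · intro e he r
    obtain ⟨ε, h⟩ := he r
    simp only at h
    rw [← h, normD_mul, normD_unit, one_mul]
  · rintro ⟨l, hl, hl0⟩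
    obtain ⟨r, ⟨hr, ε, h1⟩, h2⟩ := hR.2.2 l hl hl0
    exact ⟨⟨r, hr⟩, ⟨ε, h1⟩, fun r' hr' => Subtype.ext (h2 r' ⟨r'.2, hr'⟩)⟩
  · rintro ⟨l, ⟨α, hα, β, hβ, rfl⟩, hl0⟩
    have hmul : ∀ (ε : (𝓞 F)ˣ) (α β : F), FtoD F ((ε : 𝓞 F) : F) * (FtoD F α * z + FtoD F β) =
        FtoD F (((ε : 𝓞 F) : F) * α) * z + FtoD F (((ε : 𝓞 F) : F) * β) := by
      intro ε α β
      rw [mul_add, ← mul_assoc, ← map_mul, ← map_mul]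
    have hinl : ∀ β : Rb, latElt (Ra := Ra) J z (Sum.inl β) = FtoD F 0 * z + FtoD F (β : F) :=
      fun β => by simp [latElt]
    by_cases hα0 : α = 0
    · subst hα0
      have hβ0 : β ≠ 0 := by rintro rfl; exact hl0 (by simp)
      obtain ⟨r, ⟨hr, ε, h1⟩, h2⟩ := hRb.2.2 β hβ hβ0
      refine ⟨Sum.inl ⟨r, hr⟩, ⟨ε, ?_⟩, ?_⟩
      · simp only [hinl, hmul, mul_zero, h1]
      · rintro (r' | ⟨α', β'⟩) ⟨η, h⟩
        · simp only [hinl, hmul] at h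
          exact congrArg Sum.inl (Subtype.ext (h2 r' ⟨r'.2, η, (inj h).2⟩))
        · have h3 : FtoD F ((η : 𝓞 F) : F) * (FtoD F (α' : F) * z + FtoD F (β' : F)) =
            FtoD F 0 * z + FtoD F β := h
          rw [hmul] at h3
          exact absurd (inj h3).1 (mul_ne_zero (unit_ne_zero η) (hRa0 α'))
    · obtain ⟨r, ⟨hr, ε, h1⟩, h2⟩ := hRa.2.2 α hα hα0
      refine ⟨Sum.inr (⟨r, hr⟩, ⟨((ε⁻¹ : (𝓞 F)ˣ) : 𝓞 F) * β, unit_mul_mem _ _ hβ⟩), ⟨ε, ?_⟩, ?_⟩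
      · have h3 : FtoD F ((ε : 𝓞 F) : F) * (FtoD F r * z +
            FtoD F ((((ε⁻¹ : (𝓞 F)ˣ) : 𝓞 F) : F) * β)) = FtoD F α * z + FtoD F β := by
          rw [hmul, h1, unit_inv_coe, mul_inv_cancel_left₀ (unit_ne_zero ε)]
        exact h3
      · rintro (r' | ⟨α', β'⟩) ⟨η, h⟩
        · simp only [hinl, hmul, mul_zero] at h
          exact absurd (inj h).1.symm hα0
        · have h3 : FtoD F ((η : 𝓞 F) : F) * (FtoD F (α' : F) * z + FtoD F (β' : F)) =
            FtoD F α * z + FtoD F β := h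
          rw [hmul] at h3
          obtain ⟨h4, h5⟩ := inj h3
          have h6 := h2 α' ⟨α'.2, η, h4⟩
          have h7 : ((η : 𝓞 F) : F) = ((ε : 𝓞 F) : F) := by
            have h8 : ((η : 𝓞 F) : F) * r = ((ε : 𝓞 F) : F) * r := by rw [h1, ← h6, h4]
            exact mul_right_cancel₀ (hRa0 ⟨r, hr⟩) h8
          congr 1
          refine Prod.ext (Subtype.ext h6) (Subtype.ext ?_)
          change (β' : F) = (((ε⁻¹ : (𝓞 F)ˣ) : 𝓞 F) : F) * β
          rw [← h5, h7, unit_inv_coe, inv_mul_cancel_left₀ (unit_ne_zero ε)]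

/-- The pairs `(α, β*)` modulo units correspond to `α` modulo units and `β*` arbitrary. -/
theorem pair_equiv (I J : (FractionalIdeal (𝓞 F)⁰ F)ˣ) {P : Set (F × F)}
    (hP : IsPairRepr F (I : FractionalIdeal (𝓞 F)⁰ F) (J : FractionalIdeal (𝓞 F)⁰ F) P)
    {Ra : Set F} (hRa : IsIdealRepr F (I : FractionalIdeal (𝓞 F)⁰ F) Ra) :
    ∃ e : P ≃ Ra × NZD J, ∀ p : P, ∃ ε : (𝓞 F)ˣ,
      ((e p).1 : F) = (p : F × F).1 * ((ε : 𝓞 F) : F) ∧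
      ((e p).2 : F) = (p : F × F).2 * (((ε⁻¹ : (𝓞 F)ˣ) : 𝓞 F) : F) := by
  have hRa0 : ∀ r : Ra, (r : F) ≠ 0 := fun r h0 => hRa.2.1 (h0 ▸ r.2)
  let s : Setoid {p : F × F // (p.1 ∈ (I : FractionalIdeal (𝓞 F)⁰ F) ∧ p.1 ≠ 0) ∧
      p.2 ∈ dualIdealSet F (J : FractionalIdeal (𝓞 F)⁰ F) ∧ p.2 ≠ 0} :=
    { r := fun p q => ∃ ε : (𝓞 F)ˣ, q.1.1 = p.1.1 * ((ε : 𝓞 F) : F) ∧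
        q.1.2 = p.1.2 * (((ε⁻¹ : (𝓞 F)ˣ) : 𝓞 F) : F)
      iseqv := by
        refine ⟨fun p => ⟨1, by simp, by simp⟩, ?_, ?_⟩
        · rintro p q ⟨ε, h1, h2⟩
          refine ⟨ε⁻¹, ?_, ?_⟩
          · rw [h1, unit_inv_coe, mul_inv_cancel_right₀ (unit_ne_zero ε)]
          · rw [h2, inv_inv, unit_inv_coe, inv_mul_cancel_right₀ (unit_ne_zero ε)]
        · rintro p q r ⟨ε, h1, h2⟩ ⟨η, h3, h4⟩
          refine ⟨ε * η, ?_, ?_⟩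
          · rw [h3, h1, mul_assoc]; simp
          · rw [h4, h2, mul_assoc]; simp [mul_comm] }
  refine Exists.imp ?_ (repr_equiv s
    (fun p : P => ⟨p, ⟨(hP.1 p p.2).1, (hP.1 p p.2).2.1⟩, (hP.1 p p.2).2.2⟩)
    (fun t : Ra × NZD J => ⟨((t.1 : F), (t.2 : F)), ⟨hRa.1 _ t.1.2, hRa0 t.1⟩, t.2.2⟩) ?_ ?_)
  · exact fun e he => he
  · rintro ⟨⟨α, β⟩, ⟨hα, hα0⟩, hβ, hβ0⟩
    obtain ⟨p, ⟨hp, hε⟩, h2⟩ := hP.2 α hα hα0 β hβ hβ0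
    exact ⟨⟨p, hp⟩, hε, fun q hq => Subtype.ext (h2 q ⟨q.2, hq⟩)⟩
  · rintro ⟨⟨α, β⟩, ⟨hα, hα0⟩, hβ, hβ0⟩
    obtain ⟨r, ⟨hr, ε, h1⟩, h2⟩ := hRa.2.2 α hα hα0
    refine ⟨(⟨r, hr⟩, ⟨((ε : 𝓞 F) : F) * β, unit_mul_dual _ _ hβ,
      mul_ne_zero (unit_ne_zero ε) hβ0⟩), ⟨ε, ?_, ?_⟩, ?_⟩
    · change α = r * ((ε : 𝓞 F) : F)
      rw [← h1, mul_comm]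
    · change β = ((ε : 𝓞 F) : F) * β * (((ε⁻¹ : (𝓞 F)ˣ) : 𝓞 F) : F)
      rw [unit_inv_coe, mul_comm ((ε : 𝓞 F) : F), mul_inv_cancel_right₀ (unit_ne_zero ε)]
    · rintro ⟨α', β'⟩ ⟨η, h3, h4⟩
      have h3 : α = α' * ((η : 𝓞 F) : F) := h3
      have h4 : β = β' * (((η⁻¹ : (𝓞 F)ˣ) : 𝓞 F) : F) := h4
      have h6 := h2 α' ⟨α'.2, η, by rw [h3, mul_comm]⟩
      have h7 : ((η : 𝓞 F) : F) = ((ε : 𝓞 F) : F) := by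
        have h8 : ((η : 𝓞 F) : F) * r = ((ε : 𝓞 F) : F) * r := by rw [h1, ← h6, h3, mul_comm]
        exact mul_right_cancel₀ (hRa0 ⟨r, hr⟩) h8
      refine Prod.ext (Subtype.ext h6) (Subtype.ext ?_)
      change (β' : F) = ((ε : 𝓞 F) : F) * β
      rw [h4, ← h7, unit_inv_coe, mul_comm, inv_mul_cancel_right₀ (unit_ne_zero η)]

/-! ### The unfolded Eisenstein series -/

/-- The Dirichlet series `Σ |N(r)|^{-σ}` over a set of representatives, for real `σ`. -/
def Zr (R : Set F) (σ : ℝ) : ℝ := ∑' r : R, normR F (mixedEmbedding F (r : F)) ^ (-σ)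

/-- Separates the term at `0` from a sum over a set containing `0`. -/
lemma hasSum_split {E : Type*} [NormedAddCommGroup E] {s : Set F} (h0 : (0 : F) ∈ s) {g : F → E}
    {A : E} (h : HasSum (fun β : {β : F // β ∈ s ∧ β ≠ 0} => g β) A) :
    HasSum (fun β : s => g β) (g 0 + A) := by
  have hd : Disjoint ({0} : Set F) {β : F | β ∈ s ∧ β ≠ 0} := by
    rw [Set.disjoint_singleton_left]
    exact fun h => h.2 rfl
  have hu : ({0} : Set F) ∪ {β : F | β ∈ s ∧ β ≠ 0} = s := by
    ext β
    by_cases hβ : β = 0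
    · subst hβ; simp [h0]
    · simp [hβ]
  have h1 : HasSum (g ∘ ((↑) : ({0} : Set F) → F)) (g 0) := by
    have := hasSum_unique (g ∘ ((↑) : ({0} : Set F) → F))
    exact this
  have h2 := HasSum.add_disjoint (f := g) hd h1 h
  rw [hu] at h2
  exact h2

lemma zero_mem_dual (J : (FractionalIdeal (𝓞 F)⁰ F)ˣ) :
    (0 : F) ∈ dualIdealSet F (J : FractionalIdeal (𝓞 F)⁰ F) :=
  fun β _ => ⟨0, by simp⟩

lemma embed_mul_unit {y : RS F} (hy : IsUnit y) {α : F} (hα : α ≠ 0) :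
    IsUnit (y * mixedEmbedding F α) := hy.mul (isUnit_embed hα)

lemma Gr_nonneg (σ : ℝ) : 0 ≤ Gr F σ :=
  integral_nonneg fun t => mul_nonneg (fR_pos t).le (Real.rpow_nonneg (normR_nonneg t) _)

/-- The row sum over `β ∈ 𝔟` for fixed `α`, with the contribution of `β* = 0` separated. -/
theorem row_sum (J : (FractionalIdeal (𝓞 F)⁰ F)ˣ) (x : RS F) {y : RS F} (hy : IsUnit y) {α : F}
    (hα : α ≠ 0) {σ : ℝ} (hσ : 2 ≤ σ)
    (hB : Summable fun β : NZD J =>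
      HR (y * mixedEmbedding F α) (mixedEmbedding F (β : F)) (σ - 1)) :
    ∃ S : ℝ, 0 ≤ S ∧ HasSum (fun β : {β : F // β ∈ (J : FractionalIdeal (𝓞 F)⁰ F)} =>
        normD F (FtoD F α * (structureMap F x + structureMap F y * jF F) + FtoD F (β : F)) ^ (-σ)
          * Gr F σ) S ∧
      S ≤ (VI J)⁻¹ * (normR F (y * mixedEmbedding F α) ^ (-(σ - 1)) * Gr F (σ - 1) +
        ∑' β : NZD J, HR (y * mixedEmbedding F α) (mixedEmbedding F (β : F)) (σ - 1)) ∧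
      (S : ℂ) = ((VI J)⁻¹ : ℝ) *
        (((normR F (y * mixedEmbedding F α) ^ (-(σ - 1)) * Gr F (σ - 1) : ℝ) : ℂ) +
        ∑' β : NZD J, ee (TrR F (mixedEmbedding F α * x * mixedEmbedding F (β : F))) *
          (HR (y * mixedEmbedding F α) (mixedEmbedding F (β : F)) (σ - 1) : ℂ)) := by
  have hu := embed_mul_unit hy hα
  have hz := HR_zero hu (σ - 1)
  have hVpos := VI_pos J
  set u := y * mixedEmbedding F α with hud
  have hR := hasSum_split (zero_mem_dual J)
    (g := fun β => HR u (mixedEmbedding F β) (σ - 1)) hB.hasSum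
  have hSC : Summable fun β : NZD J => ee (TrR F (mixedEmbedding F α * x * mixedEmbedding F (β : F)))
      * (HR u (mixedEmbedding F (β : F)) (σ - 1) : ℂ) := by
    refine Summable.of_norm_bounded hB fun β => ?_
    rw [norm_mul, norm_ee, one_mul, Complex.norm_real, Real.norm_of_nonneg (HR_nonneg _ _ _)]
  have hC := hasSum_split (zero_mem_dual J)
    (g := fun β => ee (TrR F (mixedEmbedding F α * x * mixedEmbedding F β))
      * (HR u (mixedEmbedding F β) (σ - 1) : ℂ)) hSC.hasSum
  obtain ⟨S, hS1, hS2⟩ := unfold_row J (mixedEmbedding F α * x) hu hσ hR.summable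
  have hS1' : HasSum (fun β : {β : F // β ∈ (J : FractionalIdeal (𝓞 F)⁰ F)} =>
        normD F (FtoD F α * (structureMap F x + structureMap F y * jF F) + FtoD F (β : F)) ^ (-σ)
          * Gr F σ) S := by
    refine hS1.congr_fun fun β => ?_
    rw [lat_coord, coordD_apply, hud, mul_comm y]
  have h0 : (0 : ℝ) ≤ S := hS1'.nonneg fun β =>
    mul_nonneg (Real.rpow_nonneg (by unfold normD; positivity) _) (Gr_nonneg σ)
  refine ⟨S, h0, hS1', ?_, ?_⟩
  · have h1 : S = ‖(S : ℂ)‖ := by rw [Complex.norm_real, Real.norm_of_nonneg h0]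
    rw [h1, hS2, norm_mul, Complex.norm_real, Real.norm_of_nonneg (inv_nonneg.2 hVpos.le)]
    refine mul_le_mul_of_nonneg_left ?_ (inv_nonneg.2 hVpos.le)
    have h2 := tsum_of_norm_bounded hR (f := fun β : dualIdealSet F (J : FractionalIdeal (𝓞 F)⁰ F) =>
      ee (TrR F (mixedEmbedding F α * x * mixedEmbedding F (β : F))) *
        (HR u (mixedEmbedding F (β : F)) (σ - 1) : ℂ)) (fun β => by
        rw [norm_mul, norm_ee, one_mul, Complex.norm_real, Real.norm_of_nonneg (HR_nonneg _ _ _)])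
    simp only [map_zero] at h2
    rwa [hz] at h2
  · rw [hS2, hC.tsum_eq, map_zero, mul_zero, hz]
    simp [TrR, ee]

/-- The Eisenstein series summed over `𝔟/U` and `𝔞/U × 𝔟`, with Poisson summation applied to
the inner sum over `𝔟`. -/
theorem unfolded (I J : (FractionalIdeal (𝓞 F)⁰ F)ˣ) {x y : RS F} (hy : IsUnit y) {z : DS F}
    (hz : z = structureMap F x + structureMap F y * jF F) {R : Set (DS F)}
    (hR : IsRepr F (latAB F I J z) R) {Ra Rb : Set F}
    (hRa : IsIdealRepr F (I : FractionalIdeal (𝓞 F)⁰ F) Ra)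
    (hRb : IsIdealRepr F (J : FractionalIdeal (𝓞 F)⁰ F) Rb) {σ : ℝ} (hσ : 2 < σ) (hσ3 : σ ≤ 3) :
    (((∑' r : R, normD F (r : DS F) ^ (-σ) * Gr F σ : ℝ)) : ℂ) =
      ((Zr Rb σ * Gr F σ + (VI J)⁻¹ *
        (normR F y ^ (-(σ - 1)) * Gr F (σ - 1) * Zr Ra (σ - 1)) : ℝ) : ℂ) +
      ((VI J)⁻¹ : ℝ) * ∑' p : Ra × NZD J,
        ee (TrR F (mixedEmbedding F (p.1 : F) * x * mixedEmbedding F (p.2 : F))) *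
          (HR (y * mixedEmbedding F (p.1 : F)) (mixedEmbedding F (p.2 : F)) (σ - 1) : ℂ) := by
  have hRa0 : ∀ r : Ra, (r : F) ≠ 0 := fun r h0 => hRa.2.1 (h0 ▸ r.2)
  have hVpos := VI_pos J
  obtain ⟨B, hB, hB'⟩ := exists_majorant I J hRa hy
  have hHR : Summable fun p : Ra × NZD J =>
      HR (y * mixedEmbedding F (p.1 : F)) (mixedEmbedding F (p.2 : F)) (σ - 1) :=
    hB.of_nonneg_of_le (fun p => HR_nonneg _ _ _)
      (fun p => hB' p (σ - 1) (by linarith) (by linarith))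
  have hT : Summable fun p : Ra × NZD J =>
      ee (TrR F (mixedEmbedding F (p.1 : F) * x * mixedEmbedding F (p.2 : F))) *
          (HR (y * mixedEmbedding F (p.1 : F)) (mixedEmbedding F (p.2 : F)) (σ - 1) : ℂ) := by
    refine Summable.of_norm_bounded hHR fun β => ?_
    rw [norm_mul, norm_ee, one_mul, Complex.norm_real, Real.norm_of_nonneg (HR_nonneg _ _ _)]
  have hrow := fun α : Ra => row_sum J x hy (hRa0 α) hσ.le
    ((summable_prod_of_nonneg (fun p => HR_nonneg _ _ _)).1 hHR |>.1 α)
  choose S hS0 hS1 hS2 hS3 using hrow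
  have hn : ∀ α : Ra, normR F (y * mixedEmbedding F (α : F)) ^ (-(σ - 1)) * Gr F (σ - 1) =
      normR F y ^ (-(σ - 1)) * Gr F (σ - 1) * normR F (mixedEmbedding F (α : F)) ^ (-(σ - 1)) := by
    intro α
    rw [normR_mul, Real.mul_rpow (normR_nonneg _) (normR_nonneg _)]
    ring
  have hZa := summable_repr I hRa (κ := σ - 1) (by linarith)
  have hZb := summable_repr J hRb (κ := σ) (by linarith)
  have hnS : Summable fun α : Ra =>
      normR F (y * mixedEmbedding F (α : F)) ^ (-(σ - 1)) * Gr F (σ - 1) := by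
    simp only [hn]
    exact hZa.mul_left _
  have hSsum : Summable S :=
    ((hnS.add hHR.prod).mul_left _).of_nonneg_of_le hS0 hS2
  obtain ⟨e, he⟩ := lattice_equiv I J hy hz hR hRa hRb
  have hinr : HasSum (fun p : Ra × {β : F // β ∈ (J : FractionalIdeal (𝓞 F)⁰ F)} =>
      normD F (latElt (Rb := Rb) J z (Sum.inr p)) ^ (-σ) * Gr F σ) (∑' α, S α) := by
    have hsum : Summable (fun p : Ra × {β : F // β ∈ (J : FractionalIdeal (𝓞 F)⁰ F)} =>
      normD F (latElt (Rb := Rb) J z (Sum.inr p)) ^ (-σ) * Gr F σ) := by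
      refine (summable_prod_of_nonneg fun p => mul_nonneg
        (Real.rpow_nonneg (by unfold normD; positivity) _) (Gr_nonneg σ)).2 ⟨fun α => ?_, ?_⟩
      · subst hz
        exact (hS1 α).summable
      · subst hz
        exact hSsum.congr fun α => (hS1 α).tsum_eq.symm
    subst hz
    have h1 := hsum.hasSum.prod_fiberwise hS1
    rw [h1.tsum_eq]
    exact hsum.hasSum
  have hinl : HasSum (fun β : Rb => normD F (latElt (Ra := Ra) J z (Sum.inl β)) ^ (-σ) * Gr F σ)
      (Zr Rb σ * Gr F σ) := by
    refine (hZb.hasSum.mul_right _).congr_fun fun β => ?_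
    change normD F (FtoD F (β : F)) ^ (-σ) * _ = _
    rw [FtoD, RingHom.comp_apply, normD_structureMap]
  have hall : HasSum (fun r : R => normD F (r : DS F) ^ (-σ) * Gr F σ)
      (Zr Rb σ * Gr F σ + ∑' α, S α) := by
    have h1 := HasSum.sum (f := fun t => normD F (latElt (Ra := Ra) (Rb := Rb) J z t) ^ (-σ) * Gr F σ)
      hinl hinr
    refine ((Equiv.hasSum_iff e).2 h1).congr_fun fun r => ?_
    simp only [Function.comp, he]
  rw [hall.tsum_eq]
  have hfin : ((∑' α, S α : ℝ) : ℂ) = ((VI J)⁻¹ : ℝ) *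
      (((normR F y ^ (-(σ - 1)) * Gr F (σ - 1) * Zr Ra (σ - 1) : ℝ) : ℂ) +
      ∑' p : Ra × NZD J,
        ee (TrR F (mixedEmbedding F (p.1 : F) * x * mixedEmbedding F (p.2 : F))) *
          (HR (y * mixedEmbedding F (p.1 : F)) (mixedEmbedding F (p.2 : F)) (σ - 1) : ℂ)) := by
    rw [Complex.ofReal_tsum]
    simp only [hS3]
    rw [tsum_mul_left, Summable.tsum_add ?_ hT.prod, hT.tsum_prod, ← Complex.ofReal_tsum]
    · simp only [hn, Zr, tsum_mul_left]
    · exact Complex.summable_ofReal.2 hnS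
  rw [Complex.ofReal_add, hfin]
  push_cast
  ring

/-! ### The Fourier expansion of `Ê(Λ, s)` -/

lemma GammaF_real (σ : ℝ) : GammaF F (σ : ℂ) = (Gr F σ : ℂ) := by
  rw [GammaF, restrict_TF, Gr, ← integral_complex_ofReal]
  refine integral_congr_ae (Filter.Eventually.of_forall fun t => ?_)
  simp only [Complex.ofReal_mul, Complex.ofReal_cpow (normR_nonneg t)]

lemma BF_real (u w : RS F) (s : ℝ) : BF F u w (s : ℂ) = (HR u w (2 * s) : ℂ) := by
  rw [BF, restrict_TF, HR, ← integral_complex_ofReal]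
  refine integral_congr_ae ?_
  filter_upwards [ae_TF] with t ht
  rw [inverse_eq_inv ht]
  push_cast
  rw [Complex.ofReal_cpow (normR_nonneg t)]
  push_cast
  rfl

/-- The value of `ξ_F(σ, 𝔞)` at a real point `σ`. -/
def Xi (I : (FractionalIdeal (𝓞 F)⁰ F)ˣ) (R : Set F) (σ : ℝ) : ℝ :=
  VI I ^ σ * Gr F σ * Zr R σ

lemma xiF_real (I : (FractionalIdeal (𝓞 F)⁰ F)ˣ) (R : Set F) (σ : ℝ) :
    xiF F (σ : ℂ) (I : FractionalIdeal (𝓞 F)⁰ F) R = (Xi I R σ : ℂ) := by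
  have h1 : (dF F : ℂ) ^ ((σ : ℂ) / 2) = ((Real.sqrt (dF F) ^ σ : ℝ) : ℂ) := by
    rw [Real.sqrt_eq_rpow, ← Real.rpow_mul (Nat.cast_nonneg _), Complex.ofReal_cpow (Nat.cast_nonneg _)]
    push_cast
    congr 1
    ring
  have hN : (0 : ℝ) ≤ ((FractionalIdeal.absNorm (I : FractionalIdeal (𝓞 F)⁰ F) : ℚ) : ℝ) :=
    (absNorm_pos I).le
  have h2 : ((FractionalIdeal.absNorm (I : FractionalIdeal (𝓞 F)⁰ F) : ℚ) : ℂ) ^ (σ : ℂ) =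
      ((((FractionalIdeal.absNorm (I : FractionalIdeal (𝓞 F)⁰ F) : ℚ) : ℝ) ^ σ : ℝ) : ℂ) := by
    rw [Complex.ofReal_cpow hN]
    push_cast
    rfl
  have h3 : ∀ r : R, ((|Algebra.norm ℚ (r : F)| : ℚ) : ℂ) ^ (-(σ : ℂ)) =
      ((normR F (mixedEmbedding F (r : F)) ^ (-σ) : ℝ) : ℂ) := by
    intro r
    rw [Complex.ofReal_cpow (normR_nonneg _), normR_embed, Complex.ofReal_neg,
      Complex.ofReal_ratCast]
  rw [xiF, GammaF_real, h1, h2]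
  simp only [h3]
  rw [← Complex.ofReal_tsum, Xi, Zr, VI, Real.mul_rpow (Real.sqrt_nonneg _) hN]
  push_cast
  ring

lemma normD_nonneg (z : DS F) : 0 ≤ normD F z := by unfold normD; positivity

lemma Ehat_real {V : ℝ} (hV : 0 < V) (R : Set (DS F)) (s : ℝ) :
    Ehat F V R (s : ℂ) = ((V ^ s : ℝ) : ℂ) *
      ((∑' r : R, normD F (r : DS F) ^ (-(2 * s)) * Gr F (2 * s) : ℝ) : ℂ) := by
  have h1 : (2 : ℂ) * (s : ℂ) = ((2 * s : ℝ) : ℂ) := by push_cast; ring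
  have h2 : ∀ r : R, (V : ℂ) ^ (s : ℂ) / (normD F (r : DS F) : ℂ) ^ (Complex.ofReal (2 * s)) =
      ((V ^ s * normD F (r : DS F) ^ (-(2 * s)) : ℝ) : ℂ) := by
    intro r
    rw [Complex.ofReal_mul (V ^ s), Complex.ofReal_cpow hV.le, Real.rpow_neg (normD_nonneg _),
      Complex.ofReal_inv, Complex.ofReal_cpow (normD_nonneg _), div_eq_mul_inv]
  rw [Ehat, Eis, h1, GammaF_real]
  simp only [h2]
  rw [← Complex.ofReal_tsum, tsum_mul_left, tsum_mul_right]
  push_cast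
  ring

/-- The powers of `V(Λ) = ABN` in terms of `q = (A/B)N`. -/
lemma exponents {A B N s : ℝ} (hA : 0 < A) (hB : 0 < B) (hN : 0 < N) :
    (A * B * N) ^ s = (A / B * N) ^ s * B ^ (2 * s) ∧
    (A * B * N) ^ s * B⁻¹ * N ^ (-(2 * s - 1)) = (A / B * N) ^ (1 - s) * A ^ (2 * s - 1) := by
  have hq : 0 < A / B * N := by positivity
  constructor
  · rw [Real.mul_rpow (by positivity) hN.le, Real.mul_rpow hA.le hB.le,
      Real.mul_rpow (by positivity) hN.le, Real.div_rpow hA.le hB.le, two_mul, Real.rpow_add hB]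
    have := (Real.rpow_pos_of_pos hB s).ne'
    field_simp
  · rw [Real.mul_rpow (by positivity) hN.le, Real.mul_rpow hA.le hB.le,
      Real.mul_rpow (by positivity) hN.le, Real.div_rpow hA.le hB.le, Real.rpow_sub hA,
      Real.rpow_sub hB, Real.rpow_sub hN, Real.rpow_sub hA, Real.rpow_neg hN.le, Real.rpow_sub hN,
      two_mul, Real.rpow_add hA, Real.rpow_add hN]
    have h1 := (Real.rpow_pos_of_pos hA s).ne'
    have h2 := (Real.rpow_pos_of_pos hB s).ne'
    have h3 := (Real.rpow_pos_of_pos hN s).ne'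
    simp only [Real.rpow_one]
    field_simp

/-- The non-degenerate part of the unfolded Eisenstein series. -/
def Tsum {Ra : Set F} (J : (FractionalIdeal (𝓞 F)⁰ F)ˣ) (x y : RS F) (τ : ℝ) : ℂ :=
  ∑' p : Ra × NZD J,
    ee (TrR F (mixedEmbedding F (p.1 : F) * x * mixedEmbedding F (p.2 : F))) *
      (HR (y * mixedEmbedding F (p.1 : F)) (mixedEmbedding F (p.2 : F)) τ : ℂ)

/-- Fourier expansion of the completed Eisenstein series. -/
theorem Ehat_expansion (I J : (FractionalIdeal (𝓞 F)⁰ F)ˣ) {x y : RS F} (hy : IsUnit y) {z : DS F}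
    (hz : z = structureMap F x + structureMap F y * jF F) {V : ℝ} (hV0 : 0 ≤ V)
    (hV : HasVol F (latAB F I J z) V) {R : Set (DS F)}
    (hR : IsRepr F (latAB F I J z) R) {Ra Rb : Set F}
    (hRa : IsIdealRepr F (I : FractionalIdeal (𝓞 F)⁰ F) Ra)
    (hRb : IsIdealRepr F (J : FractionalIdeal (𝓞 F)⁰ F) Rb) {s : ℝ} (hs : 1 < s)
    (hs2 : s ≤ 3 / 2) :
    Ehat F V R (s : ℂ) =
      (((VI I / VI J * normR F y) ^ s * Xi J Rb (2 * s) : ℝ) : ℂ) +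
      (((VI I / VI J * normR F y) ^ (1 - s) * Xi I Ra (2 * s - 1) : ℝ) : ℂ) +
      (((VI I * VI J * normR F y) ^ s * (VI J)⁻¹ : ℝ) : ℂ) * Tsum (Ra := Ra) J x y (2 * s - 1) := by
  have hVI := VI_pos I
  have hVJ := VI_pos J
  have hN := normR_pos hy
  have hVe : V = VI I * VI J * normR F y := by
    subst hz
    exact hasVol_eq I J x hy hV0 hV
  have hVpos : 0 < V := by rw [hVe]; positivity
  have hu := unfolded I J hy hz hR hRa hRb (σ := 2 * s) (by linarith) (by linarith)
  obtain ⟨e1, e2⟩ := exponents (s := s) hVI hVJ hN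
  have e3 : (VI I * VI J * normR F y) ^ s * (Zr Rb (2 * s) * Gr F (2 * s) +
      (VI J)⁻¹ * (normR F y ^ (-(2 * s - 1)) * Gr F (2 * s - 1) * Zr Ra (2 * s - 1))) =
      (VI I / VI J * normR F y) ^ s * Xi J Rb (2 * s) +
        (VI I / VI J * normR F y) ^ (1 - s) * Xi I Ra (2 * s - 1) := by
    have e4 : (VI I * VI J * normR F y) ^ s * (Zr Rb (2 * s) * Gr F (2 * s) +
      (VI J)⁻¹ * (normR F y ^ (-(2 * s - 1)) * Gr F (2 * s - 1) * Zr Ra (2 * s - 1))) =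
      (VI I * VI J * normR F y) ^ s * (Zr Rb (2 * s) * Gr F (2 * s)) +
      (VI I * VI J * normR F y) ^ s * (VI J)⁻¹ * normR F y ^ (-(2 * s - 1)) *
        (Gr F (2 * s - 1) * Zr Ra (2 * s - 1)) := by ring
    rw [e4, e2, e1, Xi, Xi]
    ring
  rw [Ehat_real hVpos, hu, hVe, mul_add, ← Complex.ofReal_mul, e3, Complex.ofReal_add, Tsum,
    Complex.ofReal_mul _ (VI J)⁻¹, mul_assoc (Complex.ofReal _)]

/-! ### Continuity in `s` -/

lemma Gr_tendsto {l : Filter ℝ} [l.IsCountablyGenerated] {φ : ℝ → ℝ} {σ : ℝ}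
    (hφ : Filter.Tendsto φ l (nhds σ)) (h1 : ∀ᶠ s in l, 1 ≤ φ s) (h3 : ∀ᶠ s in l, φ s ≤ 3) :
    Filter.Tendsto (fun s => Gr F (φ s)) l (nhds (Gr F σ)) := by
  have i1 := integrable_fR_rpow (F := F) (σ := 1) le_rfl
  have i3 := integrable_fR_rpow (F := F) (σ := (3 : ℕ)) (by norm_num)
  refine tendsto_integral_filter_of_dominated_convergence
    (fun t => fR F t * normR F t ^ (1 : ℝ) + fR F t * normR F t ^ ((3 : ℕ) : ℝ)) ?_ ?_ (i1.add i3) ?_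
  · filter_upwards [h1] with s hs
    exact (integrable_fR_rpow hs).aestronglyMeasurable
  · filter_upwards [h1, h3] with s hs hs3
    refine Filter.Eventually.of_forall fun t => ?_
    have h0 := fR_pos t
    rw [Real.norm_of_nonneg (mul_nonneg h0.le (Real.rpow_nonneg (normR_nonneg t) _)), ← mul_add,
      Real.rpow_one, Real.rpow_natCast]
    exact mul_le_mul_of_nonneg_left (rpow_le_add (normR_nonneg t) hs (by exact_mod_cast hs3)) h0.le
  · filter_upwards [ae_TF] with t ht
    exact ((Real.continuousAt_const_rpow (normR_pos ht).ne').tendsto.comp hφ).const_mul _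

lemma HR_tendsto {u : RS F} (hu : IsUnit u) (w : RS F) {l : Filter ℝ} [l.IsCountablyGenerated]
    {φ : ℝ → ℝ} {σ : ℝ}
    (hφ : Filter.Tendsto φ l (nhds σ)) (h1 : ∀ᶠ s in l, 1 ≤ φ s) (h2 : ∀ᶠ s in l, φ s ≤ 2) :
    Filter.Tendsto (fun s => HR u w (φ s)) l (nhds (HR u w σ)) := by
  have i1 := integrable_HR hu w (σ := 1) le_rfl
  have i2 := integrable_HR hu w (σ := (2 : ℕ)) (by norm_num)
  refine tendsto_integral_filter_of_dominated_convergence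
    (fun t => fR F (t * u) * fR F (t⁻¹ * w) * normR F t ^ (1 : ℝ) +
      fR F (t * u) * fR F (t⁻¹ * w) * normR F t ^ ((2 : ℕ) : ℝ)) ?_ ?_ (i1.add i2) ?_
  · filter_upwards [h1] with s hs
    exact (integrable_HR hu w hs).aestronglyMeasurable
  · filter_upwards [h1, h2] with s hs hs2
    refine Filter.Eventually.of_forall fun t => ?_
    have h0 := mul_pos (fR_pos (t * u)) (fR_pos (t⁻¹ * w))
    rw [Real.norm_of_nonneg (mul_nonneg h0.le (Real.rpow_nonneg (normR_nonneg t) _)), ← mul_add,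
      Real.rpow_one, Real.rpow_natCast]
    exact mul_le_mul_of_nonneg_left (rpow_le_add (normR_nonneg t) hs (by exact_mod_cast hs2)) h0.le
  · filter_upwards [ae_TF] with t ht
    exact ((Real.continuousAt_const_rpow (normR_pos ht).ne').tendsto.comp hφ).const_mul _

/-- A majorant of `x^{-σ}` for `σ` near `2` by two exponents in the range of convergence. -/
lemma rpow_neg_le {x σ : ℝ} (hx : 0 ≤ x) (h2 : 3 / 2 ≤ σ) (h3 : σ ≤ 3) :
    x ^ (-σ) ≤ x ^ (-(3 / 2) : ℝ) + x ^ (-3 : ℝ) := by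
  have h := rpow_le_add (x := x ^ (-(3 / 2) : ℝ)) (σ := σ / (3 / 2)) (k := 2) (Real.rpow_nonneg hx _)
    (by rw [le_div_iff₀ (by norm_num)]; linarith) (by rw [div_le_iff₀ (by norm_num)]; norm_num; linarith)
  rw [← Real.rpow_natCast, ← Real.rpow_mul hx, ← Real.rpow_mul hx] at h
  convert h using 3
  · ring
  · norm_num

lemma Zr_tendsto (I : (FractionalIdeal (𝓞 F)⁰ F)ˣ) {R : Set F}
    (hR : IsIdealRepr F (I : FractionalIdeal (𝓞 F)⁰ F) R) {l : Filter ℝ}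
    {φ : ℝ → ℝ} (hφ : Filter.Tendsto φ l (nhds 2)) :
    Filter.Tendsto (fun s => Zr R (φ s)) l (nhds (Zr R 2)) := by
  have hR0 : ∀ r : R, (r : F) ≠ 0 := fun r h0 => hR.2.1 (h0 ▸ r.2)
  refine tendsto_tsum_of_dominated_convergence
    ((summable_repr I hR (κ := 3 / 2) (by norm_num)).add (summable_repr I hR (κ := 3) (by norm_num)))
    (fun r => ?_) ?_
  · exact (Real.continuousAt_const_rpow
      (normR_pos (isUnit_embed (hR0 r))).ne').tendsto.comp hφ.neg
  · filter_upwards [hφ.eventually (Icc_mem_nhds (a := 3 / 2) (b := 3) (by norm_num) (by norm_num))]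
      with s hs r
    rw [Real.norm_of_nonneg (Real.rpow_nonneg (normR_nonneg _) _)]
    exact rpow_neg_le (normR_nonneg _) hs.1 hs.2

lemma Tsum_tendsto (I J : (FractionalIdeal (𝓞 F)⁰ F)ˣ) {Ra : Set F}
    (hRa : IsIdealRepr F (I : FractionalIdeal (𝓞 F)⁰ F) Ra) (x : RS F) {y : RS F} (hy : IsUnit y)
    {l : Filter ℝ} [l.IsCountablyGenerated] {φ : ℝ → ℝ} {σ : ℝ}
    (hφ : Filter.Tendsto φ l (nhds σ)) (h1 : ∀ᶠ s in l, 1 ≤ φ s) (h2 : ∀ᶠ s in l, φ s ≤ 2) :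
    Filter.Tendsto (fun s => Tsum (Ra := Ra) J x y (φ s)) l (nhds (Tsum (Ra := Ra) J x y σ)) := by
  have hRa0 : ∀ r : Ra, (r : F) ≠ 0 := fun r h0 => hRa.2.1 (h0 ▸ r.2)
  obtain ⟨B, hB, hB'⟩ := exists_majorant I J hRa hy
  refine tendsto_tsum_of_dominated_convergence hB (fun p => ?_) ?_
  · have := HR_tendsto (embed_mul_unit hy (hRa0 p.1)) (mixedEmbedding F (p.2 : F)) hφ h1 h2
    exact ((Complex.continuous_ofReal.tendsto _).comp this).const_mul _
  · filter_upwards [h1, h2] with s hs hs2 p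
    rw [norm_mul, norm_ee, one_mul, Complex.norm_real, Real.norm_of_nonneg (HR_nonneg _ _ _)]
    exact hB' p _ hs hs2

/-- The sum over pairs modulo units in the definition of `h_F`. -/
lemma Tsum_pairs (I J : (FractionalIdeal (𝓞 F)⁰ F)ˣ) {Ra : Set F}
    (hRa : IsIdealRepr F (I : FractionalIdeal (𝓞 F)⁰ F) Ra) (x : RS F) {y : RS F} (hy : IsUnit y)
    {P : Set (F × F)}
    (hP : IsPairRepr F (I : FractionalIdeal (𝓞 F)⁰ F) (J : FractionalIdeal (𝓞 F)⁰ F) P) :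
    ∑' p : P, Complex.exp (2 * Real.pi * Complex.I *
            (TrR F (x * mixedEmbedding F (p : F × F).1 * mixedEmbedding F (p : F × F).2))) *
          BF F (y * mixedEmbedding F (p : F × F).1) (mixedEmbedding F (p : F × F).2) (1 / 2) =
      Tsum (Ra := Ra) J x y 1 := by
  obtain ⟨e, he⟩ := pair_equiv I J hP hRa
  rw [Tsum, ← e.tsum_eq]
  refine tsum_congr fun p => ?_
  obtain ⟨ε, h1, h2⟩ := he p
  have hp := hP.1 p p.2
  have hB : BF F (y * mixedEmbedding F (p : F × F).1) (mixedEmbedding F (p : F × F).2) (1 / 2) =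
      (HR (y * mixedEmbedding F (p : F × F).1) (mixedEmbedding F (p : F × F).2) 1 : ℂ) := by
    have := BF_real (y * mixedEmbedding F (p : F × F).1) (mixedEmbedding F (p : F × F).2) (1 / 2)
    rw [mul_one_div_cancel two_ne_zero] at this
    rw [← this]
    push_cast
    rfl
  have hHR := HR_unit (embed_mul_unit hy hp.2.1) (mixedEmbedding F (p : F × F).2) 1
    (isUnit_unit ε) (normR_unit ε)
  have hT : x * mixedEmbedding F (p : F × F).1 * mixedEmbedding F (p : F × F).2 =
      mixedEmbedding F ((e p).1 : F) * x * mixedEmbedding F ((e p).2 : F) := by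
    have h3 : (p : F × F).1 * (p : F × F).2 = ((e p).1 : F) * ((e p).2 : F) := by
      rw [h1, h2, unit_inv_coe]
      field_simp [unit_ne_zero ε]
    rw [mul_assoc, ← map_mul, h3, map_mul]
    ring
  rw [hB, ← hHR, hT]
  congr 2
  rw [h1, h2, unit_inv_coe, map_mul, map_mul, embed_inv (unit_ne_zero ε)]
  congr 1 <;> ring

/-! ### The limit `s → 1⁺` -/

/-- Multiplying by `q^{1-s}` shifts the constant term at a simple pole by `-(c/2) log q`. -/
lemma polar_part {q c : ℝ} (hq : 0 < q) {X : ℝ → ℂ} {L : ℂ}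
    (hX : Filter.Tendsto (fun s : ℝ => X s - (c : ℂ) / ((2 * s - 1 : ℝ) - 1 : ℂ))
      (nhdsWithin 1 (Set.Ioi 1)) (nhds L)) :
    Filter.Tendsto (fun s : ℝ => ((q ^ (1 - s) : ℝ) : ℂ) * X s - ((c / 2 : ℝ) : ℂ) / ((s : ℂ) - 1))
      (nhdsWithin 1 (Set.Ioi 1)) (nhds (L - ((c / 2 * Real.log q : ℝ) : ℂ))) := by
  have hd : HasDerivAt (fun s : ℝ => q ^ (1 - s)) (-Real.log q) 1 := by
    have h1 : HasDerivAt (fun s : ℝ => 1 - s) (-1) 1 := by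
      simpa using (hasDerivAt_id (1 : ℝ)).const_sub 1
    have h2 := h1.const_rpow hq
    simpa using h2
  have hs := hd.tendsto_slope.mono_left
    (nhdsWithin_mono (1 : ℝ) (fun s (hs : s ∈ Set.Ioi (1 : ℝ)) => (ne_of_gt hs : s ≠ 1)))
  have hq1 : Filter.Tendsto (fun s : ℝ => ((q ^ (1 - s) : ℝ) : ℂ)) (nhdsWithin 1 (Set.Ioi 1))
      (nhds 1) := by
    have h3 := hd.continuousAt.tendsto.mono_left (nhdsWithin_le_nhds (s := Set.Ioi 1))
    have h4 : Filter.Tendsto (fun s : ℝ => ((q ^ (1 - s) : ℝ) : ℂ)) (nhdsWithin 1 (Set.Ioi 1))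
        (nhds ((q ^ (1 - 1 : ℝ) : ℝ) : ℂ)) := (Complex.continuous_ofReal.tendsto _).comp h3
    rwa [sub_self, Real.rpow_zero, Complex.ofReal_one] at h4
  have hs' := ((Complex.continuous_ofReal.tendsto _).comp hs).const_mul ((c / 2 : ℝ) : ℂ)
  have hfin := (hq1.mul hX).add hs'
  rw [show 1 * L + ((c / 2 : ℝ) : ℂ) * ((-Real.log q : ℝ) : ℂ) =
    L - ((c / 2 * Real.log q : ℝ) : ℂ) by push_cast; ring] at hfin
  refine hfin.congr' ?_
  filter_upwards [self_mem_nhdsWithin] with s hs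
  have hs : (1 : ℝ) < s := hs
  have hne : (s : ℂ) - 1 ≠ 0 := by
    rw [sub_ne_zero]
    exact_mod_cast hs.ne'
  have h5 : ((2 * s - 1 : ℝ) - 1 : ℂ) = 2 * ((s : ℂ) - 1) := by push_cast; ring
  rw [h5]
  simp only [Function.comp, slope, vsub_eq_sub, smul_eq_mul, sub_self, Real.rpow_zero]
  push_cast
  field_simp
  ring

lemma tendsto_ofReal_right : Filter.Tendsto (fun s : ℝ => (s : ℂ)) (nhdsWithin 1 (Set.Ioi 1))
    (nhdsWithin 1 {s : ℂ | 1 < s.re}) := by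
  refine tendsto_nhdsWithin_iff.2 ⟨?_, ?_⟩
  · have := (Complex.continuous_ofReal.tendsto 1).mono_left (nhdsWithin_le_nhds (s := Set.Ioi 1))
    simpa using this
  · filter_upwards [self_mem_nhdsWithin] with s hs
    simpa using hs

lemma tendsto_two_mul_sub : Filter.Tendsto (fun s : ℝ => 2 * s - 1) (nhdsWithin 1 (Set.Ioi 1))
    (nhdsWithin 1 (Set.Ioi 1)) := by
  refine tendsto_nhdsWithin_iff.2 ⟨?_, ?_⟩
  · have : Filter.Tendsto (fun s : ℝ => 2 * s - 1) (nhds 1) (nhds (2 * 1 - 1)) :=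
      Continuous.tendsto (by fun_prop) 1
    rw [show (2 * 1 - 1 : ℝ) = 1 by norm_num] at this
    exact this.mono_left nhdsWithin_le_nhds
  · filter_upwards [self_mem_nhdsWithin] with s hs
    have hs : (1 : ℝ) < s := hs
    change 1 < 2 * s - 1
    linarith

/-- Comparing limits as `s → 1⁺` in the Fourier expansion of the Eisenstein series. The constant
`c` stands for the common residue `C_F`. -/
theorem constant_term (I J : (FractionalIdeal (𝓞 F)⁰ F)ˣ) {x y : RS F} (hy : IsUnit y) {z : DS F}
    (hz : z = structureMap F x + structureMap F y * jF F) {V : ℝ} (hV0 : 0 ≤ V)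
    (hV : HasVol F (latAB F I J z) V) {R : Set (DS F)}
    (hR : IsRepr F (latAB F I J z) R) {Ra Rb : Set F}
    (hRa : IsIdealRepr F (I : FractionalIdeal (𝓞 F)⁰ F) Ra)
    (hRb : IsIdealRepr F (J : FractionalIdeal (𝓞 F)⁰ F) Rb) {c : ℝ} {ctE ctXi : ℂ}
    (hctE : Filter.Tendsto (fun s : ℂ => Ehat F V R s - ((c / 2 : ℝ) : ℂ) / (s - 1))
      (nhdsWithin 1 {s : ℂ | 1 < s.re}) (nhds ctE))
    (hctXi : Filter.Tendsto
      (fun s : ℂ => xiF F s (I : FractionalIdeal (𝓞 F)⁰ F) Ra - (c : ℂ) / (s - 1))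
      (nhdsWithin 1 {s : ℂ | 1 < s.re}) (nhds ctXi)) :
    ctE = ((VI I / VI J * normR F y : ℝ) : ℂ) * (Xi J Rb 2 : ℂ) +
      (ctXi - ((c / 2 * Real.log (VI I / VI J * normR F y) : ℝ) : ℂ)) +
      ((VI I * normR F y : ℝ) : ℂ) * Tsum (Ra := Ra) J x y 1 := by
  have hVI := VI_pos I
  have hVJ := VI_pos J
  have hN := normR_pos hy
  have hq : 0 < VI I / VI J * normR F y := by positivity
  have hW : 0 < VI I * VI J * normR F y := by positivity
  have hWe : (VI I * VI J * normR F y) ^ (1 : ℝ) * (VI J)⁻¹ = VI I * normR F y := by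
    rw [Real.rpow_one]
    field_simp
  set q := VI I / VI J * normR F y
  have hle : nhdsWithin (1 : ℝ) (Set.Ioi 1) ≤ nhds 1 := nhdsWithin_le_nhds
  have hgt : ∀ᶠ s : ℝ in nhdsWithin 1 (Set.Ioi 1), 1 < s := self_mem_nhdsWithin
  have hlt : ∀ᶠ s : ℝ in nhdsWithin 1 (Set.Ioi 1), s ≤ 3 / 2 :=
    hle (Iic_mem_nhds (by norm_num))
  have hid : Filter.Tendsto (fun s : ℝ => s) (nhdsWithin 1 (Set.Ioi 1)) (nhds 1) := hle
  have h2s : Filter.Tendsto (fun s : ℝ => 2 * s) (nhdsWithin 1 (Set.Ioi 1)) (nhds 2) := by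
    simpa using hid.const_mul 2
  have hpow : ∀ {w : ℝ}, 0 < w → Filter.Tendsto (fun s : ℝ => w ^ s) (nhdsWithin 1 (Set.Ioi 1))
      (nhds (w ^ (1 : ℝ))) := fun hw => (Real.continuousAt_const_rpow hw.ne').tendsto.comp hid
  have hA : Filter.Tendsto (fun s : ℝ => q ^ s * Xi J Rb (2 * s)) (nhdsWithin 1 (Set.Ioi 1))
      (nhds (q ^ (1 : ℝ) * Xi J Rb 2)) := by
    refine (hpow hq).mul (((Real.continuousAt_const_rpow hVJ.ne').tendsto.comp h2s).mul
      (Gr_tendsto h2s ?_ ?_) |>.mul (Zr_tendsto J hRb h2s))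
    · filter_upwards [hgt] with s hs using by linarith
    · filter_upwards [hlt] with s hs using by linarith
  have hA' := (Complex.continuous_ofReal.tendsto _).comp hA
  have hB := polar_part (X := fun s => (Xi I Ra (2 * s - 1) : ℂ)) hq (c := c) (L := ctXi) (by
    refine (hctXi.comp (tendsto_ofReal_right.comp tendsto_two_mul_sub)).congr fun s => ?_
    simp only [Function.comp, xiF_real])
  have h21 := tendsto_two_mul_sub.mono_right (nhdsWithin_le_nhds (s := Set.Ioi (1 : ℝ)))
  have hT := Tsum_tendsto I J hRa x hy h21
    (by filter_upwards [hgt] with s hs using by linarith)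
    (by filter_upwards [hlt] with s hs using by linarith)
  have hC := ((Complex.continuous_ofReal.tendsto _).comp ((hpow hW).mul_const (VI J)⁻¹)).mul hT
  have hall := (hA'.add hB).add hC
  rw [hWe, Real.rpow_one, Complex.ofReal_mul q] at hall
  refine tendsto_nhds_unique (hctE.comp tendsto_ofReal_right) (hall.congr' ?_)
  filter_upwards [hgt, hlt] with s hs hs2
  simp only [Function.comp]
  rw [Ehat_expansion I J hy hz hV0 hV hR hRa hRb hs hs2]
  simp only [Complex.ofReal_mul]
  ring

lemma CF_pos : 0 < CF F := by
  have h1 := NumberField.Units.regulator_pos F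
  have h2 : 0 < NumberField.Units.torsionOrder F := NumberField.Units.torsionOrder_pos F
  unfold CF
  positivity

/-- The factors `d_F^{1/2}` cancel in `V(𝔞)/V(𝔟)`. -/
lemma VI_div (I J : (FractionalIdeal (𝓞 F)⁰ F)ˣ) :
    VI I / VI J = ((FractionalIdeal.absNorm (I : FractionalIdeal (𝓞 F)⁰ F) /
      FractionalIdeal.absNorm (J : FractionalIdeal (𝓞 F)⁰ F) : ℚ) : ℝ) := by
  have hd : (0 : ℝ) < Real.sqrt (dF F) := Real.sqrt_pos.2 (by exact_mod_cast dF_pos (F := F))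
  rw [VI, VI, mul_div_mul_left _ _ hd.ne']
  push_cast
  rfl

lemma projX_eq (x y : RS F) : projX F (structureMap F x + structureMap F y * jF F) = x := by
  have h := coordD_symm_apply (structureMap F x + structureMap F y * jF F)
  rw [← coordD_apply (x, y), LinearEquiv.symm_apply_apply] at h
  rw [← coordD_apply (x, y)]
  exact (congrArg Prod.fst h).symm

lemma projY_eq (x y : RS F) : projY F (structureMap F x + structureMap F y * jF F) = y := by
  have h := coordD_symm_apply (structureMap F x + structureMap F y * jF F)
  rw [← coordD_apply (x, y), LinearEquiv.symm_apply_apply] at h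
  rw [← coordD_apply (x, y)]
  exact (congrArg Prod.snd h).symm

theorem main_aux (I J : (FractionalIdeal (𝓞 F)⁰ F)ˣ) {x y : RS F} (hy : IsUnit y) {z : DS F}
    (hz : z = structureMap F x + structureMap F y * jF F) {V : ℝ} (hV0 : 0 ≤ V)
    (hV : HasVol F (latAB F I J z) V) {R : Set (DS F)}
    (hR : IsRepr F (latAB F I J z) R) {Ra Rb : Set F}
    (hRa : IsIdealRepr F (I : FractionalIdeal (𝓞 F)⁰ F) Ra)
    (hRb : IsIdealRepr F (J : FractionalIdeal (𝓞 F)⁰ F) Rb) {P : Set (F × F)}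
    (hP : IsPairRepr F (I : FractionalIdeal (𝓞 F)⁰ F) (J : FractionalIdeal (𝓞 F)⁰ F) P)
    {ctE ctXi : ℂ}
    (hctE : Filter.Tendsto (fun s : ℂ => Ehat F V R s - ((CF F / 2 : ℝ) : ℂ) / (s - 1))
      (nhdsWithin 1 {s : ℂ | 1 < s.re}) (nhds ctE))
    (hctXi : Filter.Tendsto
      (fun s : ℂ => xiF F s (I : FractionalIdeal (𝓞 F)⁰ F) Ra - (CF F : ℂ) / (s - 1))
      (nhdsWithin 1 {s : ℂ | 1 < s.re}) (nhds ctXi)) :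
    ctE = ctXi + ((CF F / 2 : ℝ) : ℂ) *
      (hF F z I J Rb P -
        (Real.log (((FractionalIdeal.absNorm (I : FractionalIdeal (𝓞 F)⁰ F) /
          FractionalIdeal.absNorm (J : FractionalIdeal (𝓞 F)⁰ F) : ℚ) : ℝ) * normR F y) : ℂ)) := by
  have hCF : (CF F : ℂ) ≠ 0 := by exact_mod_cast (CF_pos (F := F)).ne'
  have hxi : xiF F 2 (J : FractionalIdeal (𝓞 F)⁰ F) Rb = (Xi J Rb 2 : ℂ) := by
    rw [← xiF_real]
    norm_num
  have hq : ((FractionalIdeal.absNorm (I : FractionalIdeal (𝓞 F)⁰ F) /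
      FractionalIdeal.absNorm (J : FractionalIdeal (𝓞 F)⁰ F) : ℚ) : ℂ) =
      ((VI I / VI J : ℝ) : ℂ) := by
    rw [VI_div, Complex.ofReal_ratCast]
  have hVIe : Real.sqrt (dF F) * ((FractionalIdeal.absNorm (I : FractionalIdeal (𝓞 F)⁰ F) : ℚ) : ℝ)
      = VI I := rfl
  rw [constant_term I J hy hz hV0 hV hR hRa hRb hctE hctXi, hF, hz, projX_eq, projY_eq,
    Tsum_pairs I J hRa x hy hP, hxi, hq, hVIe, ← VI_div]
  simp only [Complex.ofReal_mul, Complex.ofReal_div, Complex.ofReal_ofNat]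
  field_simp
  ring

end Aux


/-- The Kronecker limit formula for the Eisenstein series:
`CT_{s=1} Ê(Λ, s) = CT_{s=1} ξ_F(s, 𝔞) + (C_F/2)(h_F(z, 𝔞, 𝔟) - log((N𝔞/N𝔟)|N(y)|))`. -/
theorem statement11 (a b : FractionalIdeal (𝓞 F)⁰ F) (ha : a ≠ 0) (hb : b ≠ 0)
    (x y : RS F) (hy : IsUnit y) (z : DS F)
    (hz : z = structureMap F x + structureMap F y * jF F)
    (V : ℝ) (hV0 : 0 ≤ V) (hV : HasVol F (latAB F a b z) V)
    (R : Set (DS F)) (hR : IsRepr F (latAB F a b z) R)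
    (Ra Rb : Set F) (hRa : IsIdealRepr F a Ra) (hRb : IsIdealRepr F b Rb)
    (P : Set (F × F)) (hP : IsPairRepr F a b P)
    (ctE ctXi : ℂ)
    (hctE : Filter.Tendsto (fun s : ℂ => Ehat F V R s - ((CF F / 2 : ℝ) : ℂ) / (s - 1))
      (nhdsWithin 1 {s : ℂ | 1 < s.re}) (nhds ctE))
    (hctXi : Filter.Tendsto (fun s : ℂ => xiF F s a Ra - ((CF F : ℝ) : ℂ) / (s - 1))
      (nhdsWithin 1 {s : ℂ | 1 < s.re}) (nhds ctXi)) :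
    ctE = ctXi + ((CF F / 2 : ℝ) : ℂ) *
      (hF F z a b Rb P -
        (Real.log (((FractionalIdeal.absNorm a / FractionalIdeal.absNorm b : ℚ) : ℝ) *
          normR F y) : ℂ)) := by
  have h := main_aux (Units.mk0 a ha) (Units.mk0 b hb) hy hz hV0 hV hR hRa hRb hP hctE hctXi
  exact h

end Hecke
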